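/- arXiv:2312.04725 — 3 statements merged into one kernel-verified Lean document; each statement's English description precedes it below -/
import Mathlib

section
/- Let d be a complex number with Re(d) > 0, let s ∈ ℂ with s not a positive integer, and let u ∈ ℂ ∖ (-∞, 0] with |u| sufficiently small (depending on d). Then e^{-du} φ(e^{-u}, s, d) = Γ(1-s) u^{s-1} + Σ_{k=0}^∞ ((-u)^k / k!) ζ(s - k, d), where the series converges absolutely. -/
namespace Erd

open MeasureTheory Set Filter Topology

lemma intReal {σ c : ℝ} (hσ : 0 < σ) (hc : 0 < c) :
    IntegrableOn (fun t : ℝ => t ^ (σ - 1) * Real.exp (-c * t)) (Ioi 0) := by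
  have := integrableOn_rpow_mul_exp_neg_mul_rpow (p := 1) (s := σ - 1) (b := c) (by linarith)
    one_pos hc
  simpa using this

/-- continuity of `t^z` on the positive reals -/
lemma contCpow (z : ℂ) : ContinuousOn (fun t : ℝ => (t : ℂ) ^ z) (Ioi 0) := by
  intro t ht
  exact (Complex.continuousAt_ofReal_cpow_const t z (Or.inr (ne_of_gt ht))).continuousWithinAt

/-- domination criterion -/
lemma intDom {w : ℂ} {c C : ℝ} {f : ℝ → ℂ} (hw : 0 < w.re) (hc : 0 < c)
    (hf : ContinuousOn f (Ioi 0)) (hb : ∀ t ∈ Ioi (0 : ℝ), ‖f t‖ ≤ C * Real.exp (-c * t)) :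
    IntegrableOn (fun t : ℝ => (t : ℂ) ^ (w - 1) * f t) (Ioi 0) := by
  refine Integrable.mono' ((intReal hw hc).const_mul C) ?_ ?_
  · exact ((contCpow _).mul hf).aestronglyMeasurable measurableSet_Ioi
  · refine (ae_restrict_iff' measurableSet_Ioi).2 (Eventually.of_forall fun t ht => ?_)
    rw [norm_mul, Complex.norm_cpow_eq_rpow_re_of_pos ht]
    have h1 : 0 ≤ t ^ (w.re - 1) := Real.rpow_nonneg (le_of_lt ht) _
    simp only [Complex.sub_re, Complex.one_re]
    nlinarith [mul_le_mul_of_nonneg_left (hb t ht) h1]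

lemma normexp (r : ℂ) (t : ℝ) : ‖Complex.exp (-r * t)‖ = Real.exp (-r.re * t) := by
  rw [Complex.norm_exp]; simp

lemma contExp (r : ℂ) (A : Set ℝ) : ContinuousOn (fun t : ℝ => Complex.exp (-r * t)) A := by
  fun_prop

lemma intExp {w r : ℂ} (hw : 0 < w.re) (hr : 0 < r.re) :
    IntegrableOn (fun t : ℝ => (t : ℂ) ^ (w - 1) * Complex.exp (-r * t)) (Ioi 0) :=
  intDom (C := 1) hw hr (contExp _ _) (fun t _ => by rw [normexp, one_mul])

lemma gammaDiff {w r : ℂ} (hw : 0 < w.re) (hr : 0 < r.re) :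
    DifferentiableAt ℂ (fun r : ℂ => ∫ t in Ioi (0 : ℝ), (t : ℂ) ^ (w - 1) * Complex.exp (-r * t)) r := by
  have hw1 : 0 < (w + 1).re := by simp; linarith
  have key := hasDerivAt_integral_of_dominated_loc_of_deriv_le (𝕜 := ℂ)
    (μ := volume.restrict (Ioi (0 : ℝ)))
    (F := fun (r : ℂ) (t : ℝ) => (t : ℂ) ^ (w - 1) * Complex.exp (-r * t))
    (F' := fun (r : ℂ) (t : ℝ) => (t : ℂ) ^ (w - 1) * (Complex.exp (-r * t) * (-(t : ℂ))))
    (x₀ := r) (s := Metric.ball r (r.re / 2))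
    (bound := fun t => t ^ ((w + 1).re - 1) * Real.exp (-(r.re / 2) * t))
    (Metric.ball_mem_nhds _ (by linarith)) ?_ (intExp hw hr) ?_ ?_ (intReal hw1 (by linarith)) ?_
  · exact key.2.differentiableAt
  · refine Eventually.of_forall fun r' => ?_
    exact ((contCpow _).mul (contExp _ _)).aestronglyMeasurable measurableSet_Ioi
  · refine ContinuousOn.aestronglyMeasurable (((contCpow _).mul ?_)) measurableSet_Ioi
    fun_prop
  · refine (ae_restrict_iff' measurableSet_Ioi).2 (Eventually.of_forall fun t ht r' hr' => ?_)
    have ht' : (0 : ℝ) < t := ht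
    rw [norm_mul, norm_mul, Complex.norm_cpow_eq_rpow_re_of_pos ht, normexp, norm_neg,
      Complex.norm_of_nonneg ht'.le]
    have h2 : t ^ ((w + 1).re - 1) = t ^ ((w - 1).re) * t := by
      rw [← Real.rpow_add_one ht'.ne']; simp
    rw [h2]
    have h3 : r.re / 2 ≤ r'.re := by
      have := Complex.abs_re_le_norm (r' - r)
      rw [Metric.mem_ball, dist_eq_norm] at hr'
      have := abs_le.1 (this.trans hr'.le)
      simp at this
      linarith
    have h4 : Real.exp (-r'.re * t) ≤ Real.exp (-(r.re / 2) * t) := by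
      apply Real.exp_le_exp.2; nlinarith
    have h5 : 0 ≤ t ^ ((w - 1).re) * t := mul_nonneg (Real.rpow_nonneg ht'.le _) ht'.le
    nlinarith [mul_le_mul_of_nonneg_left h4 h5]
  · refine (ae_restrict_iff' measurableSet_Ioi).2 (Eventually.of_forall fun t ht r' hr' => ?_)
    refine HasDerivAt.const_mul _ ?_
    have : HasDerivAt (fun r : ℂ => -r * (t : ℂ)) (-(t : ℂ)) r' := by
      simpa using ((hasDerivAt_id r').neg.mul_const (t : ℂ))
    exact this.cexp

lemma halfPre (c : ℝ) : IsPreconnected {r : ℂ | c < r.re} :=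
  (convex_halfSpace_re_gt c).isPreconnected

lemma halfOpen (c : ℝ) : IsOpen {r : ℂ | c < r.re} :=
  isOpen_lt continuous_const Complex.continuous_re

/-- frequently real positive -/
lemma freqReal {x : ℝ} {p : ℂ → Prop} (h : ∀ᶠ y : ℝ in 𝓝 x, p y) :
    ∃ᶠ z : ℂ in 𝓝[≠] (x : ℂ), p z := by
  have ht : Tendsto (fun y : ℝ => (y : ℂ)) (𝓝[≠] x) (𝓝[≠] (x : ℂ)) := by
    refine tendsto_nhdsWithin_iff.2 ⟨?_, ?_⟩
    · exact (Complex.continuous_ofReal.tendsto x).mono_left nhdsWithin_le_nhds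
    · filter_upwards [self_mem_nhdsWithin] with y hy
      simpa using hy
  exact ht.frequently (h.filter_mono nhdsWithin_le_nhds).frequently

lemma gammaInt {w r : ℂ} (hw : 0 < w.re) (hr : 0 < r.re) :
    ∫ t in Ioi (0 : ℝ), (t : ℂ) ^ (w - 1) * Complex.exp (-r * t) = r ^ (-w) * Complex.Gamma w := by
  have hA : AnalyticOnNhd ℂ (fun r : ℂ => ∫ t in Ioi (0 : ℝ), (t : ℂ) ^ (w - 1) * Complex.exp (-r * t))
      {r : ℂ | 0 < r.re} :=
    DifferentiableOn.analyticOnNhd (fun r hr => (gammaDiff hw hr).differentiableWithinAt) (halfOpen 0)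
  have hB : AnalyticOnNhd ℂ (fun r : ℂ => r ^ (-w) * Complex.Gamma w) {r : ℂ | 0 < r.re} := by
    refine DifferentiableOn.analyticOnNhd (fun r hr => ?_) (halfOpen 0)
    refine DifferentiableAt.differentiableWithinAt ?_
    refine DifferentiableAt.mul_const ?_ _
    exact differentiableAt_id.cpow_const (Or.inl hr)
  refine hA.eqOn_of_preconnected_of_frequently_eq hB (halfPre 0) (z₀ := ((1 : ℝ) : ℂ)) (by simp) ?_ hr
  refine freqReal ?_
  filter_upwards [lt_mem_nhds (zero_lt_one' ℝ)] with y hy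
  have := Complex.integral_cpow_mul_exp_neg_mul_Ioi hw hy
  simp only [neg_mul]
  rw [this, one_div, Complex.inv_cpow, Complex.cpow_neg]
  rw [Complex.arg_ofReal_of_nonneg hy.le]; exact Real.pi_pos.ne


/-! ### the kernel -/

noncomputable def q (x : ℂ) : ℂ := dslope (fun x : ℂ => 1 - Complex.exp (-x)) 0 x

noncomputable def p (d x : ℂ) : ℂ := Complex.exp (-d * x) / q x - Complex.exp (-x)

noncomputable def ker (d : ℂ) : ℂ → ℂ := dslope (p d) 0

def U : Set ℂ := {x : ℂ | |x.im| < 6}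

lemma U_open : IsOpen U := isOpen_lt (by fun_prop) continuous_const

lemma U_nhds {x : ℂ} (hx : x ∈ U) : U ∈ 𝓝 x := U_open.mem_nhds hx

lemma zero_mem_U : (0 : ℂ) ∈ U := by simp [U]

lemma q_zero : q 0 = 1 := by
  have h : HasDerivAt (fun x : ℂ => 1 - Complex.exp (-x)) 1 0 := by
    have := ((hasDerivAt_id (0 : ℂ)).neg.cexp).const_sub 1
    simpa using this
  rw [q, dslope_same, h.deriv]

lemma q_ne {x : ℂ} (hx : x ≠ 0) : q x = (1 - Complex.exp (-x)) / x := by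
  rw [q, dslope_of_ne _ hx, slope_def_field]; simp

lemma exp_ne {x : ℂ} (hx : x ∈ U) (h0 : x ≠ 0) : 1 - Complex.exp (-x) ≠ 0 := by
  intro h
  have h1 : Complex.exp (-x) = 1 := by linear_combination -h
  obtain ⟨n, hn⟩ := Complex.exp_eq_one_iff.1 h1
  have him : x.im = -(n * (2 * Real.pi)) := by
    have := congrArg Complex.im hn
    simp at this; linarith
  have hn0 : n ≠ 0 := by
    rintro rfl; apply h0; simpa using hn
  have h3 : (1 : ℝ) ≤ |(n : ℝ)| := by exact_mod_cast Int.one_le_abs hn0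
  have h4 : |x.im| < 6 := hx
  rw [him, abs_neg, abs_mul, abs_of_pos (by positivity : (0 : ℝ) < 2 * Real.pi)] at h4
  nlinarith [Real.pi_gt_three]

lemma q_nz {x : ℂ} (hx : x ∈ U) : q x ≠ 0 := by
  by_cases h : x = 0
  · rw [h, q_zero]; exact one_ne_zero
  · rw [q_ne h]; exact div_ne_zero (exp_ne hx h) h

lemma q_diff : DifferentiableOn ℂ q U := by
  refine (Complex.differentiableOn_dslope (U_nhds zero_mem_U)).2 ?_
  fun_prop

lemma p_diff (d : ℂ) : DifferentiableOn ℂ (p d) U := by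
  refine DifferentiableOn.sub (DifferentiableOn.div (by fun_prop) q_diff fun x hx => q_nz hx) ?_
  fun_prop

lemma ker_diff (d : ℂ) : DifferentiableOn ℂ (ker d) U :=
  (Complex.differentiableOn_dslope (U_nhds zero_mem_U)).2 (p_diff d)

lemma ker_ne {d x : ℂ} (hx : x ≠ 0) :
    ker d x = Complex.exp (-d * x) / (1 - Complex.exp (-x)) - Complex.exp (-x) / x := by
  rw [ker, dslope_of_ne _ hx, slope_def_field, p, p, q_zero, q_ne hx]
  simp only [mul_zero, neg_zero, Complex.exp_zero, sub_zero, div_one, sub_self]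
  rw [sub_div]
  congr 1
  rw [div_div_eq_mul_div, div_div, mul_div_mul_right _ _ hx]

lemma ker_bound {d : ℂ} (hd : 0 < d.re) :
    ∃ C c : ℝ, 0 < c ∧ 0 ≤ C ∧ ∀ x : ℂ, |x.im| ≤ 1 → -1 ≤ x.re → ‖ker d x‖ ≤ C * Real.exp (-c * x.re) := by
  set c := min d.re 1 with hc
  have hc0 : 0 < c := lt_min hd one_pos
  have hcd : c ≤ d.re := min_le_left _ _
  have hc1 : c ≤ 1 := min_le_right _ _
  have hcomp : IsCompact (Icc (-1 : ℝ) 1 ×ℂ Icc (-1 : ℝ) 1) := isCompact_Icc.reProdIm isCompact_Icc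
  have hsub : (Icc (-1 : ℝ) 1 ×ℂ Icc (-1 : ℝ) 1) ⊆ U := by
    intro x hx
    have := (Complex.mem_reProdIm.1 hx).2
    have : |x.im| ≤ 1 := abs_le.2 this
    show |x.im| < 6
    linarith
  obtain ⟨B, hB⟩ := hcomp.exists_bound_of_continuousOn ((ker_diff d).continuousOn.mono hsub)
  have hB0 : 0 ≤ B := le_trans (norm_nonneg _) (hB 0 (by simp [Complex.mem_reProdIm]))
  refine ⟨B * Real.exp c + (2 * Real.exp |d.im| + 1), c, hc0, by positivity, fun x him hre => ?_⟩
  rw [add_mul]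
  have hp1 : 0 ≤ B * Real.exp c * Real.exp (-c * x.re) := by positivity
  have hp2 : 0 ≤ (2 * Real.exp |d.im| + 1) * Real.exp (-c * x.re) := by positivity
  rcases le_total x.re 1 with h1 | h1
  · have h2 := hB x (Complex.mem_reProdIm.2 ⟨⟨hre, h1⟩, abs_le.1 him⟩)
    have h3 : 1 ≤ Real.exp c * Real.exp (-c * x.re) := by
      rw [← Real.exp_add]; apply Real.one_le_exp; nlinarith
    nlinarith
  · have hx0 : x ≠ 0 := by rintro rfl; simp at h1; linarith
    rw [ker_ne hx0]
    have e1 : ‖Complex.exp (-d * x)‖ ≤ Real.exp |d.im| * Real.exp (-c * x.re) := by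
      rw [Complex.norm_exp, ← Real.exp_add]
      apply Real.exp_le_exp.2
      simp only [Complex.mul_re, Complex.neg_re, Complex.neg_im]
      have : d.im * x.im ≤ |d.im| := by
        calc d.im * x.im ≤ |d.im * x.im| := le_abs_self _
          _ = |d.im| * |x.im| := abs_mul _ _
          _ ≤ |d.im| * 1 := by gcongr
          _ = _ := mul_one _
      nlinarith
    have e2 : ‖Complex.exp (-x)‖ ≤ Real.exp (-c * x.re) := by
      rw [Complex.norm_exp]; apply Real.exp_le_exp.2; simp; nlinarith
    have e3 : ‖Complex.exp (-x)‖ ≤ 1 / 2 := by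
      rw [Complex.norm_exp]
      have : Real.exp (-x).re ≤ Real.exp (-1) := Real.exp_le_exp.2 (by simp; linarith)
      have h9 : Real.exp (-1) ≤ 1 / 2 := by
        have := Real.exp_one_gt_d9
        rw [Real.exp_neg, inv_le_comm₀ (Real.exp_pos _) (by norm_num)]; norm_num; linarith
      linarith
    have e4 : 1 / 2 ≤ ‖1 - Complex.exp (-x)‖ := by
      have := norm_sub_norm_le (1 : ℂ) (Complex.exp (-x))
      simp only [norm_one] at this; linarith
    have e5 : 1 ≤ ‖x‖ := by
      have := Complex.abs_re_le_norm x
      have := le_abs_self x.re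
      linarith
    have e6 : ‖Complex.exp (-d * x) / (1 - Complex.exp (-x))‖ ≤ 2 * (Real.exp |d.im| * Real.exp (-c * x.re)) := by
      rw [norm_div, div_le_iff₀ (by linarith)]
      have : 0 ≤ Real.exp |d.im| * Real.exp (-c * x.re) := by positivity
      nlinarith
    have e7 : ‖Complex.exp (-x) / x‖ ≤ Real.exp (-c * x.re) := by
      rw [norm_div, div_le_iff₀ (by linarith)]
      have := Real.exp_pos (-c * x.re)
      nlinarith
    have := norm_sub_le (Complex.exp (-d * x) / (1 - Complex.exp (-x))) (Complex.exp (-x) / x)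
    nlinarith

noncomputable def K (d : ℂ) (j : ℕ) (t : ℝ) : ℂ := iteratedDeriv j (ker d) (t : ℂ)

lemma real_mem_U (t : ℝ) : (t : ℂ) ∈ U := by simp [U]

lemma K_deriv (d : ℂ) (j : ℕ) (t : ℝ) : HasDerivAt (K d j) (K d (j + 1) t) t := by
  have h1 : AnalyticOnNhd ℂ (ker d) U := (ker_diff d).analyticOnNhd U_open
  have h2 : AnalyticAt ℂ (iteratedDeriv j (ker d)) (t : ℂ) := by
    rw [iteratedDeriv_eq_iterate]
    exact h1.iterated_deriv j _ (real_mem_U t)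
  have h3 := h2.differentiableAt.hasDerivAt
  rw [← iteratedDeriv_succ] at h3
  exact h3.comp_ofReal

lemma K_cont (d : ℂ) (j : ℕ) : Continuous (K d j) :=
  continuous_iff_continuousAt.2 fun t => (K_deriv d j t).continuousAt

lemma ball_sub_U (t : ℝ) : Metric.closedBall (t : ℂ) 1 ⊆ U := by
  intro z hz
  have h := Complex.abs_im_le_norm (z - t)
  rw [Metric.mem_closedBall, dist_eq_norm] at hz
  simp at h
  show |z.im| < 6
  linarith

lemma K_bound {d : ℂ} (hd : 0 < d.re) :
    ∃ C c : ℝ, 0 < c ∧ 0 ≤ C ∧ ∀ j : ℕ, ∀ t : ℝ, 0 ≤ t → ‖K d j t‖ ≤ j.factorial * C * Real.exp (-c * t) := by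
  obtain ⟨C, c, hc, hC, hb⟩ := ker_bound hd
  refine ⟨C * Real.exp c, c, hc, by positivity, fun j t ht => ?_⟩
  have hdc : DiffContOnCl ℂ (ker d) (Metric.ball (t : ℂ) 1) := by
    apply DifferentiableOn.diffContOnCl
    rw [closure_ball _ one_ne_zero]
    exact (ker_diff d).mono (ball_sub_U t)
  have := Complex.norm_iteratedDeriv_le_of_forall_mem_sphere_norm_le (C := C * Real.exp c * Real.exp (-c * t)) j one_pos hdc ?_
  · rw [K]; refine this.trans (le_of_eq ?_); ring
  · intro z hz
    rw [mem_sphere_iff_norm] at hz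
    have h1 := Complex.abs_im_le_norm (z - t)
    have h2 := abs_le.1 (Complex.abs_re_le_norm (z - t))
    rw [hz] at h1 h2
    simp at h1 h2
    refine (hb z h1 (by linarith)).trans ?_
    rw [mul_assoc, ← Real.exp_add]
    gcongr
    nlinarith

lemma K_taylor (d : ℂ) (t : ℝ) {u : ℂ} (hu : ‖u‖ < 1) :
    HasSum (fun j : ℕ => u ^ j / (j.factorial : ℂ) * K d j t) (ker d (t + u)) := by
  have h : DifferentiableOn ℂ (ker d) (Metric.ball (t : ℂ) 1) :=
    (ker_diff d).mono (Metric.ball_subset_closedBall.trans (ball_sub_U t))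
  have := Complex.hasSum_taylorSeries_on_ball h (z := t + u) (by simpa using hu)
  convert! this using 1
  funext j
  simp only [K, smul_eq_mul, add_sub_cancel_left]; ring


/-! ### Mellin transforms -/

noncomputable def M (d : ℂ) (j : ℕ) (w : ℂ) : ℂ := ∫ t in Ioi (0 : ℝ), (t : ℂ) ^ (w - 1) * K d j t

lemma M_int {d w : ℂ} (hd : 0 < d.re) (j : ℕ) (hw : 0 < w.re) :
    IntegrableOn (fun t : ℝ => (t : ℂ) ^ (w - 1) * K d j t) (Ioi 0) := by
  obtain ⟨C, c, hc, hC, hb⟩ := K_bound hd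
  exact intDom hw hc (K_cont d j).continuousOn fun t ht => hb j t (le_of_lt ht)

lemma M_diff {d w : ℂ} (hd : 0 < d.re) (j : ℕ) (hw : 0 < w.re) : DifferentiableAt ℂ (M d j) w := by
  obtain ⟨C, c, hc, hC, hb⟩ := K_bound hd
  have h := mellin_differentiableAt_of_isBigO_rpow_exp (a := c) (b := 0) (f := K d j) (s := w) hc
    ((K_cont d j).locallyIntegrable.locallyIntegrableOn _) ?_ ?_ hw
  · exact h
  · refine Asymptotics.IsBigO.of_bound (j.factorial * C) ?_
    filter_upwards [eventually_ge_atTop 0] with t ht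
    rw [Real.norm_of_nonneg (Real.exp_pos _).le]
    exact hb j t ht
  · simp only [neg_zero, Real.rpow_zero]
    exact ((K_cont d j).continuousAt.mono_left nhdsWithin_le_nhds).isBigO_one ℝ

lemma cpowDeriv (w : ℂ) {t : ℝ} (ht : 0 < t) :
    HasDerivAt (fun y : ℝ => (y : ℂ) ^ w) (w * (t : ℂ) ^ (w - 1)) t := by
  have := ((hasDerivAt_id (t : ℂ)).cpow_const (c := w) (Or.inl (by simpa using ht))).comp_ofReal
  simpa using this

lemma M_parts {d w : ℂ} (hd : 0 < d.re) (j : ℕ) (hw : 0 < w.re) :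
    M d (j + 1) (w + 1) = -w * M d j w := by
  obtain ⟨C, c, hc, hC, hb⟩ := K_bound hd
  have hw0 : w ≠ 0 := by rintro rfl; simp at hw
  have h := integral_Ioi_mul_deriv_eq_deriv_mul (A := ℂ) (a := 0) (a' := 0) (b' := 0)
    (u := fun t : ℝ => (t : ℂ) ^ w) (v := K d j) (u' := fun t : ℝ => w * (t : ℂ) ^ (w - 1))
    (v' := K d (j + 1)) ?_ (fun t _ => K_deriv d j t) ?_ ?_ ?_ ?_
  · rw [M, M]
    simp only [add_sub_cancel_right]
    rw [h, ← integral_const_mul, sub_zero, zero_sub, ← integral_neg]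
    congr 1; funext t; ring
  · intro t ht
    exact cpowDeriv w ht
  · have := M_int (w := w + 1) hd (j + 1) (by simp; linarith)
    rw [add_sub_cancel_right] at this
    exact this
  · have := (M_int (w := w) hd j hw).const_mul w
    refine this.congr (Eventually.of_forall fun t => ?_)
    simp [mul_assoc]
  · have h1 : Tendsto (fun t : ℝ => (t : ℂ) ^ w) (𝓝[>] 0) (𝓝 0) := by
      have := (Complex.continuousAt_ofReal_cpow_const 0 w (Or.inl hw)).tendsto
      simp only [Complex.ofReal_zero, Complex.zero_cpow hw0] at this
      exact this.mono_left nhdsWithin_le_nhds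
    have h2 : Tendsto (K d j) (𝓝[>] 0) (𝓝 (K d j 0)) :=
      (K_cont d j).continuousAt.mono_left nhdsWithin_le_nhds
    have h3 := h1.mul h2
    rw [zero_mul] at h3
    exact h3
  · have h1 : Tendsto (fun t : ℝ => t ^ w.re * Real.exp (-c * t)) atTop (𝓝 0) :=
      tendsto_rpow_mul_exp_neg_mul_atTop_nhds_zero _ _ hc
    have h2 := h1.const_mul (j.factorial * C)
    rw [mul_zero] at h2
    refine squeeze_zero_norm' ?_ h2
    filter_upwards [eventually_gt_atTop 0] with t ht
    simp only [Pi.mul_apply]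
    rw [norm_mul, Complex.norm_cpow_eq_rpow_re_of_pos ht]
    have h3 : 0 ≤ t ^ w.re := Real.rpow_nonneg ht.le _
    nlinarith [mul_le_mul_of_nonneg_left (hb j t ht.le) h3]

lemma M_one {d : ℂ} (hd : 0 < d.re) (j : ℕ) : M d (j + 1) 1 = -K d j 0 := by
  obtain ⟨C, c, hc, hC, hb⟩ := K_bound hd
  have hi := M_int (w := 1) hd (j + 1) (by simp)
  simp only [sub_self, Complex.cpow_zero, one_mul] at hi
  have h := integral_Ioi_of_hasDerivAt_of_tendsto' (a := 0) (m := 0) (fun t _ => K_deriv d j t) hi ?_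
  · rw [M]; simpa using h
  · have h1 : Tendsto (fun t : ℝ => t ^ (0 : ℝ) * Real.exp (-c * t)) atTop (𝓝 0) :=
      tendsto_rpow_mul_exp_neg_mul_atTop_nhds_zero _ _ hc
    have h2 := h1.const_mul (j.factorial * C)
    rw [mul_zero] at h2
    refine squeeze_zero_norm' ?_ h2
    filter_upwards [eventually_gt_atTop 0] with t ht
    simpa using hb j t ht.le

lemma H_hasSum {d w u : ℂ} (hd : 0 < d.re) (hw : 0 < w.re) (hu : ‖u‖ < 1) :
    HasSum (fun j : ℕ => u ^ j / (j.factorial : ℂ) * M d j w)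
      (∫ t in Ioi (0 : ℝ), (t : ℂ) ^ (w - 1) * ker d (t + u)) := by
  obtain ⟨C, c, hc, hC, hb⟩ := K_bound hd
  have hIgr : ∀ j : ℕ, IntegrableOn
      (fun t : ℝ => u ^ j / (j.factorial : ℂ) * ((t : ℂ) ^ (w - 1) * K d j t)) (Ioi 0) :=
    fun j => (M_int hd j hw).const_mul _
  have h := hasSum_integral_of_summable_integral_norm hIgr ?_
  · convert! h using 1
    · funext j; rw [M, integral_const_mul]
    · congr 1; funext t
      rw [← (K_taylor d t hu).tsum_eq, ← tsum_mul_left]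
      congr 1; funext j; ring
  · refine Summable.of_nonneg_of_le (fun j => integral_nonneg fun t => norm_nonneg _) (fun j => ?_)
      ((summable_geometric_of_lt_one (norm_nonneg u) hu).mul_right
        (∫ t in Ioi (0 : ℝ), C * (t ^ (w.re - 1) * Real.exp (-c * t))))
    rw [← integral_const_mul]
    refine setIntegral_mono_on (hIgr j).norm (((intReal hw hc).const_mul C).const_mul _)
      measurableSet_Ioi fun t ht => ?_
    have ht' : (0 : ℝ) < t := ht
    rw [norm_mul, norm_mul, norm_div, norm_pow, Complex.norm_cpow_eq_rpow_re_of_pos ht']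
    simp only [Complex.norm_natCast, Complex.sub_re, Complex.one_re]
    have hf : (0 : ℝ) < j.factorial := by exact_mod_cast j.factorial_pos
    have h3 : 0 ≤ t ^ (w.re - 1) := Real.rpow_nonneg ht'.le _
    calc ‖u‖ ^ j / (j.factorial : ℝ) * (t ^ (w.re - 1) * ‖K d j t‖)
        ≤ ‖u‖ ^ j / (j.factorial : ℝ) * (t ^ (w.re - 1) * (j.factorial * C * Real.exp (-c * t))) := by
          gcongr
          exact hb j t ht'.le
      _ = _ := by field_simp


/-! ### comparison with the Dirichlet type series -/

noncomputable def S (d s x : ℂ) : ℂ :=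
  ∑' n : ℕ, Complex.exp (-((n : ℂ) + d) * x) * ((n : ℂ) + d) ^ (-s)

noncomputable def E (s : ℂ) (x : ℝ) : ℂ :=
  ∫ y in Ioi (1 : ℝ), Complex.exp (-(y * x : ℂ)) * (y : ℂ) ^ (-s)

lemma geom {d z : ℂ} (hz : 0 < z.re) :
    HasSum (fun n : ℕ => Complex.exp (-((n : ℂ) + d) * z)) (Complex.exp (-d * z) / (1 - Complex.exp (-z))) := by
  have h : ‖Complex.exp (-z)‖ < 1 := by
    rw [Complex.norm_exp]; rw [← Real.exp_zero]; apply Real.exp_lt_exp.2; simpa using hz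
  have := (hasSum_geometric_of_norm_lt_one h).mul_left (Complex.exp (-d * z))
  rw [← div_eq_mul_inv] at this
  convert! this using 1
  funext n
  rw [← Complex.exp_nat_mul, ← Complex.exp_add]
  congr 1; ring

lemma normInt {w r : ℂ} (hw : 0 < w.re) (hr : 0 < r.re) :
    ∫ t in Ioi (0 : ℝ), ‖(t : ℂ) ^ (w - 1) * Complex.exp (-r * t)‖ = r.re ^ (-w.re) * Real.Gamma w.re := by
  have h := Real.integral_rpow_mul_exp_neg_mul_Ioi hw hr
  rw [one_div, Real.inv_rpow hr.le, ← Real.rpow_neg hr.le] at h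
  rw [← h]
  refine setIntegral_congr_fun measurableSet_Ioi fun t ht => ?_
  rw [norm_mul, Complex.norm_cpow_eq_rpow_re_of_pos ht, normexp]
  simp

lemma sumPart {d w : ℂ} (hd : 0 < d.re) (hw : 0 < w.re) {x : ℝ} (hx : 0 ≤ x)
    (hS : Summable fun n : ℕ => Real.exp (-(n + d.re) * x) * (n + d.re) ^ (-w.re)) :
    ∫ t in Ioi (0 : ℝ), (t : ℂ) ^ (w - 1) * (Complex.exp (-d * (t + x)) / (1 - Complex.exp (-(t + x : ℂ))))
      = Complex.Gamma w * S d w x := by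
  have hre : ∀ n : ℕ, 0 < ((n : ℂ) + d).re := fun n => by simp; positivity
  have hIgr : ∀ n : ℕ, IntegrableOn (fun t : ℝ => Complex.exp (-((n : ℂ) + d) * x) *
      ((t : ℂ) ^ (w - 1) * Complex.exp (-((n : ℂ) + d) * t))) (Ioi 0) :=
    fun n => (intExp hw (hre n)).const_mul _
  have h := hasSum_integral_of_summable_integral_norm hIgr ?_
  · have h2 := h.tsum_eq
    rw [S, ← tsum_mul_left]
    have h3 : ∀ n : ℕ, ∫ t in Ioi (0 : ℝ), Complex.exp (-((n : ℂ) + d) * x) *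
      ((t : ℂ) ^ (w - 1) * Complex.exp (-((n : ℂ) + d) * t)) =
        Complex.Gamma w * (Complex.exp (-((n : ℂ) + d) * x) * ((n : ℂ) + d) ^ (-w)) := by
      intro n
      rw [integral_const_mul, gammaInt hw (hre n)]; ring
    simp only [h3] at h2
    rw [h2]
    refine setIntegral_congr_fun measurableSet_Ioi fun t ht => ?_
    have ht' : (0 : ℝ) < t := ht
    rw [← (geom (d := d) (z := (t + x : ℂ)) (by simp; linarith)).tsum_eq, ← tsum_mul_left]
    congr 1; funext n
    have : Complex.exp (-((n : ℂ) + d) * (t + x)) =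
      Complex.exp (-((n : ℂ) + d) * x) * Complex.exp (-((n : ℂ) + d) * t) := by
      rw [← Complex.exp_add]; congr 1; ring
    rw [this]; ring
  · refine (hS.mul_right (Real.Gamma w.re)).congr fun n => ?_
    simp only [norm_mul (Complex.exp (-((n : ℂ) + d) * x))]
    rw [integral_const_mul, normInt hw (hre n), normexp]
    simp; ring

lemma expPart {w : ℂ} (hw : 0 < w.re) {x : ℝ} (hx : 0 ≤ x)
    (hE : IntegrableOn (fun y : ℝ => Real.exp (-(y * x)) * y ^ (-w.re)) (Ioi 1)) :
    IntegrableOn (fun t : ℝ => (t : ℂ) ^ (w - 1) * (Complex.exp (-(t + x : ℂ)) / (t + x : ℂ))) (Ioi 0) ∧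
    ∫ t in Ioi (0 : ℝ), (t : ℂ) ^ (w - 1) * (Complex.exp (-(t + x : ℂ)) / (t + x : ℂ))
      = Complex.Gamma w * E w x := by
  set f : ℝ → ℝ → ℂ := fun t y => Complex.exp (-(y * x : ℂ)) * ((t : ℂ) ^ (w - 1) * Complex.exp (-(y : ℂ) * t))
    with hf
  have hre : ∀ y ∈ Ioi (1 : ℝ), 0 < (y : ℂ).re := fun y hy => by
    have : (1 : ℝ) < y := hy
    simp; linarith
  have hmeas : Measurable (Function.uncurry f) := by
    rw [hf]; unfold Function.uncurry; simp only
    fun_prop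
  have hI : Integrable (Function.uncurry f) ((volume.restrict (Ioi (0 : ℝ))).prod (volume.restrict (Ioi (1 : ℝ)))) := by
    rw [integrable_prod_iff' hmeas.aestronglyMeasurable]
    constructor
    · refine (ae_restrict_iff' measurableSet_Ioi).2 (Eventually.of_forall fun y hy => ?_)
      exact (intExp hw (hre y hy)).const_mul (Complex.exp (-(y * x : ℂ)))
    · refine (hE.mul_const (Real.Gamma w.re)).congr ?_
      refine (ae_restrict_iff' measurableSet_Ioi).2 (Eventually.of_forall fun y hy => ?_)
      simp only [hf, Function.uncurry, norm_mul (Complex.exp (-(y * x : ℂ)))]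
      rw [integral_const_mul, normInt hw (hre y hy), Complex.norm_exp]
      simp [mul_assoc]
  have hinner : ∀ t ∈ Ioi (0 : ℝ), ∫ y in Ioi (1 : ℝ), f t y
      = (t : ℂ) ^ (w - 1) * (Complex.exp (-(t + x : ℂ)) / (t + x : ℂ)) := by
    intro t ht
    have ht' : (0 : ℝ) < t := ht
    have h1 := integral_exp_mul_complex_Ioi (a := -(t + x : ℂ)) (by simp; linarith) 1
    have h2 : ∀ y : ℝ, f t y = (t : ℂ) ^ (w - 1) * Complex.exp (-(t + x : ℂ) * y) := by
      intro y
      have : Complex.exp (-(t + x : ℂ) * y) = Complex.exp (-(y * x : ℂ)) * Complex.exp (-(y : ℂ) * t) := by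
        rw [← Complex.exp_add]; congr 1; ring
      rw [this, hf]; ring
    simp only [h2]
    rw [integral_const_mul, h1]
    rw [neg_div_neg_eq]; simp only [Complex.ofReal_one, mul_one]
  constructor
  · refine hI.integral_prod_left.congr ?_
    refine (ae_restrict_iff' measurableSet_Ioi).2 (Eventually.of_forall fun t ht => ?_)
    exact hinner t ht
  · rw [← setIntegral_congr_fun measurableSet_Ioi hinner, integral_integral_swap hI, E,
      ← integral_const_mul]
    refine setIntegral_congr_fun measurableSet_Ioi fun y hy => ?_
    simp only [hf]
    rw [integral_const_mul, gammaInt hw (hre y hy)]; ring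

lemma H_eq {d w : ℂ} (hd : 0 < d.re) (hw : 0 < w.re) {x : ℝ} (hx : 0 ≤ x)
    (hS : Summable fun n : ℕ => Real.exp (-(n + d.re) * x) * (n + d.re) ^ (-w.re))
    (hE : IntegrableOn (fun y : ℝ => Real.exp (-(y * x)) * y ^ (-w.re)) (Ioi 1)) :
    ∫ t in Ioi (0 : ℝ), (t : ℂ) ^ (w - 1) * ker d (t + x) = Complex.Gamma w * (S d w x - E w x) := by
  obtain ⟨C, c, hc, hC, hb⟩ := ker_bound hd
  have hk : IntegrableOn (fun t : ℝ => (t : ℂ) ^ (w - 1) * ker d (t + x)) (Ioi 0) := by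
    refine intDom (C := C) hw hc ?_ ?_
    · refine (ker_diff d).continuousOn.comp (by fun_prop) ?_
      intro t _
      simp [U]
    · intro t ht
      have ht' : (0 : ℝ) < t := ht
      refine (hb _ (by simp) (by simp; linarith)).trans ?_
      refine mul_le_mul_of_nonneg_left (Real.exp_le_exp.2 ?_) hC
      simp only [Complex.add_re, Complex.ofReal_re]; nlinarith
  obtain ⟨h1, h2⟩ := expPart hw hx hE
  have h3 := sumPart hd hw hx hS
  have h4 := integral_add hk h1
  rw [h2] at h4
  rw [mul_sub, ← h3, eq_sub_iff_add_eq, ← h4]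
  refine setIntegral_congr_fun measurableSet_Ioi fun t ht => ?_
  have ht' : (0 : ℝ) < t := ht
  rw [ker_ne (by
    intro h
    have := congrArg Complex.re h
    simp at this; linarith)]
  ring


/-! ### summability and integrability -/

lemma sumGen {d : ℂ} (hd : 0 < d.re) (s : ℂ) {x : ℝ} (hx : 0 < x) :
    Summable fun n : ℕ => Real.exp (-(n + d.re) * x) * ‖((n : ℂ) + d) ^ (-s)‖ := by
  have hg : Summable fun n : ℕ => Real.exp (-(x / 2) * n) := by
    have h : ‖Real.exp (-(x / 2))‖ < 1 := by
      rw [Real.norm_of_nonneg (Real.exp_pos _).le, ← Real.exp_zero]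
      exact Real.exp_lt_exp.2 (by linarith)
    refine (summable_geometric_of_norm_lt_one h).congr fun n => ?_
    rw [← Real.exp_nat_mul]; congr 1; ring
  have htend : Tendsto (fun n : ℕ => ‖(n : ℂ) + d‖) atTop atTop := by
    refine tendsto_atTop_mono (fun n => ?_) (tendsto_natCast_atTop_atTop (R := ℝ))
    have := Complex.re_le_norm ((n : ℂ) + d)
    simp at this; linarith
  have hO := ((isLittleO_rpow_exp_pos_mul_atTop (-s.re) (half_pos hx)).comp_tendsto htend).isBigO
  obtain ⟨A, hA⟩ := hO.bound
  refine summable_of_isBigO_nat hg (Asymptotics.IsBigO.of_bound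
    (A * Real.exp (x / 2 * ‖d‖) * Real.exp (Real.pi * |s.im|)) ?_)
  filter_upwards [hA] with n hn
  simp only [Function.comp] at hn
  have hne : (n : ℂ) + d ≠ 0 := by
    intro h
    have := congrArg Complex.re h
    simp at this
    have : (0 : ℝ) ≤ n := by positivity
    linarith
  rw [Real.norm_of_nonneg (by positivity), Real.norm_of_nonneg (by positivity)] at hn
  rw [Real.norm_of_nonneg (by positivity), Real.norm_of_nonneg (by positivity),
    Complex.norm_cpow_of_ne_zero hne, div_eq_mul_inv, ← Real.exp_neg]
  have hA0 : 0 ≤ A := by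
    have h1 : 0 ≤ ‖(n : ℂ) + d‖ ^ (-s.re) := by positivity
    by_contra hneg
    have h2 := Real.exp_pos (x / 2 * ‖(n : ℂ) + d‖)
    have h4 : 0 < ‖(n : ℂ) + d‖ ^ (-s.re) := Real.rpow_pos_of_pos (norm_pos_iff.2 hne) _
    nlinarith
  have h1 : ‖(n : ℂ) + d‖ ≤ n + ‖d‖ := by
    refine (norm_add_le _ _).trans ?_
    simp
  have h2 : ‖(n : ℂ) + d‖ ^ (-s).re ≤ A * Real.exp (x / 2 * (n + ‖d‖)) := by
    refine hn.trans ?_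
    gcongr
  have h3 : Real.exp (-(((n : ℂ) + d).arg * (-s).im)) ≤ Real.exp (Real.pi * |s.im|) := by
    apply Real.exp_le_exp.2
    have h5 := Complex.abs_arg_le_pi ((n : ℂ) + d)
    calc -(((n : ℂ) + d).arg * (-s).im) = ((n : ℂ) + d).arg * s.im := by simp
      _ ≤ |((n : ℂ) + d).arg * s.im| := le_abs_self _
      _ = |((n : ℂ) + d).arg| * |s.im| := abs_mul _ _
      _ ≤ _ := by gcongr
  have h4 : Real.exp (-(n + d.re) * x) ≤ Real.exp (-n * x) := by
    apply Real.exp_le_exp.2; nlinarith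
  calc Real.exp (-(n + d.re) * x) * (‖(n : ℂ) + d‖ ^ (-s).re * Real.exp (-(((n : ℂ) + d).arg * (-s).im)))
      ≤ Real.exp (-n * x) * ((A * Real.exp (x / 2 * (n + ‖d‖))) * Real.exp (Real.pi * |s.im|)) := by
        gcongr
    _ = A * Real.exp (x / 2 * ‖d‖) * Real.exp (Real.pi * |s.im|) * (Real.exp (-n * x) * Real.exp (x / 2 * n)) := by
        rw [mul_add, Real.exp_add]; ring
    _ = _ := by
        rw [← Real.exp_add]; congr 2; ring

lemma sumReal {ρ : ℝ} (hρ : 0 < ρ) (σ : ℝ) {x : ℝ} (hx : 0 < x) :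
    Summable fun n : ℕ => Real.exp (-(n + ρ) * x) * (n + ρ) ^ (-σ) := by
  have := sumGen (d := ρ) (by simpa using hρ) (σ : ℂ) hx
  refine this.congr fun n => ?_
  have hp : (0 : ℝ) < n + ρ := by positivity
  have h := Complex.norm_cpow_eq_rpow_re_of_pos hp (-(σ : ℂ))
  push_cast at h
  rw [h]; simp

lemma sumReal0 {ρ : ℝ} (hρ : 0 < ρ) {σ : ℝ} (hσ : 1 < σ) :
    Summable fun n : ℕ => Real.exp (-(n + ρ) * 0) * (n + ρ) ^ (-σ) := by
  refine ((Real.summable_one_div_nat_add_rpow ρ σ).2 hσ).congr fun n => ?_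
  have hp : (0 : ℝ) < n + ρ := by positivity
  rw [abs_of_pos hp, Real.rpow_neg hp.le]; simp

lemma intE (σ : ℝ) {x : ℝ} (hx : 0 < x) :
    IntegrableOn (fun y : ℝ => Real.exp (-(y * x)) * y ^ (-σ)) (Ioi 1) := by
  refine integrable_of_isBigO_exp_neg (half_pos hx) ?_ ?_
  · refine ContinuousOn.mul (by fun_prop) ?_
    intro y hy
    have : (1 : ℝ) ≤ y := hy
    exact (Real.continuousAt_rpow_const y _ (Or.inl (by linarith))).continuousWithinAt
  · have h := (isLittleO_rpow_exp_pos_mul_atTop (-σ) (half_pos hx)).isBigO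
    have h2 := (Asymptotics.isBigO_refl (fun y : ℝ => Real.exp (-(y * x))) atTop).mul h
    refine h2.congr_right fun y => ?_
    rw [← Real.exp_add]; congr 1; ring

lemma intE0 {σ : ℝ} (hσ : 1 < σ) :
    IntegrableOn (fun y : ℝ => Real.exp (-(y * 0)) * y ^ (-σ)) (Ioi 1) := by
  simpa using integrableOn_Ioi_rpow_of_lt (a := -σ) (by linarith) one_pos

lemma intEC (s : ℂ) {x : ℝ} (hx : 0 < x) :
    IntegrableOn (fun y : ℝ => Complex.exp (-(y * x : ℂ)) * (y : ℂ) ^ (-s)) (Ioi 1) := by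
  refine Integrable.mono' (intE s.re hx) ?_ ?_
  · exact Measurable.aestronglyMeasurable (by fun_prop)
  · refine (ae_restrict_iff' measurableSet_Ioi).2 (Eventually.of_forall fun y hy => ?_)
    have hy' : (1 : ℝ) < y := hy
    rw [norm_mul, Complex.norm_cpow_eq_rpow_re_of_pos (by linarith), Complex.norm_exp]
    simp

lemma E_step (s : ℂ) {x : ℝ} (hx : 0 < x) :
    s * E (s + 1) x = Complex.exp (-x) - x * E s x := by
  have h := integral_Ioi_of_hasDerivAt_of_tendsto' (a := 1) (m := 0)
    (f := fun y : ℝ => Complex.exp (-(y * x : ℂ)) * (y : ℂ) ^ (-s))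
    (f' := fun y : ℝ => (-(x : ℂ)) * (Complex.exp (-(y * x : ℂ)) * (y : ℂ) ^ (-s)) +
      (-s) * (Complex.exp (-(y * x : ℂ)) * (y : ℂ) ^ (-(s + 1)))) ?_
      (((intEC s hx).const_mul _).add ((intEC (s + 1) hx).const_mul _)) ?_
  · rw [integral_add ((intEC s hx).const_mul _) ((intEC (s + 1) hx).const_mul _),
      integral_const_mul, integral_const_mul] at h
    rw [← E, ← E] at h
    simp only [Complex.ofReal_one, one_mul, Complex.one_cpow, mul_one] at h
    linear_combination -h
  · intro y hy
    have hy' : (1 : ℝ) ≤ y := hy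
    have h1 := cpowDeriv (-s) (t := y) (by linarith)
    have h2 : HasDerivAt (fun y : ℝ => Complex.exp (-(y * x : ℂ))) (Complex.exp (-(y * x : ℂ)) * (-(x : ℂ))) y := by
      have h3 : HasDerivAt (fun y : ℂ => -(y * x : ℂ)) (-(x : ℂ)) (y : ℂ) := by
        have := (hasDerivAt_id (y : ℂ)).mul_const (-(x : ℂ))
        simpa [mul_neg] using this
      exact h3.cexp.comp_ofReal
    have h4 := h2.mul h1
    refine h4.congr_deriv ?_
    rw [show -(s + 1) = -s - 1 by ring]; ring
  · have h1 : Tendsto (fun t : ℝ => t ^ (-s.re) * Real.exp (-x * t)) atTop (𝓝 0) :=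
      tendsto_rpow_mul_exp_neg_mul_atTop_nhds_zero _ _ hx
    refine squeeze_zero_norm' ?_ h1
    filter_upwards [eventually_gt_atTop 0] with y hy
    rw [norm_mul, Complex.norm_cpow_eq_rpow_re_of_pos hy, Complex.norm_exp]
    simp [mul_comm]

lemma E_base {s : ℂ} (hs : s.re < 1) {x : ℝ} (hx : 0 < x) :
    HasSum (fun k : ℕ => (-(x : ℂ)) ^ k / (k.factorial : ℂ) / (k + 1 - s))
      (Complex.Gamma (1 - s) * (x : ℂ) ^ (s - 1) - E s x) := by
  have hw : 0 < (1 - s).re := by simp; linarith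
  have hfull := gammaInt (r := x) hw (by simpa using hx)
  have hi := intExp (r := x) hw (by simpa using hx)
  have hre : ∀ k : ℕ, -1 < ((k : ℂ) - s).re := fun k => by
    simp
    have : (0 : ℝ) ≤ k := by positivity
    linarith
  have hsplit : ∫ y in Ioc (0 : ℝ) 1, (y : ℂ) ^ (1 - s - 1) * Complex.exp (-(x : ℂ) * y) =
      Complex.Gamma (1 - s) * (x : ℂ) ^ (s - 1) - E s x := by
    rw [← Ioc_union_Ioi_eq_Ioi (zero_le_one' ℝ)] at hi hfull
    rw [setIntegral_union (Ioc_disjoint_Ioi le_rfl) measurableSet_Ioi (hi.mono_set subset_union_left)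
      (hi.mono_set subset_union_right)] at hfull
    have hE : ∫ y in Ioi (1 : ℝ), (y : ℂ) ^ (1 - s - 1) * Complex.exp (-(x : ℂ) * y) = E s x := by
      rw [E]; congr 1; funext y
      rw [mul_comm]; congr 2 <;> ring
    rw [hE, neg_sub] at hfull
    linear_combination hfull
  have hII : ∀ k : ℕ, IntegrableOn (fun y : ℝ => (y : ℂ) ^ ((k : ℂ) - s)) (Ioc 0 1) := fun k =>
    (intervalIntegrable_iff_integrableOn_Ioc_of_le zero_le_one).1
      (intervalIntegral.intervalIntegrable_cpow' (hre k))
  have hval : ∀ k : ℕ, ∫ y in Ioc (0 : ℝ) 1, (y : ℂ) ^ ((k : ℂ) - s) = 1 / (k + 1 - s) := by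
    intro k
    have hne : (k : ℂ) - s + 1 ≠ 0 := by
      intro h
      have h1 := congrArg Complex.re h
      have h2 := hre k
      simp at h1 h2; linarith
    rw [← intervalIntegral.integral_of_le zero_le_one, integral_cpow (Or.inl (hre k))]
    simp [Complex.zero_cpow hne]
    ring
  have hvalr : ∀ k : ℕ, ∫ y in Ioc (0 : ℝ) 1, ‖(y : ℂ) ^ ((k : ℂ) - s)‖ ≤ 1 / (1 - s.re) := by
    intro k
    have hr : -1 < (k : ℝ) - s.re := by simpa using hre k
    have h1 : ∫ y in Ioc (0 : ℝ) 1, ‖(y : ℂ) ^ ((k : ℂ) - s)‖ = ∫ y in Ioc (0 : ℝ) 1, y ^ ((k : ℝ) - s.re) := by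
      refine setIntegral_congr_fun measurableSet_Ioc fun y hy => ?_
      simp only [Complex.norm_cpow_eq_rpow_re_of_pos hy.1]
      simp
    rw [h1, ← intervalIntegral.integral_of_le zero_le_one, integral_rpow (Or.inl hr),
      Real.zero_rpow (by linarith), Real.one_rpow, sub_zero]
    have : (0 : ℝ) ≤ k := by positivity
    exact one_div_le_one_div_of_le (by linarith) (by linarith)
  have h := hasSum_integral_of_summable_integral_norm (μ := volume.restrict (Ioc (0 : ℝ) 1))
    (F := fun (k : ℕ) (y : ℝ) => (-(x : ℂ)) ^ k / (k.factorial : ℂ) * (y : ℂ) ^ ((k : ℂ) - s))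
    (fun k => (hII k).const_mul _) ?_
  · rw [← hsplit]
    convert! h using 1
    · funext k; rw [integral_const_mul, hval]; ring
    · refine setIntegral_congr_fun measurableSet_Ioc fun y hy => ?_
      have hy0 : (y : ℂ) ≠ 0 := by exact_mod_cast hy.1.ne'
      have hexp := NormedSpace.expSeries_div_hasSum_exp (-(x : ℂ) * y)
      rw [← Complex.exp_eq_exp_ℂ] at hexp
      rw [← hexp.tsum_eq, ← tsum_mul_left]
      congr 1; funext k
      rw [show (k : ℂ) - s = (1 - s - 1) + k by ring, Complex.cpow_add _ _ hy0, Complex.cpow_natCast, mul_pow]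
      ring
  · refine Summable.of_nonneg_of_le (fun k => integral_nonneg fun y => norm_nonneg _) (fun k => ?_)
      ((Real.summable_pow_div_factorial x).mul_right (1 / (1 - s.re)))
    simp only [norm_mul ((-(x : ℂ)) ^ k / (k.factorial : ℂ))]
    rw [integral_const_mul]
    have : ‖(-(x : ℂ)) ^ k / (k.factorial : ℂ)‖ = x ^ k / k.factorial := by
      rw [norm_div, norm_pow, norm_neg, Complex.norm_of_nonneg hx.le]; simp
    rw [this]
    gcongr
    exact hvalr k

lemma E_formula (N : ℕ) : ∀ {s : ℂ}, s.re < N + 1 → (∀ n : ℕ, s ≠ (n : ℂ) + 1) → ∀ {x : ℝ}, 0 < x →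
    HasSum (fun k : ℕ => (-(x : ℂ)) ^ k / (k.factorial : ℂ) / (k + 1 - s))
      (Complex.Gamma (1 - s) * (x : ℂ) ^ (s - 1) - E s x) := by
  induction N with
  | zero => intro s h1 _ x hx; exact E_base (by simpa using h1) hx
  | succ N ih =>
    intro s' h1 h2 x hx
    obtain ⟨s, rfl⟩ : ∃ s, s' = s + 1 := ⟨s' - 1, by ring⟩
    have hs0 : s ≠ 0 := by have := h2 0; simpa using this
    have h3 : ∀ n : ℕ, s ≠ (n : ℂ) + 1 := by
      intro n h; apply h2 (n + 1); rw [h]; push_cast; ring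
    have ih' := ih (s := s) (by simp at h1; linarith) h3 hx
    have hstep := E_step s hx
    have hx0 : (x : ℂ) ≠ 0 := by exact_mod_cast hx.ne'
    have hG : Complex.Gamma (1 - s) = -s * Complex.Gamma (-s) := by
      rw [← Complex.Gamma_add_one _ (neg_ne_zero.2 hs0)]; congr 1; ring
    have hexp := NormedSpace.expSeries_div_hasSum_exp (-(x : ℂ))
    rw [← Complex.exp_eq_exp_ℂ] at hexp
    have hB : HasSum (fun k : ℕ => (-(x : ℂ)) ^ k / (k.factorial : ℂ) * (k / (k - s)))
        (-(x : ℂ) * (Complex.Gamma (1 - s) * (x : ℂ) ^ (s - 1) - E s x)) := by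
      have h4 := ih'.mul_left (-(x : ℂ))
      rw [← hasSum_nat_add_iff' 1]
      simp only [Finset.range_one, Finset.sum_singleton, Nat.cast_zero, zero_div, mul_zero, sub_zero]
      convert! h4 using 1
      funext k
      have hk : (k : ℂ) + 1 ≠ 0 := by exact_mod_cast Nat.succ_ne_zero k
      have hf : (k.factorial : ℂ) ≠ 0 := by exact_mod_cast k.factorial_ne_zero
      have hks : (k : ℂ) + 1 - s ≠ 0 := fun h => h3 k (by linear_combination -h)
      rw [Nat.factorial_succ]; push_cast
      field_simp
      ring
    have hC := (hB.sub hexp).mul_left (1 / s)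
    convert! hC using 1
    · funext k
      have hf : (k.factorial : ℂ) ≠ 0 := by exact_mod_cast k.factorial_ne_zero
      have hks : (k : ℂ) - s ≠ 0 := fun h => h2 k (by linear_combination -h)
      rw [show (k : ℂ) + 1 - (s + 1) = k - s by ring]
      field_simp
      ring
    · have hxs : (x : ℂ) ^ s = x * (x : ℂ) ^ (s - 1) := by
        rw [Complex.cpow_sub _ _ hx0, Complex.cpow_one]; field_simp
      rw [show 1 - (s + 1) = -s by ring, show s + 1 - 1 = s by ring, hxs]
      field_simp
      rw [hG]
      linear_combination -hstep


/-! ### values of `Z` -/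

lemma halfPunct {a : ℝ} (ha : 0 < a) : IsPreconnected ({w : ℂ | 0 < w.re} \ {(a : ℂ)}) := by
  have hA : IsPreconnected {w : ℂ | a < w.re} := halfPre a
  have hB : IsPreconnected ({w : ℂ | 0 < w.re} ∩ {w : ℂ | 0 < w.im}) :=
    ((convex_halfSpace_re_gt 0).inter (convex_halfSpace_im_gt 0)).isPreconnected
  have hC : IsPreconnected ({w : ℂ | 0 < w.re} ∩ {w : ℂ | w.im < 0}) :=
    ((convex_halfSpace_re_gt 0).inter (convex_halfSpace_im_lt 0)).isPreconnected
  have hD : IsPreconnected ({w : ℂ | 0 < w.re} ∩ {w : ℂ | w.re < a}) :=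
    ((convex_halfSpace_re_gt 0).inter (convex_halfSpace_re_lt a)).isPreconnected
  have h1 := IsPreconnected.union (⟨a + 1, 1⟩ : ℂ) (by simp) (by simp; linarith) hA hB
  have h2 := IsPreconnected.union (⟨a + 1, -1⟩ : ℂ) (by simp) (by simp; linarith) h1 hC
  have h3 := IsPreconnected.union (⟨a / 2, 1⟩ : ℂ) (by left; right; simp; linarith) (by simp; linarith) h2 hD
  convert h3 using 1
  ext w
  simp only [mem_diff, mem_setOf_eq, mem_singleton_iff, mem_union, mem_inter_iff, Complex.ext_iff,
    Complex.ofReal_re, Complex.ofReal_im]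
  constructor
  · rintro ⟨h, h'⟩
    rcases lt_trichotomy w.re a with h4 | h4 | h4
    · right; exact ⟨h, h4⟩
    · rcases lt_trichotomy w.im 0 with h5 | h5 | h5
      · left; right; exact ⟨h, h5⟩
      · exact absurd ⟨h4, h5⟩ h'
      · left; left; right; exact ⟨h, h5⟩
    · left; left; left; exact h4
  · rintro (((h | ⟨h, h'⟩) | ⟨h, h'⟩) | ⟨h, h'⟩)
    · exact ⟨by linarith, fun h2 => by linarith [h2.1]⟩
    · exact ⟨h, fun h2 => by linarith [h2.2]⟩
    · exact ⟨h, fun h2 => by linarith [h2.2]⟩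
    · exact ⟨h, fun h2 => by linarith [h2.1]⟩

lemma M_shift {d w : ℂ} (hd : 0 < d.re) (hw : 0 < w.re) (j : ℕ) :
    (-1) ^ j / Complex.Gamma (w + j) * M d j (w + j) = M d 0 w / Complex.Gamma w := by
  induction j with
  | zero => simp; ring
  | succ j ih =>
    rw [← ih]
    have hre : 0 < (w + j).re := by simp; positivity
    have hne : w + j ≠ 0 := by intro h; rw [h] at hre; simp at hre
    have hG := Complex.Gamma_ne_zero_of_re_pos hre
    push_cast
    rw [← add_assoc, M_parts hd j hre, Complex.Gamma_add_one _ hne]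
    field_simp
    ring

lemma Z_base {d w : ℂ} (hd : 0 < d.re) (hw : 1 < w.re) {Z : ℂ → ℂ}
    (hZ1 : ∀ w : ℂ, 1 < w.re → Z w = ∑' n : ℕ, ((n : ℂ) + d) ^ (-w)) :
    Z w = M d 0 w / Complex.Gamma w + 1 / (w - 1) := by
  have hw0 : 0 < w.re := by linarith
  have h := H_eq hd hw0 le_rfl (sumReal0 hd hw) (intE0 hw)
  have hG := Complex.Gamma_ne_zero_of_re_pos hw0
  have hM : M d 0 w = ∫ t in Ioi (0 : ℝ), (t : ℂ) ^ (w - 1) * ker d (t + (0 : ℝ)) := by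
    rw [M]; simp [K]
  have hE : E w 0 = 1 / (w - 1) := by
    rw [E]
    have := integral_Ioi_cpow_of_lt (a := -w) (by simpa using hw) one_pos
    simp only [Complex.ofReal_zero, mul_zero, neg_zero, Complex.exp_zero, one_mul]
    rw [this, Complex.ofReal_one, Complex.one_cpow, show -w + 1 = -(w - 1) by ring, neg_div_neg_eq]
  rw [hM, h, hE, hZ1 w hw, S]
  simp only [Complex.ofReal_zero, mul_zero, Complex.exp_zero, one_mul]
  field_simp
  ring

lemma Z_val {d : ℂ} (hd : 0 < d.re) {Z : ℂ → ℂ}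
    (hZ1 : ∀ w : ℂ, 1 < w.re → Z w = ∑' n : ℕ, ((n : ℂ) + d) ^ (-w))
    (hZ2 : DifferentiableOn ℂ Z {w : ℂ | w ≠ 1}) (j : ℕ) {w : ℂ} (hw : 0 < w.re) (hwj : w ≠ j + 1) :
    Z (w - j) = (-1) ^ j / Complex.Gamma w * M d j w + 1 / (w - j - 1) := by
  set V : Set ℂ := {w : ℂ | 0 < w.re} \ {(((j : ℝ) + 1 : ℝ) : ℂ)} with hV
  have hVo : IsOpen V := (halfOpen 0).sdiff isClosed_singleton
  have hmem : ∀ {w : ℂ}, 0 < w.re → w ≠ j + 1 → w ∈ V := by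
    intro w h1 h2; refine ⟨h1, ?_⟩; simpa using h2
  have hA : AnalyticOnNhd ℂ (fun w => Z (w - j)) V := by
    refine DifferentiableOn.analyticOnNhd ?_ hVo
    refine hZ2.comp (by fun_prop) ?_
    intro w hw h
    apply hw.2
    simp; linear_combination h
  have hB : AnalyticOnNhd ℂ (fun w => (-1) ^ j / Complex.Gamma w * M d j w + 1 / (w - j - 1)) V := by
    refine DifferentiableOn.analyticOnNhd (fun w hw => ?_) hVo
    have hre : 0 < w.re := hw.1
    refine DifferentiableAt.differentiableWithinAt ?_
    refine DifferentiableAt.add (DifferentiableAt.mul (DifferentiableAt.div (by fun_prop) ?_ ?_) (M_diff hd j hre)) ?_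
    · refine Complex.differentiableAt_Gamma _ fun m h => ?_
      rw [h] at hre; simp at hre
      have : (0 : ℝ) ≤ m := by positivity
      linarith
    · exact Complex.Gamma_ne_zero_of_re_pos hre
    · refine DifferentiableAt.div (by fun_prop) (by fun_prop) ?_
      intro h; apply hw.2; simp; linear_combination h
  have hz0 : (((j : ℝ) + 2 : ℝ) : ℂ) ∈ V := by
    refine hmem (by simp; positivity) ?_
    intro h
    have := congrArg Complex.re h
    simp at this
  refine hA.eqOn_of_preconnected_of_frequently_eq hB (halfPunct (by positivity)) hz0 ?_ (hmem hw hwj)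
  refine freqReal ?_
  filter_upwards [lt_mem_nhds (show (j : ℝ) + 1 < j + 2 by linarith)] with y hy
  have h1 : 1 < ((y : ℂ) - j).re := by simp; linarith
  rw [Z_base hd h1 hZ1, ← M_shift hd (by linarith) j, sub_add_cancel]

/-! ### power series -/

lemma powS {c : ℕ → ℂ} (hc : ∀ x : ℝ, 0 < x → x < 1 → Summable fun j : ℕ => c j * (x : ℂ) ^ j) :
    ∃ F : ℂ → ℂ, DifferentiableOn ℂ F (Metric.ball 0 1) ∧
      (∀ k : ℕ, iteratedDeriv k F 0 = k.factorial * c k) ∧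
      ∀ u : ℂ, ‖u‖ < 1 → F u = ∑' j : ℕ, c j * u ^ j := by
  set P := FormalMultilinearSeries.ofScalars ℂ c with hP
  have hrad : 1 ≤ P.radius := by
    refine ENNReal.le_of_forall_nnreal_lt fun r hr => ?_
    have hr1 : (r : ℝ) < 1 := by exact_mod_cast hr
    set x : ℝ := ((r : ℝ) + 1) / 2 with hx
    have hx0 : 0 < x := by have := r.2; have h : (0 : ℝ) ≤ r := r.2; linarith
    have hrx : (r : ℝ) ≤ x := by linarith
    have hs := (hc x hx0 (by linarith)).norm
    refine P.le_radius_of_summable_norm ?_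
    refine Summable.of_nonneg_of_le (fun n => by positivity) (fun n => ?_) hs
    rw [hP, FormalMultilinearSeries.ofScalars_norm, norm_mul, norm_pow, Complex.norm_of_nonneg hx0.le]
    gcongr
  have hF := (P.hasFPowerSeriesOnBall (lt_of_lt_of_le one_pos hrad)).mono one_pos hrad
  refine ⟨P.sum, ?_, ?_, ?_⟩
  · have := hF.differentiableOn
    rwa [← ENNReal.ofReal_one, Metric.eball_ofReal] at this
  · intro k
    have h := hF.factorial_smul 1 k
    rw [iteratedDeriv_eq_iteratedFDeriv, ← h, hP]
    simp [FormalMultilinearSeries.ofScalars_apply_eq]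
  · intro u _
    simp [FormalMultilinearSeries.sum, hP, FormalMultilinearSeries.ofScalars_apply_eq]
    exact tsum_congr fun n => mul_comm _ _


/-! ### the local regular part -/

def P (d : ℂ) (Z : ℂ → ℂ) (s : ℂ) : Prop :=
  ∃ F : ℂ → ℂ, DifferentiableOn ℂ F (Metric.ball 0 1) ∧
    (∀ k : ℕ, iteratedDeriv k F 0 = (-1) ^ k * Z (s - k)) ∧
    ∀ x : ℝ, 0 < x → x < 1 → S d s x - Complex.Gamma (1 - s) * (x : ℂ) ^ (s - 1) = F x

lemma P_of_hasSum {d s : ℂ} {Z : ℂ → ℂ}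
    (h : ∀ x : ℝ, 0 < x → x < 1 →
      HasSum (fun j : ℕ => (-1) ^ j / (j.factorial : ℂ) * Z (s - j) * (x : ℂ) ^ j)
        (S d s x - Complex.Gamma (1 - s) * (x : ℂ) ^ (s - 1))) : P d Z s := by
  obtain ⟨F, h1, h2, h3⟩ := powS (c := fun j : ℕ => (-1) ^ j / (j.factorial : ℂ) * Z (s - j))
    (fun x hx hx1 => (h x hx hx1).summable)
  refine ⟨F, h1, fun k => ?_, fun x hx hx1 => ?_⟩
  · rw [h2]
    have : (k.factorial : ℂ) ≠ 0 := by exact_mod_cast k.factorial_ne_zero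
    field_simp
  · rw [h3 _ (by rw [Complex.norm_of_nonneg hx.le]; exact hx1), (h x hx hx1).tsum_eq]

lemma P_pos {d : ℂ} (hd : 0 < d.re) {Z : ℂ → ℂ}
    (hZ1 : ∀ w : ℂ, 1 < w.re → Z w = ∑' n : ℕ, ((n : ℂ) + d) ^ (-w))
    (hZ2 : DifferentiableOn ℂ Z {w : ℂ | w ≠ 1}) {s : ℂ} (hs : 0 < s.re)
    (hsn : ∀ n : ℕ, s ≠ (n : ℂ) + 1) : P d Z s := by
  refine P_of_hasSum fun x hx hx1 => ?_
  obtain ⟨N, hN⟩ := exists_nat_gt s.re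
  have hG := Complex.Gamma_ne_zero_of_re_pos hs
  have h1 := (H_hasSum (u := (x : ℂ)) hd hs
    (by rw [Complex.norm_of_nonneg hx.le]; exact hx1)).mul_left (1 / Complex.Gamma s)
  rw [H_eq hd hs hx.le (sumReal hd _ hx) (intE _ hx)] at h1
  have h2 := E_formula N (s := s) (by linarith) hsn hx
  have h3 := h1.sub h2
  convert! h3 using 1
  · funext j
    rw [Z_val hd hZ1 hZ2 j hs (hsn j)]
    have e1 : s - j - 1 ≠ 0 := by
      intro h; apply hsn j; linear_combination h
    have e2 : (j : ℂ) + 1 - s ≠ 0 := by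
      intro h; apply hsn j; linear_combination -h
    have e3 : (j.factorial : ℂ) ≠ 0 := by exact_mod_cast j.factorial_ne_zero
    have e4 : (1 : ℂ) / (s - j - 1) = - (1 / (j + 1 - s)) := by
      field_simp; ring
    have e5 : ((-1 : ℂ) ^ j) * (-1) ^ j = 1 := by rw [← mul_pow]; simp
    rw [e4, neg_pow]
    field_simp
    linear_combination ((x : ℂ) ^ j * ((j : ℂ) + 1 - s) * M d j s) * e5
  · field_simp
    ring

lemma P_zero {d : ℂ} (hd : 0 < d.re) {Z : ℂ → ℂ}
    (hZ1 : ∀ w : ℂ, 1 < w.re → Z w = ∑' n : ℕ, ((n : ℂ) + d) ^ (-w))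
    (hZ2 : DifferentiableOn ℂ Z {w : ℂ | w ≠ 1}) : P d Z 0 := by
  refine P_of_hasSum fun x hx hx1 => ?_
  have hxne : (x : ℂ) ≠ 0 := by exact_mod_cast hx.ne'
  have h1 := K_taylor d 0 (u := (x : ℂ)) (by rw [Complex.norm_of_nonneg hx.le]; exact hx1)
  have h2 := E_formula 0 (s := 0) (by simp) (fun n h => by
    have : ((n + 1 : ℕ) : ℂ) = 0 := by push_cast; exact h.symm
    exact absurd (Nat.cast_eq_zero.1 this) (by simp)) hx
  have h3 := h1.sub h2
  have hE : E 0 x = Complex.exp (-x) / x := by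
    have := integral_exp_mul_complex_Ioi (a := -(x : ℂ)) (by simpa using hx) 1
    rw [E]
    calc _ = ∫ y in Ioi (1 : ℝ), Complex.exp (-(x : ℂ) * y) := by
          refine integral_congr_ae (Eventually.of_forall fun y => ?_)
          simp [mul_comm]
      _ = _ := by rw [this]; push_cast; rw [mul_one]; field_simp
  have hS : S d 0 x = Complex.exp (-d * x) / (1 - Complex.exp (-x)) := by
    rw [S, ← (geom (d := d) (z := (x : ℂ)) (by simpa using hx)).tsum_eq]
    simp
  convert! h3 using 1
  · funext j
    have hz := Z_val hd hZ1 hZ2 (j + 1) (w := 1) (by simp) (by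
      intro h
      have : ((j + 1 : ℕ) : ℂ) = 0 := by push_cast; push_cast at h; linear_combination -h
      exact absurd (Nat.cast_eq_zero.1 this) (by simp))
    rw [M_one hd, Complex.Gamma_one] at hz
    have e0 : (1 : ℂ) - ((j + 1 : ℕ) : ℂ) = 0 - j := by push_cast; ring
    rw [e0] at hz
    have e3 : (j.factorial : ℂ) ≠ 0 := by exact_mod_cast j.factorial_ne_zero
    have e2 : (j : ℂ) + 1 ≠ 0 := by exact_mod_cast j.succ_ne_zero
    have e4 : (1 : ℂ) / (0 - j - 1) = - (1 / (j + 1)) := by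
      rw [← div_neg]; congr 1; ring
    have e5 : ((-1 : ℂ) ^ j) * (-1) ^ j = 1 := by rw [← mul_pow]; simp
    rw [hz, e4, neg_pow (x : ℂ), pow_succ]
    simp only [sub_zero]
    field_simp
    linear_combination (((j : ℂ) + 1) * K d j 0) * e5
  · rw [hE, hS, Complex.ofReal_zero, zero_add, ker_ne hxne]
    ring

lemma S_deriv {d : ℂ} (hd : 0 < d.re) (s : ℂ) {x : ℝ} (hx : 0 < x) :
    HasDerivAt (fun y : ℝ => S d (s + 1) y) (-S d s x) x := by
  have hne : ∀ n : ℕ, (n : ℂ) + d ≠ 0 := by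
    intro n h
    have := congrArg Complex.re h
    simp at this
    have h2 : (0 : ℝ) ≤ n := by positivity
    linarith
  have key : ∀ (n : ℕ), ((n : ℂ) + d) * ((n : ℂ) + d) ^ (-(s + 1)) = ((n : ℂ) + d) ^ (-s) := by
    intro n
    rw [show -s = 1 + -(s + 1) by ring, Complex.cpow_add _ _ (hne n), Complex.cpow_one]
  have hexp : ∀ (n : ℕ) (y : ℝ), ‖Complex.exp (-((n : ℂ) + d) * y)‖ = Real.exp (-(n + d.re) * y) := by
    intro n y
    rw [Complex.norm_exp]; simp
  have h := hasDerivAt_tsum_of_isPreconnected (𝕜 := ℝ) (t := Ioi (x / 2)) (y₀ := x) (y := x)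
    (g := fun (n : ℕ) (y : ℝ) => Complex.exp (-((n : ℂ) + d) * y) * ((n : ℂ) + d) ^ (-(s + 1)))
    (g' := fun (n : ℕ) (y : ℝ) => -(Complex.exp (-((n : ℂ) + d) * y) * ((n : ℂ) + d) ^ (-s)))
    (sumGen hd s (half_pos hx)) isOpen_Ioi isPreconnected_Ioi ?_ ?_ ?_ ?_ ?_
  · simp only [tsum_neg] at h
    exact h
  · intro n y _
    have h1 : HasDerivAt (fun z : ℂ => Complex.exp (-((n : ℂ) + d) * z))
        (Complex.exp (-((n : ℂ) + d) * y) * (-((n : ℂ) + d) * 1)) (y : ℂ) :=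
      ((hasDerivAt_id (y : ℂ)).const_mul (-((n : ℂ) + d))).cexp
    have h2 := (h1.mul_const (((n : ℂ) + d) ^ (-(s + 1)))).comp_ofReal
    convert! h2 using 1
    rw [← key]; ring
  · intro n y hy
    have hy' : x / 2 < y := hy
    rw [norm_neg, norm_mul, hexp]
    have h2 : (0 : ℝ) ≤ n := by positivity
    gcongr ?_ * _
    apply Real.exp_le_exp.2
    nlinarith
  · show x / 2 < x
    linarith
  · refine Summable.of_norm ((sumGen hd (s + 1) hx).congr fun n => ?_)
    rw [norm_mul, hexp]
  · show x / 2 < x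
    linarith

lemma P_down {d s : ℂ} (hd : 0 < d.re) {Z : ℂ → ℂ} (hs : s ≠ 0) (h : P d Z (s + 1)) : P d Z s := by
  obtain ⟨F, h1, h2, h3⟩ := h
  refine ⟨fun u => -deriv F u, ?_, ?_, ?_⟩
  · exact (h1.deriv Metric.isOpen_ball).neg
  · intro k
    have := h2 (k + 1)
    rw [iteratedDeriv_succ'] at this
    rw [iteratedDeriv_fun_neg, this, pow_succ]
    push_cast
    rw [show s + 1 - ((k : ℂ) + 1) = s - k by ring]
    ring
  · intro x hx hx1
    have hxb : (x : ℂ) ∈ Metric.ball (0 : ℂ) 1 := by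
      rw [mem_ball_zero_iff, Complex.norm_of_nonneg hx.le]; exact hx1
    have hF : HasDerivAt (fun y : ℝ => F y) (deriv F x) x :=
      ((h1.differentiableAt (Metric.isOpen_ball.mem_nhds hxb)).hasDerivAt).comp_ofReal
    have hL := (S_deriv hd s hx).sub ((cpowDeriv s hx).const_mul (Complex.Gamma (-s)))
    have hev : (fun y : ℝ => F y) =ᶠ[𝓝 x]
        (fun y : ℝ => S d (s + 1) y - Complex.Gamma (-s) * (y : ℂ) ^ s) := by
      filter_upwards [Ioo_mem_nhds hx hx1] with y hy
      rw [← h3 y hy.1 hy.2]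
      rw [show 1 - (s + 1) = -s by ring, show s + 1 - 1 = s by ring]
    have hu := (hF.congr_of_eventuallyEq hev.symm).unique hL
    have hg : Complex.Gamma (1 - s) = -s * Complex.Gamma (-s) := by
      rw [← Complex.Gamma_add_one _ (neg_ne_zero.2 hs)]; congr 1; ring
    show _ = -deriv F x
    rw [hu, hg]; ring

lemma P_all {d : ℂ} (hd : 0 < d.re) {Z : ℂ → ℂ}
    (hZ1 : ∀ w : ℂ, 1 < w.re → Z w = ∑' n : ℕ, ((n : ℂ) + d) ^ (-w))
    (hZ2 : DifferentiableOn ℂ Z {w : ℂ | w ≠ 1}) (N : ℕ) : ∀ {s : ℂ}, -(N : ℝ) < s.re →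
    (∀ n : ℕ, s ≠ (n : ℂ) + 1) → P d Z s := by
  induction N with
  | zero => intro s h1 h2; exact P_pos hd hZ1 hZ2 (by simpa using h1) h2
  | succ N ih =>
    intro s h1 h2
    by_cases h0 : s = 0
    · subst h0; exact P_zero hd hZ1 hZ2
    · refine P_down hd h0 (ih ?_ ?_)
      · push_cast at h1; simp; linarith
      · intro n h
        cases n with
        | zero => apply h0; simpa using h
        | succ n => apply h2 n; push_cast at h; linear_combination h

lemma slitPre : IsPreconnected (Metric.ball (0 : ℂ) 1 ∩ Complex.slitPlane) := by
  have h : StarConvex ℝ ((1 / 2 : ℝ) : ℂ) (Metric.ball (0 : ℂ) 1 ∩ Complex.slitPlane) := by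
    refine StarConvex.inter ?_ ?_
    · refine (convex_ball (0 : ℂ) 1).starConvex ?_
      rw [mem_ball_zero_iff, Complex.norm_of_nonneg (by norm_num)]; norm_num
    · intro z hz a b ha hb hab
      rw [Complex.mem_slitPlane_iff] at hz ⊢
      simp only [Complex.add_re, Complex.add_im, Complex.real_smul, Complex.mul_re, Complex.mul_im,
        Complex.ofReal_re, Complex.ofReal_im, zero_mul, mul_zero, sub_zero, add_zero, zero_add]
      by_cases hb0 : b = 0
      · left; subst hb0; simp at hab; subst hab; norm_num
      · have hbp : 0 < b := lt_of_le_of_ne hb (Ne.symm hb0)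
        rcases hz with hz | hz
        · left; positivity
        · right; positivity
  have hmem : ((1 / 2 : ℝ) : ℂ) ∈ Metric.ball (0 : ℂ) 1 ∩ Complex.slitPlane := by
    refine ⟨?_, ?_⟩
    · rw [mem_ball_zero_iff, Complex.norm_of_nonneg (by norm_num)]; norm_num
    · rw [Complex.mem_slitPlane_iff]; left; rw [Complex.ofReal_re]; norm_num
  exact (h.isPathConnected hmem).isConnected.isPreconnected

theorem final (d : ℂ) (hd : 0 < d.re) (s : ℂ)
    (hs : ∀ n : ℕ, s ≠ (n : ℂ) + 1)
    (Z : ℂ → ℂ)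
    (hZ1 : ∀ w : ℂ, 1 < w.re → Z w = ∑' n : ℕ, ((n : ℂ) + d) ^ (-w))
    (hZ2 : DifferentiableOn ℂ Z {w : ℂ | w ≠ 1})
    (Φ : ℂ → ℂ)
    (hΦ1 : ∀ u : ℂ, 0 < u.re →
      Φ u = ∑' n : ℕ, Complex.exp (-((n : ℂ) + d) * u) * ((n : ℂ) + d) ^ (-s))
    (hΦ2 : DifferentiableOn ℂ Φ
      {u : ℂ | ‖u‖ < 2 * Real.pi ∧ ¬(u.im = 0 ∧ u.re ≤ 0)}) :
    ∀ u : ℂ, ¬(u.im = 0 ∧ u.re ≤ 0) → ‖u‖ < 1 →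
      HasSum (fun k : ℕ => (-u) ^ k / (k.factorial : ℂ) * Z (s - k))
        (Φ u - Complex.Gamma (1 - s) * u ^ (s - 1)) := by
  obtain ⟨N, hN⟩ := exists_nat_gt (-s.re)
  obtain ⟨F, h1, h2, h3⟩ := P_all hd hZ1 hZ2 N (s := s) (by linarith) hs
  have hslit : ∀ u : ℂ, ¬(u.im = 0 ∧ u.re ≤ 0) ↔ u ∈ Complex.slitPlane := by
    intro u
    rw [Complex.mem_slitPlane_iff]
    push Not
    constructor
    · intro h
      by_cases h0 : u.im = 0
      · exact Or.inl (h h0)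
      · exact Or.inr h0
    · rintro (h | h) h0
      · exact h
      · exact absurd h0 h
  have hopen : IsOpen (Metric.ball (0 : ℂ) 1 ∩ Complex.slitPlane) :=
    Metric.isOpen_ball.inter Complex.isOpen_slitPlane
  have hA : AnalyticOnNhd ℂ (fun u => Φ u - Complex.Gamma (1 - s) * u ^ (s - 1))
      (Metric.ball (0 : ℂ) 1 ∩ Complex.slitPlane) := by
    refine DifferentiableOn.analyticOnNhd ?_ hopen
    refine (hΦ2.mono ?_).sub (DifferentiableOn.const_mul ?_ _)
    · intro u hu
      have h := mem_ball_zero_iff.1 hu.1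
      exact ⟨by linarith [Real.pi_gt_three], (hslit u).2 hu.2⟩
    · intro u hu
      exact (differentiableAt_id.cpow (differentiableAt_const _) hu.2).differentiableWithinAt
  have hB : AnalyticOnNhd ℂ F (Metric.ball (0 : ℂ) 1 ∩ Complex.slitPlane) :=
    (h1.mono inter_subset_left).analyticOnNhd hopen
  have hmem : ((1 / 2 : ℝ) : ℂ) ∈ Metric.ball (0 : ℂ) 1 ∩ Complex.slitPlane := by
    refine ⟨?_, ?_⟩
    · rw [mem_ball_zero_iff, Complex.norm_of_nonneg (by norm_num)]; norm_num
    · rw [Complex.mem_slitPlane_iff]; left; rw [Complex.ofReal_re]; norm_num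
  have heq := hA.eqOn_of_preconnected_of_frequently_eq hB slitPre hmem (freqReal (by
    filter_upwards [Ioo_mem_nhds (show (0 : ℝ) < 1 / 2 by norm_num) (show (1 / 2 : ℝ) < 1 by norm_num)]
      with y hy
    rw [← h3 y hy.1 hy.2, hΦ1 _ (by simpa using hy.1)]
    rfl))
  intro u hu hu1
  have hub : u ∈ Metric.ball (0 : ℂ) 1 := mem_ball_zero_iff.2 hu1
  rw [show Φ u - Complex.Gamma (1 - s) * u ^ (s - 1) = F u from heq ⟨hub, (hslit u).1 hu⟩]
  have ht := Complex.hasSum_taylorSeries_on_ball h1 hub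
  convert! ht using 1
  funext k
  rw [h2, neg_pow, sub_zero]
  simp only [smul_eq_mul]
  field_simp


end Erd

/-- Erdélyi's expansion formula with complex parameter `d`, `Re d > 0`.
Here `Z` is the analytic continuation of the Hurwitz zeta function `s ↦ Σ_n (n+d)^{-s}`, and
`Φ` is the analytic continuation in `u` of `u ↦ e^{-du} φ(e^{-u}, s, d) = Σ_n e^{-(n+d)u}(n+d)^{-s}`
(the Lerch transcendent), defined on the slit disk `{‖u‖ < 2π} ∖ (-∞, 0]`.
Then for `s` not a positive integer there is `ε > 0` (depending on `d`) such that for all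
`u ∉ (-∞,0]` with `‖u‖ < ε`,
`Φ u = Γ(1-s) u^{s-1} + Σ_{k=0}^∞ ((-u)^k/k!) Z(s-k)`, the series converging absolutely. -/
theorem erdelyi_formula_complex_parameter (d : ℂ) (hd : 0 < d.re) (s : ℂ)
    (hs : ∀ n : ℕ, s ≠ (n : ℂ) + 1)
    (Z : ℂ → ℂ)
    (hZ1 : ∀ w : ℂ, 1 < w.re → Z w = ∑' n : ℕ, ((n : ℂ) + d) ^ (-w))
    (hZ2 : DifferentiableOn ℂ Z {w : ℂ | w ≠ 1})
    (Φ : ℂ → ℂ)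
    (hΦ1 : ∀ u : ℂ, 0 < u.re →
      Φ u = ∑' n : ℕ, Complex.exp (-((n : ℂ) + d) * u) * ((n : ℂ) + d) ^ (-s))
    (hΦ2 : DifferentiableOn ℂ Φ
      {u : ℂ | ‖u‖ < 2 * Real.pi ∧ ¬(u.im = 0 ∧ u.re ≤ 0)}) :
    ∃ ε > 0, ∀ u : ℂ, ¬(u.im = 0 ∧ u.re ≤ 0) → ‖u‖ < ε →
      Summable (fun k : ℕ => ‖(-u) ^ k / (k.factorial : ℂ) * Z (s - k)‖) ∧
      HasSum (fun k : ℕ => (-u) ^ k / (k.factorial : ℂ) * Z (s - k))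
        (Φ u - Complex.Gamma (1 - s) * u ^ (s - 1)) := by
  refine ⟨1, one_pos, fun u hu hu1 => ?_⟩
  have h := Erd.final d hd s hs Z hZ1 hZ2 Φ hΦ1 hΦ2 u hu hu1
  exact ⟨h.summable.norm, h⟩
end

section
/- Fix δ > 0, a positive integer r, and a real r' > 1. For every d ∈ ℂ with Re(d) ≥ 1/r' and |d| ≤ r', every s ∈ ℂ with |s| ≤ r and distance at least δ from every positive integer, and every nonnegative integer k, one has |ζ(s - k, d)| ≤ C · (e²/(2π))^k · k! · (k+1)^{r+1} · (1 + r'^{2k}), where C depends only on r, r', δ. -/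
section
open Complex MeasureTheory Set Filter Topology

lemma hz_gamma_shift (w : ℂ) (n : ℕ) :
    (Complex.Gamma w)⁻¹ = (∏ i ∈ Finset.range n, (w + i)) * (Complex.Gamma (w + n))⁻¹ := by
  induction n with
  | zero => simp
  | succ n ih =>
    rw [ih, Complex.one_div_Gamma_eq_self_mul_one_div_Gamma_add_one (w + n),
      Finset.prod_range_succ]
    push_cast
    rw [add_assoc w, mul_assoc]

lemma hz_gamma_bdd (R : ℝ) : ∃ M : ℝ, 1 ≤ M ∧ ∀ z : ℂ, ‖z‖ ≤ R → ‖(Complex.Gamma z)⁻¹‖ ≤ M := by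
  obtain ⟨M, hM⟩ := (isCompact_closedBall (0 : ℂ) R).exists_bound_of_continuousOn
    (f := fun z => (Complex.Gamma z)⁻¹) Complex.differentiable_one_div_Gamma.continuous.continuousOn
  exact ⟨max M 1, le_max_right _ _, fun z hz => (hM z (by simpa using hz)).trans (le_max_left _ _)⟩

lemma hz_gamma_one (r : ℕ) (M : ℝ) (hM : ∀ z : ℂ, ‖z‖ ≤ r + 2 → ‖(Complex.Gamma z)⁻¹‖ ≤ M)
    (s : ℂ) (hs : ‖s‖ ≤ r) (k : ℕ) :
    ‖(Complex.Gamma (s - k))⁻¹‖ ≤ M * (k + r).factorial := by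
  rw [hz_gamma_shift _ k, norm_mul, mul_comm, sub_add_cancel, norm_prod]
  have hM0 : 0 ≤ M := (norm_nonneg _).trans (hM s (by linarith))
  refine mul_le_mul (hM s (by linarith)) ?_ (by positivity) hM0
  calc ∏ i ∈ Finset.range k, ‖s - k + i‖ ≤ ∏ i ∈ Finset.range k, ((k + r - i : ℕ) : ℝ) := by
        refine Finset.prod_le_prod (fun _ _ => norm_nonneg _) fun i hi => ?_
        have hi' : i < k := Finset.mem_range.1 hi
        have : s - k + i = s - ((k - i : ℕ) : ℂ) := by
          rw [Nat.cast_sub hi'.le]; ring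
        rw [this]
        refine (norm_sub_le _ _).trans ?_
        rw [Complex.norm_natCast, show k + r - i = r + (k - i) by omega]
        push_cast; linarith
    _ = ((k + r).descFactorial k : ℝ) := by
        rw [Nat.descFactorial_eq_prod_range]; push_cast; rfl
    _ ≤ _ := by
        have := Nat.factorial_mul_descFactorial (show k ≤ k + r by omega)
        have h2 : (k + r).descFactorial k ≤ (k+r).factorial := by
          rw [← this]; exact Nat.le_mul_of_pos_left _ (Nat.factorial_pos _)
        exact_mod_cast h2

lemma hz_gamma_two (r : ℕ) (M : ℝ) (hM : ∀ z : ℂ, ‖z‖ ≤ r + 2 → ‖(Complex.Gamma z)⁻¹‖ ≤ M)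
    (δ : ℝ) (hδ : 0 < δ) (hδ1 : δ ≤ 1 / 2)
    (s : ℂ) (hs : ‖s‖ ≤ r) (k : ℕ) (hd : δ ≤ ‖s - k - 1‖) (n : ℕ) (hne : s - k + n - 1 ≠ 0) :
    ‖(Complex.Gamma (s - k))⁻¹ / (s - k + n - 1)‖ ≤ M / δ * (k + r + 1).factorial := by
  have hM0 : 0 ≤ M := (norm_nonneg _).trans (hM s (by linarith))
  have h1 := hz_gamma_one r M hM s hs k
  have hf : ((k + r).factorial : ℝ) ≤ (k + r + 1).factorial := by
    exact_mod_cast Nat.factorial_le (by omega)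
  by_cases hc : δ ≤ ‖s - k + n - 1‖
  · rw [norm_div]
    calc _ ≤ M * (k + r).factorial / δ := by gcongr
      _ ≤ M * (k + r + 1).factorial / δ := by gcongr
      _ = _ := by ring
  push Not at hc
  obtain ⟨m, rfl⟩ : ∃ m, n = m + 1 := by
    rcases n with _ | m
    · simp at hc; linarith
    · exact ⟨m, rfl⟩
  have e1 : s - k + ((m + 1 : ℕ) : ℂ) - 1 = s - k + m := by push_cast; ring
  rw [e1] at hc hne ⊢
  rw [hz_gamma_shift _ (m + 1), Finset.prod_range_succ,
    show ∀ a b c : ℂ, a * b * c / b = (a * c) * (b / b) by intros; ring, div_self hne, mul_one,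
    norm_mul, norm_prod]
  have hm : m ≤ k + r := by
    have : (m : ℝ) ≤ r + k + 1 / 2 := by
      have h2 : (m : ℂ) = (s - k + m) - s + k := by ring
      have h3 : ‖(m : ℂ)‖ ≤ ‖s - k + m‖ + ‖s‖ + ‖(k : ℂ)‖ := by
        conv_lhs => rw [h2]
        exact (norm_add_le _ _).trans (by gcongr; exact norm_sub_le _ _)
      simp only [Complex.norm_natCast] at h3
      linarith
    have : (m : ℝ) < ((r + k + 1 : ℕ) : ℝ) := by push_cast; linarith
    have := Nat.cast_lt.1 this
    omega
  have hg : ‖(Complex.Gamma (s - k + ((m + 1 : ℕ) : ℂ)))⁻¹‖ ≤ M := by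
    apply hM
    have : s - k + ((m + 1 : ℕ) : ℂ) = (s - k + m) + 1 := by push_cast; ring
    rw [this]
    refine (norm_add_le _ _).trans ?_
    rw [norm_one]
    have : (0 : ℝ) ≤ r := by positivity
    linarith
  have hp : ∏ i ∈ Finset.range m, ‖s - k + i‖ ≤ ((m + 1).factorial : ℝ) := by
    calc _ ≤ ∏ i ∈ Finset.range m, ((m + 1 - i : ℕ) : ℝ) := by
          refine Finset.prod_le_prod (fun _ _ => norm_nonneg _) fun i hi => ?_
          have hi' : i < m := Finset.mem_range.1 hi
          have : s - k + i = (s - k + m) - ((m - i : ℕ) : ℂ) := by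
            rw [Nat.cast_sub hi'.le]; ring
          rw [this]
          refine (norm_sub_le _ _).trans ?_
          rw [Complex.norm_natCast, show m + 1 - i = 1 + (m - i) by omega]
          push_cast; linarith
      _ = ((m + 1).descFactorial m : ℝ) := by
          rw [Nat.descFactorial_eq_prod_range]; push_cast; rfl
      _ ≤ _ := by
          have := Nat.factorial_mul_descFactorial (show m ≤ m + 1 by omega)
          have h2 : (m + 1).descFactorial m ≤ (m+1).factorial := by
            rw [← this]; exact Nat.le_mul_of_pos_left _ (Nat.factorial_pos _)
          exact_mod_cast h2
  have hf2 : ((m + 1).factorial : ℝ) ≤ (k + r + 1).factorial := by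
    exact_mod_cast Nat.factorial_le (by omega)
  calc _ ≤ ((k + r + 1).factorial : ℝ) * M := by
        refine mul_le_mul (hp.trans hf2) hg (norm_nonneg _) (by positivity)
    _ ≤ ((k + r + 1).factorial : ℝ) * (M / δ) := by
        gcongr
        rw [le_div_iff₀ hδ]; nlinarith
    _ = _ := by ring

lemma hz_fact (k r : ℕ) : ((k + r).factorial : ℝ) ≤ r.factorial * k.factorial * ((k:ℝ) + 1) ^ r := by
  induction r with
  | zero => simp
  | succ r ih =>
    rw [← add_assoc, Nat.factorial_succ, Nat.factorial_succ]
    push_cast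
    calc ((k:ℝ) + r + 1) * (k + r).factorial
        ≤ (((r : ℝ) + 1) * (k + 1)) * (r.factorial * k.factorial * ((k:ℝ) + 1) ^ r) := by
          gcongr
          have : (0:ℝ) ≤ r * k := by positivity
          linarith
      _ = _ := by ring

lemma hz_series (r' : ℝ) : ∃ M : ℝ, 0 ≤ M ∧ ∀ d : ℂ, ‖d‖ ≤ r' → ∃ a : ℕ → ℂ,
    (∀ n, ‖a n‖ ≤ M * (1 / 2) ^ n) ∧ ∀ t : ℝ, 0 < t → t ≤ 1 →
      HasSum (fun n => a n * (t : ℂ) ^ n) (t * (cexp (-d * t) / (1 - cexp (-t)))) := by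
  set g : ℂ → ℂ := dslope (fun z => 1 - cexp (-z)) 0 with hg
  have hgd : Differentiable ℂ g := by
    rw [← differentiableOn_univ]
    refine (Complex.differentiableOn_dslope (by simp)).2 ?_
    fun_prop
  have hgne : ∀ z : ℂ, z ≠ 0 → g z = (1 - cexp (-z)) / z := by
    intro z hz
    rw [hg, dslope_of_ne _ hz, slope_def_field]; simp
  have hg0 : ∀ z ∈ Metric.ball (0 : ℂ) 3, g z ≠ 0 := by
    intro z hz
    by_cases h0 : z = 0
    · subst h0
      rw [hg, dslope_same]
      have : HasDerivAt (fun z => 1 - cexp (-z)) (1 : ℂ) 0 := by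
        have := ((hasDerivAt_neg (0:ℂ)).cexp).const_sub 1
        simpa using this
      rw [this.deriv]; exact one_ne_zero
    · rw [hgne z h0]
      refine div_ne_zero ?_ h0
      intro h
      have : cexp (-z) = 1 := (sub_eq_zero.1 h).symm
      obtain ⟨n, hn⟩ := Complex.exp_eq_one_iff.1 this
      have hn0 : n ≠ 0 := by
        rintro rfl; simp at hn; exact h0 hn
      have h3 : ‖z‖ < 3 := by simpa using hz
      have : ‖z‖ = |(n : ℝ)| * (2 * Real.pi) := by
        rw [← norm_neg, hn]; simp [abs_of_pos Real.pi_pos]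
      have h1 : (1 : ℝ) ≤ |(n : ℝ)| := by exact_mod_cast Int.one_le_abs hn0
      nlinarith [Real.pi_gt_three]
  obtain ⟨M, hM⟩ := (isCompact_closedBall (0 : ℂ) 2).exists_bound_of_continuousOn
    (f := fun z => (g z)⁻¹) (hgd.continuous.continuousOn.inv₀ (fun z hz => hg0 z
      (Metric.closedBall_subset_ball (by norm_num) hz)))
  have hM0 : 0 ≤ M := (norm_nonneg _).trans (hM 0 (by simp))
  refine ⟨Real.exp (r' * 2) * M, by positivity, fun d hd => ?_⟩
  set φ : ℂ → ℂ := fun z => cexp (-d * z) * (g z)⁻¹ with hφ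
  have hφd : DifferentiableOn ℂ φ (Metric.ball 0 3) := by
    refine DifferentiableOn.mul (by fun_prop) (hgd.differentiableOn.inv hg0)
  refine ⟨fun n => ((n.factorial : ℂ))⁻¹ * iteratedDeriv n φ 0, fun n => ?_, fun t h0 h1 => ?_⟩
  · have := Complex.norm_iteratedDeriv_le_of_forall_mem_sphere_norm_le n (c := 0) (R := 2)
      (C := Real.exp (r' * 2) * M) (f := φ) (by norm_num) ?_ ?_
    · rw [norm_mul, norm_inv, Complex.norm_natCast]
      calc _ ≤ ((n.factorial : ℝ))⁻¹ * (n.factorial * (Real.exp (r' * 2) * M) / 2 ^ n) := by gcongr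
        _ = _ := by
          have : (n.factorial : ℝ) ≠ 0 := by positivity
          rw [one_div, inv_pow]
          field_simp
    · apply DifferentiableOn.diffContOnCl
      refine hφd.mono ?_
      rw [closure_ball _ (by norm_num)]
      exact Metric.closedBall_subset_ball (by norm_num)
    · intro z hz
      have hz2 : ‖z‖ = 2 := by simpa using hz
      rw [hφ, norm_mul]
      refine mul_le_mul ?_ (hM z (by simp [hz2])) (norm_nonneg _) (by positivity)
      refine (Complex.norm_exp_le_exp_norm _).trans ?_
      rw [norm_mul, norm_neg, hz2]
      gcongr
  · have ht : (t : ℂ) ∈ Metric.ball (0 : ℂ) 3 := by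
      simp [abs_of_pos h0]; linarith
    have := Complex.hasSum_taylorSeries_on_ball hφd ht
    have htne : (t : ℂ) ≠ 0 := by exact_mod_cast h0.ne'
    convert! this using 1
    · funext n
      simp only [sub_zero, smul_eq_mul]; ring
    · rw [hφ]; simp only []
      rw [hgne _ htne, inv_div]; ring

lemma hz_norm_term {a c : ℂ} {t : ℝ} (ht : 0 < t) :
    ‖(t : ℂ) ^ (a - 1) * cexp (-(c * t))‖ = t ^ (a.re - 1) * Real.exp (-(c.re * t)) := by
  rw [norm_mul, Complex.norm_cpow_eq_rpow_re_of_pos ht, Complex.norm_exp]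
  simp

lemma hz_real_integrable {x y : ℝ} (hx : 0 < x) (hy : 0 < y) :
    IntegrableOn (fun t : ℝ => t ^ (x - 1) * Real.exp (-(y * t))) (Ioi 0) := by
  have := integrableOn_rpow_mul_exp_neg_mul_rpow (p := 1) (s := x - 1) (b := y)
    (by linarith) one_pos hy
  simpa using this

lemma hz_meas (a c : ℂ) : ContinuousOn
    (fun t : ℝ => (t : ℂ) ^ (a - 1) * cexp (-(c * t))) (Ioi 0) := by
  refine ContinuousOn.mul ?_ (by fun_prop)
  intro t ht
  refine ContinuousAt.continuousWithinAt ?_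
  exact (Complex.continuousAt_ofReal_cpow_const _ _ (Or.inr (ne_of_gt ht)))

lemma hz_integrable {a c : ℂ} (ha : 0 < a.re) (hc : 0 < c.re) :
    IntegrableOn (fun t : ℝ => (t : ℂ) ^ (a - 1) * cexp (-(c * t))) (Ioi 0) := by
  refine (hz_real_integrable ha hc).mono' ((hz_meas a c).aestronglyMeasurable measurableSet_Ioi) ?_
  filter_upwards [ae_restrict_mem measurableSet_Ioi] with t ht
  rw [hz_norm_term ht]

lemma hz_gamma_int {a c : ℂ} (ha : 0 < a.re) (hc : 0 < c.re) :
    ∫ t : ℝ in Ioi 0, (t : ℂ) ^ (a - 1) * cexp (-(c * t)) = c ^ (-a) * Complex.Gamma a := by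
  set U : Set ℂ := {c : ℂ | 0 < c.re} with hU
  have hUo : IsOpen U := isOpen_lt continuous_const Complex.continuous_re
  have hUc : IsPreconnected U := (convex_halfSpace_re_gt 0).isPreconnected
  set f : ℂ → ℂ := fun c => ∫ t : ℝ in Ioi 0, (t : ℂ) ^ (a - 1) * cexp (-(c * t)) with hf
  set g : ℂ → ℂ := fun c => c ^ (-a) * Complex.Gamma a with hg
  have hfd : DifferentiableOn ℂ f U := by
    intro c0 hc0
    have hc0' : 0 < c0.re := hc0
    have key := hasDerivAt_integral_of_dominated_loc_of_deriv_le (μ := volume.restrict (Ioi (0:ℝ)))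
      (F := fun (c : ℂ) (t : ℝ) => (t : ℂ) ^ (a - 1) * cexp (-(c * t)))
      (F' := fun (c : ℂ) (t : ℝ) => (t : ℂ) ^ (a - 1) * (cexp (-(c * t)) * (-t)))
      (x₀ := c0) (s := Metric.ball c0 (c0.re / 2))
      (bound := fun t : ℝ => t ^ ((a.re + 1) - 1) * Real.exp (-(c0.re / 2 * t)))
      (Metric.ball_mem_nhds _ (by linarith)) ?_ (hz_integrable ha hc0) ?_ ?_
      (hz_real_integrable (by linarith) (by linarith)) ?_
    · exact key.2.differentiableAt.differentiableWithinAt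
    · exact Eventually.of_forall fun c =>
        (hz_meas a c).aestronglyMeasurable measurableSet_Ioi
    · have : ContinuousOn (fun t : ℝ => (t : ℂ) ^ (a - 1) * cexp (-(c0 * t)) * (-t)) (Ioi 0) :=
        (hz_meas a c0).mul (by fun_prop)
      refine ContinuousOn.aestronglyMeasurable ?_ measurableSet_Ioi
      simpa only [mul_assoc] using this
    · filter_upwards [ae_restrict_mem measurableSet_Ioi] with t ht c hc
      have ht' : 0 < t := ht
      rw [← mul_assoc, norm_mul, hz_norm_term ht, norm_neg, Complex.norm_real, Real.norm_of_nonneg ht'.le]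
      have hre : c0.re / 2 ≤ c.re := by
        have h1 : ‖c - c0‖ < c0.re / 2 := by simpa [dist_eq_norm] using hc
        have h2 := Complex.abs_re_le_norm (c - c0)
        rw [Complex.sub_re] at h2
        have := (abs_le.1 (h2.trans h1.le)).1
        linarith
      rw [show a.re + 1 - 1 = (a.re - 1) + 1 by ring, Real.rpow_add_one ht'.ne']
      rw [mul_right_comm]
      gcongr
    · refine Eventually.of_forall fun t c _ => ?_
      have : HasDerivAt (fun c : ℂ => -(c * t)) (-(t:ℂ)) c := by
        simpa using ((hasDerivAt_id c).mul_const (t:ℂ)).fun_neg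
      exact (this.cexp).const_mul _
  have hgd : DifferentiableOn ℂ g U := by
    intro c0 hc0
    refine DifferentiableAt.differentiableWithinAt ?_
    refine DifferentiableAt.mul_const ?_ _
    exact DifferentiableAt.cpow_const differentiableAt_id (Or.inl hc0)
  have h1U : (1 : ℂ) ∈ U := by simp [hU]
  refine (hfd.analyticOnNhd hUo).eqOn_of_preconnected_of_frequently_eq (hgd.analyticOnNhd hUo) hUc
    h1U ?_ hc
  have hreal : ∀ x : ℝ, 0 < x → f x = g x := by
    intro x hx
    have := Complex.integral_cpow_mul_exp_neg_mul_Ioi ha hx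
    simp only [hf, hg]
    rw [this, one_div, Complex.inv_cpow _ _ (by
      rw [Complex.arg_ofReal_of_nonneg hx.le]; exact Real.pi_pos.ne), Complex.cpow_neg]
  have ht : Tendsto (fun x : ℝ => (x : ℂ)) (𝓝[>] 1) (𝓝[≠] 1) := by
    refine tendsto_nhdsWithin_iff.2 ⟨?_, ?_⟩
    · exact (Complex.continuous_ofReal.tendsto' (1:ℝ) (1:ℂ) (by simp)).mono_left nhdsWithin_le_nhds
    · filter_upwards [self_mem_nhdsWithin] with x hx
      have : x ≠ 1 := ne_of_gt hx
      simpa using this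
  refine ht.frequently (Eventually.frequently ?_)
  filter_upwards [self_mem_nhdsWithin] with x hx
  exact hreal x (lt_trans one_pos hx)

lemma hz_geom (d : ℂ) {t : ℝ} (ht : 0 < t) :
    HasSum (fun n : ℕ => cexp (-(((n : ℂ) + d) * t))) (cexp (-d * t) / (1 - cexp (-t))) := by
  have hn : ‖cexp (-(t : ℂ))‖ < 1 := by
    rw [Complex.norm_exp]; simpa using ht
  have := (hasSum_geometric_of_norm_lt_one hn).mul_left (cexp (-d * t))
  convert! this using 1
  funext n
  rw [← Complex.exp_nat_mul, ← Complex.exp_add]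
  congr 1; ring

noncomputable def hzTail (d : ℂ) : ℝ → ℂ :=
  indicator (Ioi (1 : ℝ)) (fun t : ℝ => cexp (-d * t) / (1 - cexp (-t)))

lemma hz_mellin_tail (d w : ℂ) : mellin (hzTail d) w =
    ∫ t : ℝ in Ioi 1, (t : ℂ) ^ (w - 1) * (cexp (-d * t) / (1 - cexp (-t))) := by
  have h : ∀ t : ℝ, (t : ℂ) ^ (w - 1) • hzTail d t = indicator (Ioi (1 : ℝ))
      (fun t : ℝ => (t : ℂ) ^ (w - 1) * (cexp (-d * t) / (1 - cexp (-t)))) t := by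
    intro t
    by_cases ht : t ∈ Ioi (1:ℝ) <;> simp [hzTail, indicator, ht]
  rw [mellin]
  simp_rw [h]
  rw [setIntegral_indicator measurableSet_Ioi]
  congr 2
  ext t; simp

lemma hz_low (M : ℝ) (a : ℕ → ℂ) (ha : ∀ n, ‖a n‖ ≤ M * (1 / 2) ^ n) (d w : ℂ) (hw : 1 < w.re)
    (hs : ∀ t : ℝ, 0 < t → t ≤ 1 →
      HasSum (fun n => a n * (t : ℂ) ^ n) (t * (cexp (-d * t) / (1 - cexp (-t))))) :
    ∫ t : ℝ in Ioc 0 1, (t : ℂ) ^ (w - 1) * (cexp (-d * t) / (1 - cexp (-t))) =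
      ∑' n : ℕ, a n / (w + n - 1) := by
  have hre : ∀ n : ℕ, -1 < (w + n - 2).re := by
    intro n; simp; have : (0:ℝ) ≤ n := by positivity
    linarith
  have hint : ∀ n : ℕ, IntegrableOn (fun t : ℝ => (t : ℂ) ^ (w + n - 2)) (Ioc 0 1) := fun n => by
    rw [← intervalIntegrable_iff_integrableOn_Ioc_of_le zero_le_one]
    exact intervalIntegral.intervalIntegrable_cpow' (hre n)
  have hval : ∀ n : ℕ, ∫ t : ℝ in Ioc 0 1, (t : ℂ) ^ (w + n - 2) = 1 / (w + n - 1) := fun n => by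
    have hne : w + n - 2 + 1 ≠ 0 := by
      intro h
      have := congrArg Complex.re h
      have h2 := hre n
      rw [Complex.add_re, Complex.one_re, Complex.zero_re] at this
      linarith
    rw [← intervalIntegral.integral_of_le zero_le_one, integral_cpow (Or.inl (hre n))]
    simp only [ofReal_one, one_cpow, ofReal_zero]
    rw [zero_cpow hne]
    congr 1
    · simp
    · ring
  have hnorm : ∀ n : ℕ, ∫ t : ℝ in Ioc 0 1, ‖(t : ℂ) ^ (w + n - 2)‖ ≤ 1 / (w.re - 1) := fun n => by
    have h1 : ∫ t : ℝ in Ioc 0 1, ‖(t : ℂ) ^ (w + n - 2)‖ =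
        ∫ t : ℝ in Ioc 0 1, t ^ ((w + n - 2).re) :=
      setIntegral_congr_fun measurableSet_Ioc fun t ht =>
        Complex.norm_cpow_eq_rpow_re_of_pos ht.1 _
    have h2 := hre n
    rw [h1, ← intervalIntegral.integral_of_le zero_le_one, integral_rpow (Or.inl h2)]
    have h3 : (w + n - 2).re + 1 ≠ 0 := by linarith
    rw [Real.one_rpow, Real.zero_rpow h3, sub_zero]
    have h4 : w.re - 1 ≤ (w + n - 2).re + 1 := by
      simp; have : (0:ℝ) ≤ n := by positivity
      linarith
    exact one_div_le_one_div_of_le (by linarith) h4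
  have hsum := hasSum_integral_of_summable_integral_norm (μ := volume.restrict (Ioc (0:ℝ) 1))
    (F := fun (n : ℕ) (t : ℝ) => a n * (t : ℂ) ^ (w + n - 2)) (fun n => (hint n).const_mul _) ?_
  · simp_rw [integral_const_mul, hval, mul_one_div] at hsum
    rw [hsum.tsum_eq]
    refine setIntegral_congr_fun measurableSet_Ioc fun t ht => ?_
    have ht0 : (t : ℂ) ≠ 0 := by exact_mod_cast ht.1.ne'
    have h1 := (hs t ht.1 ht.2).mul_left ((t : ℂ) ^ (w - 2))
    have h2 : ∀ n : ℕ, (t : ℂ) ^ (w - 2) * (a n * (t : ℂ) ^ n) = a n * (t : ℂ) ^ (w + n - 2) := by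
      intro n
      rw [show w + n - 2 = (w - 2) + n by ring, Complex.cpow_add _ _ ht0, Complex.cpow_natCast]
      ring
    simp_rw [h2] at h1
    rw [h1.tsum_eq, show w - 1 = (w - 2) + 1 by ring, Complex.cpow_add _ _ ht0, Complex.cpow_one]
    ring
  · have hg : Summable (fun n : ℕ => M * (1 / 2 : ℝ) ^ n * (1 / (w.re - 1))) :=
      (summable_geometric_two.mul_left M).mul_right _
    refine Summable.of_nonneg_of_le (fun n => integral_nonneg fun _ => norm_nonneg _) (fun n => ?_) hg
    simp_rw [norm_mul]
    rw [integral_const_mul]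
    exact mul_le_mul (ha n) (hnorm n) (integral_nonneg fun _ => norm_nonneg _)
      ((norm_nonneg _).trans (ha n))

lemma hz_identity (M : ℝ) (a : ℕ → ℂ) (ha : ∀ n, ‖a n‖ ≤ M * (1 / 2) ^ n) (d w : ℂ)
    (hd : 0 < d.re) (hw : 1 < w.re)
    (hs : ∀ t : ℝ, 0 < t → t ≤ 1 →
      HasSum (fun n => a n * (t : ℂ) ^ n) (t * (cexp (-d * t) / (1 - cexp (-t))))) :
    (∑' n : ℕ, ((n : ℂ) + d) ^ (-w)) * Complex.Gamma w =
      ∑' n : ℕ, a n / (w + n - 1) + mellin (hzTail d) w := by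
  set F : ℕ → ℝ → ℂ := fun n t => (t : ℂ) ^ (w - 1) * cexp (-(((n : ℂ) + d) * t)) with hF
  have hre : ∀ n : ℕ, 0 < ((n : ℂ) + d).re := fun n => by simp; positivity
  have hw0 : 0 < w.re := by linarith
  have hint : ∀ n, IntegrableOn (F n) (Ioi 0) := fun n => hz_integrable hw0 (hre n)
  have hnorm : ∀ n, ∫ t in Ioi (0:ℝ), ‖F n t‖ = (1 / ((n : ℝ) + d.re)) ^ w.re * Real.Gamma w.re := by
    intro n
    have h := hre n
    rw [← Real.integral_rpow_mul_exp_neg_mul_Ioi hw0 (by simpa using h)]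
    refine setIntegral_congr_fun measurableSet_Ioi fun t ht => ?_
    simp only [hF]
    rw [hz_norm_term ht]; simp
  have hsm : Summable fun n => ∫ t in Ioi (0:ℝ), ‖F n t‖ := by
    simp_rw [hnorm]
    refine Summable.mul_right _ ?_
    refine ((Real.summable_one_div_nat_add_rpow d.re w.re).2 hw).congr fun n => ?_
    have : 0 < (n:ℝ) + d.re := by positivity
    rw [abs_of_pos this, Real.div_rpow zero_le_one this.le, Real.one_rpow]
  have hpart : ∀ S : Set ℝ, S ⊆ Ioi 0 → MeasurableSet S → HasSum (fun n => ∫ t in S, F n t)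
      (∫ t in S, (t : ℂ) ^ (w - 1) * (cexp (-d * t) / (1 - cexp (-t)))) := by
    intro S hS hSm
    have := hasSum_integral_of_summable_integral_norm (μ := volume.restrict S) (F := F)
      (fun n => (hint n).mono_set hS) ?_
    · convert! this using 1
      refine setIntegral_congr_fun hSm fun t ht => ?_
      exact ((hz_geom d (hS ht)).mul_left _).tsum_eq.symm
    · refine Summable.of_nonneg_of_le (fun n => integral_nonneg fun _ => norm_nonneg _) (fun n => ?_) hsm
      exact setIntegral_mono_set (hint n).norm (Eventually.of_forall fun _ => norm_nonneg _)
        (LE.le.eventuallyLE hS)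
  have h1 := hpart (Ioc 0 1) Ioc_subset_Ioi_self measurableSet_Ioc
  have h2 := hpart (Ioi 1) (Ioi_subset_Ioi zero_le_one) measurableSet_Ioi
  have h3 := h1.add h2
  rw [hz_low M a ha d w hw hs, ← hz_mellin_tail] at h3
  rw [← h3.tsum_eq, ← tsum_mul_right]
  refine tsum_congr fun n => ?_
  rw [← hz_gamma_int hw0 (hre n), ← setIntegral_union (Ioc_disjoint_Ioi le_rfl) measurableSet_Ioi
    ((hint n).mono_set Ioc_subset_Ioi_self) ((hint n).mono_set (Ioi_subset_Ioi zero_le_one)),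
    Ioc_union_Ioi_eq_Ioi zero_le_one]

lemma hz_tail_norm (d : ℂ) {t : ℝ} (ht : 1 < t) :
    ‖cexp (-d * t) / (1 - cexp (-t))‖ ≤ 2 * Real.exp (-(d.re * t)) := by
  have h1 : Real.exp (-t) ≤ 1 / 2 := by
    have h2 : (2:ℝ) ≤ Real.exp t := by linarith [Real.add_one_le_exp t]
    rw [Real.exp_neg, ← one_div]
    exact one_div_le_one_div_of_le (by norm_num) h2
  have h3 : 1 / 2 ≤ ‖1 - cexp (-t)‖ := by
    have h4 := norm_sub_norm_le (1 : ℂ) (cexp (-t))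
    rw [norm_one, Complex.norm_exp] at h4
    simp only [neg_re, ofReal_re] at h4
    linarith
  rw [norm_div, Complex.norm_exp]
  have h5 : (-d * (t:ℂ)).re = -(d.re * t) := by simp
  rw [h5, div_le_iff₀ (by linarith)]
  nlinarith [Real.exp_pos (-(d.re * t))]

lemma hz_tail_cont (d : ℂ) :
    ContinuousOn (fun t : ℝ => cexp (-d * t) / (1 - cexp (-t))) (Ioi 1) := by
  refine ContinuousOn.div (by fun_prop) (by fun_prop) fun t ht h => ?_
  have ht' : (1 : ℝ) < t := ht
  have h2 : cexp (-(t:ℂ)) = 1 := (sub_eq_zero.1 h).symm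
  have h3 := congrArg norm h2
  rw [Complex.norm_exp, norm_one] at h3
  simp at h3
  linarith

lemma hz_tail_diff (d : ℂ) (hd : 0 < d.re) : Differentiable ℂ (mellin (hzTail d)) := by
  intro w
  refine mellin_differentiableAt_of_isBigO_rpow_exp (a := d.re) (b := w.re - 1) hd ?_ ?_ ?_
    (by linarith)
  · have : IntegrableOn (fun t : ℝ => cexp (-d * t) / (1 - cexp (-t))) (Ioi 1) := by
      have hb := ((hz_real_integrable (x := 1) one_pos hd).mono_set
        (Ioi_subset_Ioi zero_le_one : Ioi (1:ℝ) ⊆ Ioi 0)).const_mul 2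
      refine Integrable.mono' hb ((hz_tail_cont d).aestronglyMeasurable measurableSet_Ioi) ?_
      filter_upwards [ae_restrict_mem measurableSet_Ioi] with t ht
      simpa using hz_tail_norm d ht
    have h2 : Integrable (hzTail d) := this.integrable_indicator measurableSet_Ioi
    exact h2.locallyIntegrable.locallyIntegrableOn _
  · refine Asymptotics.IsBigO.of_bound 2 ?_
    filter_upwards [eventually_gt_atTop 1] with t ht
    have hm : t ∈ Ioi (1:ℝ) := ht
    rw [hzTail, indicator_of_mem hm, Real.norm_of_nonneg (Real.exp_pos _).le]
    simpa using hz_tail_norm d ht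
  · refine Asymptotics.IsBigO.of_bound 1 ?_
    filter_upwards [Ioo_mem_nhdsGT (zero_lt_one' ℝ)] with t ht
    have hm : t ∉ Ioi (1:ℝ) := not_lt.2 ht.2.le
    rw [hzTail, indicator_of_notMem hm]
    simp

lemma hz_tail_bound (r : ℕ) (c : ℝ) (hc : 0 < c) : ∃ T : ℝ, 0 ≤ T ∧ ∀ d w : ℂ, c ≤ d.re →
    w.re ≤ r → ‖mellin (hzTail d) w‖ ≤ T := by
  refine ⟨∫ t in Ioi (1:ℝ), 2 * (t ^ (((r:ℝ) + 1) - 1) * Real.exp (-(c * t))), ?_, ?_⟩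
  · refine setIntegral_nonneg measurableSet_Ioi fun t ht => ?_
    have : (0:ℝ) < t := lt_trans one_pos ht
    positivity
  intro d w hd hw
  rw [hz_mellin_tail]
  refine norm_integral_le_of_norm_le (((hz_real_integrable (x := (r:ℝ) + 1) (by positivity) hc).mono_set
        (Ioi_subset_Ioi zero_le_one : Ioi (1:ℝ) ⊆ Ioi 0)).const_mul 2) ?_
  filter_upwards [ae_restrict_mem measurableSet_Ioi] with t ht
  have ht1 : (1:ℝ) < t := ht
  have ht0 : (0:ℝ) < t := lt_trans one_pos ht
  rw [norm_mul, Complex.norm_cpow_eq_rpow_re_of_pos ht0]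
  calc _ ≤ t ^ (((r:ℝ) + 1) - 1) * (2 * Real.exp (-(d.re * t))) := by
        gcongr
        · exact ht1.le
        · simp; linarith
        · exact hz_tail_norm d ht1
    _ ≤ t ^ (((r:ℝ) + 1) - 1) * (2 * Real.exp (-(c * t))) := by gcongr
    _ = _ := by ring

lemma hz_series_diff (M : ℝ) (a : ℕ → ℂ) (ha : ∀ n, ‖a n‖ ≤ M * (1 / 2) ^ n) :
    DifferentiableOn ℂ (fun w : ℂ => ∑' n : ℕ, a n / (w + n - 1)) (range ((↑) : ℤ → ℂ))ᶜ := by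
  intro w0 hw0
  have hopen : IsOpen (range ((↑) : ℤ → ℂ))ᶜ := Complex.isClosed_range_intCast.isOpen_compl
  obtain ⟨ε, hε, hb⟩ := Metric.isOpen_iff.1 hopen w0 hw0
  have hlow : ∀ w ∈ Metric.ball w0 (ε / 2), ∀ n : ℕ, ε / 2 ≤ ‖w + n - 1‖ := by
    intro w hw n
    have h1 : ‖w - w0‖ < ε / 2 := by simpa [dist_eq_norm] using hw
    have h2 : ε ≤ ‖w0 + n - 1‖ := by
      by_contra hcon
      push Not at hcon
      refine hb (a := ((1 - n : ℤ) : ℂ)) ?_ ⟨_, rfl⟩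
      rw [Metric.mem_ball, dist_comm, dist_eq_norm]
      have e : w0 - ((1 - n : ℤ) : ℂ) = w0 + n - 1 := by push_cast; ring
      rwa [e]
    have h3 : ‖w0 + n - 1‖ ≤ ‖w + n - 1‖ + ‖w - w0‖ := by
      rw [show w0 + n - 1 = (w + n - 1) - (w - w0) by ring]
      exact norm_sub_le _ _
    linarith
  have := Complex.differentiableOn_tsum_of_summable_norm
    (F := fun (n : ℕ) (w : ℂ) => a n / (w + n - 1)) (U := Metric.ball w0 (ε / 2))
    (u := fun n => M * (1 / 2 : ℝ) ^ n / (ε / 2)) ((summable_geometric_two.mul_left M).div_const _)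
    (fun n => ?_) Metric.isOpen_ball (fun n w hw => ?_)
  · exact ((this w0 (Metric.mem_ball_self (by linarith))).differentiableAt
      (Metric.ball_mem_nhds _ (by linarith))).differentiableWithinAt
  · refine DifferentiableOn.div (by fun_prop) (by fun_prop) fun w hw h => ?_
    have := hlow w hw n
    rw [h, norm_zero] at this
    linarith
  · rw [norm_div]
    have h1 := hlow w hw n
    have h2 := ha n
    have h3 : 0 ≤ M * (1 / 2 : ℝ) ^ n := (norm_nonneg _).trans h2
    gcongr

lemma hz_Z_eq (M : ℝ) (a : ℕ → ℂ) (ha : ∀ n, ‖a n‖ ≤ M * (1 / 2) ^ n) (d : ℂ)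
    (hd : 0 < d.re)
    (hs : ∀ t : ℝ, 0 < t → t ≤ 1 →
      HasSum (fun n => a n * (t : ℂ) ^ n) (t * (cexp (-d * t) / (1 - cexp (-t)))))
    (Z : ℂ → ℂ) (hZ : ∀ w : ℂ, 1 < w.re → Z w = ∑' n : ℕ, ((n : ℂ) + d) ^ (-w))
    (hZd : DifferentiableOn ℂ Z {w : ℂ | w ≠ 1}) (w : ℂ) (hw : w ∈ (range ((↑) : ℤ → ℂ))ᶜ) :
    Z w = (Complex.Gamma w)⁻¹ * (∑' n : ℕ, a n / (w + n - 1) + mellin (hzTail d) w) := by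
  have hopen : IsOpen (range ((↑) : ℤ → ℂ))ᶜ := Complex.isClosed_range_intCast.isOpen_compl
  have hconn : IsPreconnected (range ((↑) : ℤ → ℂ))ᶜ :=
    ((countable_range _).isPathConnected_compl_of_one_lt_rank (by simp)).isConnected.isPreconnected
  have h1 : AnalyticOnNhd ℂ Z (range ((↑) : ℤ → ℂ))ᶜ := by
    refine (hZd.mono ?_).analyticOnNhd hopen
    rintro z hz rfl
    exact hz ⟨1, by simp⟩
  have h2 : AnalyticOnNhd ℂ (fun w => (Complex.Gamma w)⁻¹ *
      (∑' n : ℕ, a n / (w + n - 1) + mellin (hzTail d) w)) (range ((↑) : ℤ → ℂ))ᶜ := by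
    refine DifferentiableOn.analyticOnNhd ?_ hopen
    exact Complex.differentiable_one_div_Gamma.differentiableOn.mul
      ((hz_series_diff M a ha).add (hz_tail_diff d hd).differentiableOn)
  have h3 : (2 + I : ℂ) ∈ (range ((↑) : ℤ → ℂ))ᶜ := by
    rintro ⟨n, hn⟩
    have := congrArg Complex.im hn
    simp at this
  refine h1.eqOn_of_preconnected_of_eventuallyEq h2 hconn h3 ?_ hw
  filter_upwards [(isOpen_lt continuous_const Complex.continuous_re).mem_nhds
    (show (2 + I : ℂ) ∈ {z : ℂ | 1 < z.re} by simp)] with z hz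
  have hz' : 1 < z.re := hz
  have hg : Complex.Gamma z ≠ 0 := Complex.Gamma_ne_zero_of_re_pos (by linarith)
  rw [← hz_identity M a ha d z hd hz hs, hZ z hz, mul_comm, mul_assoc, mul_inv_cancel₀ hg, mul_one]

lemma hz_core (δ : ℝ) (hδ : 0 < δ) (hδ1 : δ ≤ 1 / 2) (r : ℕ) (r' : ℝ) (hr' : 1 < r') :
    ∃ C : ℝ, 0 ≤ C ∧ ∀ d : ℂ, 1 / r' ≤ d.re → ‖d‖ ≤ r' →
      ∀ Z : ℂ → ℂ,
        (∀ w : ℂ, 1 < w.re → Z w = ∑' n : ℕ, ((n : ℂ) + d) ^ (-w)) →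
        DifferentiableOn ℂ Z {w : ℂ | w ≠ 1} →
      ∀ s : ℂ, ‖s‖ ≤ r → ∀ k : ℕ, δ ≤ ‖s - k - 1‖ → s - k ∈ (range ((↑) : ℤ → ℂ))ᶜ →
        ‖Z (s - k)‖ ≤ C * (k + r + 1).factorial := by
  obtain ⟨Mg, hMg1, hMg⟩ := hz_gamma_bdd (r + 2)
  obtain ⟨M, hM0, hM⟩ := hz_series r'
  have hc : 0 < 1 / r' := by positivity
  obtain ⟨T, hT0, hT⟩ := hz_tail_bound r (1 / r') hc
  refine ⟨2 * M * (Mg / δ) + Mg * T, by positivity, ?_⟩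
  intro d hd hdn Z hZ hZd s hs k hk hU
  obtain ⟨a, ha, has⟩ := hM d hdn
  rw [hz_Z_eq M a ha d (lt_of_lt_of_le hc hd) has Z hZ hZd _ hU, mul_add, ← tsum_mul_left, add_mul]
  refine (norm_add_le _ _).trans (add_le_add ?_ ?_)
  · have hsum : HasSum (fun n : ℕ => M * (1 / 2 : ℝ) ^ n * (Mg / δ * (k + r + 1).factorial))
        (M * 2 * (Mg / δ * (k + r + 1).factorial)) :=
      (hasSum_geometric_two.mul_left M).mul_right _
    refine (tsum_of_norm_bounded hsum fun n => ?_).trans (le_of_eq (by ring))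
    have hne : s - k + n - 1 ≠ 0 := by
      intro h
      refine hU ⟨1 - n, ?_⟩
      push_cast
      linear_combination -h
    have h1 := hz_gamma_two r Mg hMg δ hδ hδ1 s hs k hk n hne
    rw [show ∀ x y z : ℂ, x * (y / z) = y * (x / z) by intros; ring, norm_mul]
    exact mul_le_mul (ha n) h1 (norm_nonneg _) (by positivity)
  · rw [norm_mul]
    have hre : (s - k).re ≤ r := by
      have := (Complex.re_le_norm s).trans hs
      have hk0 : (0:ℝ) ≤ k := by positivity
      simp; linarith
    have h1 := hz_gamma_one r Mg hMg s hs k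
    have hf : ((k + r).factorial : ℝ) ≤ (k + r + 1).factorial := by
      exact_mod_cast Nat.factorial_le (by omega)
    calc _ ≤ (Mg * (k + r).factorial) * T :=
          mul_le_mul h1 (hT d _ hd hre) (norm_nonneg _) (by positivity)
      _ ≤ (Mg * (k + r + 1).factorial) * T := by gcongr
      _ = _ := by ring

lemma hz_full (δ : ℝ) (hδ : 0 < δ) (r : ℕ) (hr : 0 < r) (r' : ℝ) (hr' : 1 < r') :
    ∃ C : ℝ, 0 ≤ C ∧ ∀ d : ℂ, 1 / r' ≤ d.re → ‖d‖ ≤ r' →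
      ∀ Z : ℂ → ℂ,
        (∀ w : ℂ, 1 < w.re → Z w = ∑' n : ℕ, ((n : ℂ) + d) ^ (-w)) →
        DifferentiableOn ℂ Z {w : ℂ | w ≠ 1} →
      ∀ s : ℂ, ‖s‖ ≤ r → (∀ n : ℕ, δ ≤ ‖s - ((n : ℂ) + 1)‖) → ∀ k : ℕ,
        ‖Z (s - k)‖ ≤ C * (k + r + 1).factorial := by
  obtain ⟨C, hC0, hC⟩ := hz_core (min δ (1 / 2)) (by positivity) (min_le_right _ _) r r' hr'
  refine ⟨C, hC0, fun d hd hdn Z hZ hZd s hs hδs k => ?_⟩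
  have hkd : δ ≤ ‖s - k - 1‖ := by
    have := hδs k
    rwa [← sub_sub] at this
  by_cases hU : s - k ∈ (range ((↑) : ℤ → ℂ))ᶜ
  · exact hC d hd hdn Z hZ hZd s hs k ((min_le_left _ _).trans hkd) hU
  have hU' : s - k ∈ range ((↑) : ℤ → ℂ) := not_not.1 hU
  obtain ⟨m, hm⟩ := hU'
  obtain ⟨j, hj⟩ : ∃ j : ℤ, s = j := ⟨m + k, by push_cast; rw [hm]; ring⟩
  have hj0 : j ≤ 0 := by
    by_contra hcon
    push Not at hcon
    have := hδs (j - 1).toNat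
    have h2 : (((j - 1).toNat : ℕ) : ℂ) = (j : ℂ) - 1 := by
      have : (((j - 1).toNat : ℕ) : ℤ) = j - 1 := Int.toNat_of_nonneg (by omega)
      have h3 := congrArg (Int.cast : ℤ → ℂ) this
      push_cast at h3
      exact h3
    rw [h2, hj] at this
    simp at this
    linarith
  have hne : s - k ≠ 1 := by
    intro h
    rw [h, sub_self, norm_zero] at hkd
    linarith
  have hcont : ContinuousAt Z (s - k) :=
    (hZd.differentiableAt (isOpen_ne.mem_nhds hne)).continuousAt
  have hlim : Tendsto (fun ε : ℝ => ‖Z (s + ε - k)‖) (𝓝[>] 0) (𝓝 ‖Z (s - k)‖) := by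
    have h1 : Tendsto (fun ε : ℝ => s + (ε : ℂ) - k) (𝓝[>] 0) (𝓝 (s - k)) := by
      have : Continuous (fun ε : ℝ => s + (ε : ℂ) - k) := by fun_prop
      exact (this.tendsto' 0 _ (by simp)).mono_left nhdsWithin_le_nhds
    exact (hcont.tendsto.comp h1).norm
  refine le_of_tendsto hlim ?_
  filter_upwards [Ioo_mem_nhdsGT (show (0:ℝ) < 1 / 2 by norm_num)] with ε hε
  have hε0 := hε.1
  have hε1 := hε.2
  have hjR : (j : ℝ) ≤ 0 := by exact_mod_cast hj0
  refine hC d hd hdn Z hZ hZd (s + ε) ?_ k ?_ ?_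
  · have e : s + (ε : ℂ) = ((j + ε : ℝ) : ℂ) := by rw [hj]; push_cast; ring
    rw [hj] at hs
    have hs' : |(j : ℝ)| ≤ r := by simpa using hs
    rw [e, Complex.norm_real, Real.norm_eq_abs, abs_le]
    have hr1 : (1 : ℝ) ≤ r := by exact_mod_cast hr
    have := (abs_le.1 hs').1
    constructor <;> linarith
  · refine (min_le_right _ _).trans ?_
    have e : s + (ε : ℂ) - k - 1 = ((j + ε - k - 1 : ℝ) : ℂ) := by rw [hj]; push_cast; ring
    rw [e, Complex.norm_real, Real.norm_eq_abs]
    refine le_trans ?_ (neg_le_abs _)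
    have : (0:ℝ) ≤ k := by positivity
    linarith
  · rintro ⟨n, hn⟩
    have h1 : ((n - j + k : ℤ) : ℂ) = ((ε : ℝ) : ℂ) := by
      push_cast; rw [hn, hj]; ring
    have h2 : ((n - j + k : ℤ) : ℝ) = ε := by exact_mod_cast h1
    rw [← h2] at hε0 hε1
    have h3 : (0 : ℤ) < n - j + k := by exact_mod_cast hε0
    have h4 : ((n - j + k : ℤ) : ℝ) < ((1 : ℤ) : ℝ) := by
      rw [Int.cast_one]; linarith
    have h5 : n - j + k < 1 := by exact_mod_cast h4
    omega

end

/-- Uniform bound on the Hurwitz zeta function `Z(s-k)` (with `Z` the analytic continuation of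
`w ↦ Σ_n (n+d)^{-w}`) for `d` in `{Re d ≥ 1/r'} ∩ {|d| ≤ r'}`, `|s| ≤ r` at distance `≥ δ` from
the positive integers, and all `k ∈ ℕ`:
`|Z(s-k)| ≤ C · (e²/2π)^k · k! · (k+1)^{r+1} · (1 + r'^{2k})` with `C = C(r, r', δ)`. -/
theorem hurwitz_zeta_shift_bound (δ : ℝ) (hδ : 0 < δ) (r : ℕ) (hr : 0 < r)
    (r' : ℝ) (hr' : 1 < r') :
    ∃ C : ℝ, ∀ d : ℂ, 1 / r' ≤ d.re → ‖d‖ ≤ r' →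
      ∀ Z : ℂ → ℂ,
        (∀ w : ℂ, 1 < w.re → Z w = ∑' n : ℕ, ((n : ℂ) + d) ^ (-w)) →
        DifferentiableOn ℂ Z {w : ℂ | w ≠ 1} →
      ∀ s : ℂ, ‖s‖ ≤ r → (∀ n : ℕ, δ ≤ ‖s - ((n : ℂ) + 1)‖) →
      ∀ k : ℕ,
        ‖Z (s - k)‖ ≤ C * (Real.exp 1 ^ 2 / (2 * Real.pi)) ^ k * (k.factorial : ℝ)
          * ((k : ℝ) + 1) ^ (r + 1) * (1 + r' ^ (2 * k)) := by

  obtain ⟨C, hC0, hC⟩ := hz_full δ hδ r hr r' hr'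
  refine ⟨C * (r + 1).factorial, fun d hd hdn Z hZ hZd s hs hδs k => ?_⟩
  refine (hC d hd hdn Z hZ hZd s hs hδs k).trans ?_
  have hf := hz_fact k (r + 1)
  rw [← add_assoc] at hf
  have he : 1 ≤ (Real.exp 1 ^ 2 / (2 * Real.pi)) ^ k := by
    apply one_le_pow₀
    rw [one_le_div (by positivity)]
    have h1 := Real.exp_one_gt_d9
    have h2 := Real.pi_lt_d2
    nlinarith
  have hr1 : 1 ≤ 1 + r' ^ (2 * k) := by
    have : 0 ≤ r' ^ (2 * k) := by positivity
    linarith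
  calc C * (k + r + 1).factorial
      ≤ C * ((r + 1).factorial * k.factorial * ((k:ℝ) + 1) ^ (r + 1)) := by gcongr
    _ = C * (r + 1).factorial * 1 * k.factorial * ((k:ℝ) + 1) ^ (r + 1) * 1 := by ring
    _ ≤ _ := by gcongr
end

section
/- Let P ≥ 1 be an integer, R = (R_1,...,R_P) nonnegative integers, d = (d_1,...,d_P) complex numbers with positive real parts, and y an integer. Then Σ_{n ∈ ℕ_0^P, |n| = y} ∏_{p=1}^P (n_p + d_p)^{R_p} + (-1)^{P-1} Σ_{n ∈ ℤ_{≤ -1}^P, |n| = y} ∏_{p=1}^P (n_p + d_p)^{R_p} = Σ_{𝒫 ⊊ [1,P]} ∏_{p ∈ 𝒫^c} R_p! · Σ_{k ∈ ℕ_0^𝒫, k' ∈ ℕ_0, |k| + k' = |R|_{𝒫^c} + |𝒫^c| - 1} ((|d| + y)^{k'}/k'!) · ∏_{p ∈ 𝒫} (-1)^{k_p} ζ(-R_p - k_p, d_p)/k_p!. -/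
open Finset
open scoped Classical

namespace GFI
open PowerSeries

/-- derivative on Laurent series -/
noncomputable abbrev LD : LaurentSeries ℂ →ₗ[ℂ] LaurentSeries ℂ := LaurentSeries.hasseDeriv ℂ 1

lemma LD_coeff (f : LaurentSeries ℂ) (n : ℤ) :
    (LD f).coeff n = ((n : ℂ) + 1) * f.coeff (n + 1) := by
  simp [LaurentSeries.hasseDeriv_coeff]

noncomputable abbrev mon (a : ℤ) : LaurentSeries ℂ := HahnSeries.single a (1 : ℂ)

lemma mon_mul_coeff (a : ℤ) (f : LaurentSeries ℂ) (n : ℤ) :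
    (mon a * f).coeff n = f.coeff (n - a) := by
  have := HahnSeries.coeff_single_mul_add (r := (1 : ℂ)) (x := f) (a := n - a) (b := a)
  simpa using this

lemma mon_mul_mon (a b : ℤ) : mon a * mon b = mon (a + b) := by
  simp [mon, HahnSeries.single_mul_single]

lemma LD_mon_mul (a : ℤ) (f : LaurentSeries ℂ) :
    LD (mon a * f) = HahnSeries.C (a : ℂ) * (mon (a - 1) * f) + mon a * LD f := by
  ext n
  rw [LD_coeff, mon_mul_coeff, HahnSeries.coeff_add, HahnSeries.C_mul_eq_smul,
    HahnSeries.coeff_smul, mon_mul_coeff, mon_mul_coeff, LD_coeff]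
  rw [show n - (a - 1) = n + 1 - a by ring, show n - a + 1 = n + 1 - a by ring]
  push_cast
  simp only [smul_eq_mul]
  ring

noncomputable abbrev ops : ℂ⟦X⟧ →+* LaurentSeries ℂ := HahnSeries.ofPowerSeries ℤ ℂ

lemma ops_coeff_nat (f : ℂ⟦X⟧) (n : ℕ) : (ops f).coeff (n : ℤ) = coeff n f :=
  HahnSeries.ofPowerSeries_apply_coeff f n

lemma ops_coeff_neg (f : ℂ⟦X⟧) (n : ℤ) (hn : n < 0) : (ops f).coeff n = 0 := by
  have := PowerSeries.coeff_coe (f := f) n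
  rw [if_pos hn] at this
  exact this

lemma LD_ops (f : ℂ⟦X⟧) : LD (ops f) = ops (d⁄dX ℂ f) := by
  ext n
  rw [LD_coeff]
  rcases lt_or_ge n 0 with h | h
  · rw [ops_coeff_neg _ _ h]
    rcases lt_or_ge (n + 1) 0 with h' | h'
    · rw [ops_coeff_neg _ _ h']; simp
    · obtain rfl : n = -1 := by omega
      simp
  · lift n to ℕ using h
    rw [ops_coeff_nat, show ((n : ℤ) + 1) = ((n + 1 : ℕ) : ℤ) by simp, ops_coeff_nat,
      PowerSeries.coeff_derivative]
    push_cast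
    ring

lemma exists_mon_ops (f : LaurentSeries ℂ) : ∃ a g, f = mon a * ops g :=
  ⟨f.order, f.powerSeriesPart, (LaurentSeries.single_order_mul_powerSeriesPart f).symm⟩

lemma LD_mul (f g : LaurentSeries ℂ) : LD (f * g) = f * LD g + g * LD f := by
  obtain ⟨a, f, rfl⟩ := exists_mon_ops f
  obtain ⟨b, g, rfl⟩ := exists_mon_ops g
  have h1 : mon a * ops f * (mon b * ops g) = mon (a + b) * ops (f * g) := by
    rw [← mon_mul_mon, map_mul]; ring
  rw [h1, LD_mon_mul, LD_mon_mul, LD_mon_mul, LD_ops, LD_ops, LD_ops]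
  have h2 : mon (a + b - 1) = mon a * mon (b - 1) := by rw [mon_mul_mon]; congr 1; ring
  have h3 : mon a * mon (b - 1) = mon (a - 1) * mon b := by
    rw [mon_mul_mon, mon_mul_mon]; congr 1; ring
  rw [Derivation.leibniz]
  simp only [smul_eq_mul, map_mul, map_add, Int.cast_add]
  rw [h2, ← mon_mul_mon]
  linear_combination (HahnSeries.C (a:ℂ) * ops f * ops g) * h3

lemma LD_C_mul (c : ℂ) (f : LaurentSeries ℂ) : LD (HahnSeries.C c * f) = HahnSeries.C c * LD f := by
  ext n
  simp only [LD_coeff, HahnSeries.C_mul_eq_smul, HahnSeries.coeff_smul, smul_eq_mul]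
  ring

lemma LD_C (c : ℂ) : LD (HahnSeries.C c) = 0 := by
  ext n
  rw [LD_coeff, HahnSeries.C_apply]
  by_cases h : n + 1 = 0
  · have : (n : ℂ) + 1 = 0 := by exact_mod_cast h
    simp [this]
  · rw [HahnSeries.coeff_single_of_ne h]; simp

/-- chain rule for polynomials in an element -/
lemma chain {A : Type*} [CommRing A] (i : ℂ →+* A) (v : A) (δ : A →+ A)
    (hδ : ∀ f g, δ (f * g) = f * δ g + g * δ f) (hi : ∀ c, δ (i c) = 0)
    (q : Polynomial ℂ) :
    δ (q.eval₂ i v) = (Polynomial.derivative q).eval₂ i v * δ v := by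
  have h1 : δ 1 = 0 := by simpa using hi 1
  have hp : ∀ n : ℕ, δ (v ^ n) = n * v ^ (n - 1) * δ v := by
    intro n
    induction n with
    | zero => simp [h1]
    | succ n ih =>
      rw [pow_succ, hδ, ih]
      rcases n with _ | n
      · simp
      · push_cast; ring
  induction q using Polynomial.induction_on' with
  | add p q hp hq => simp [hp, hq, add_mul]
  | monomial n a =>
    rw [Polynomial.eval₂_monomial, hδ, hi, hp, Polynomial.derivative_monomial,
      Polynomial.eval₂_monomial]
    simp; ring

noncomputable def ex (a : ℂ) : LaurentSeries ℂ := ops (rescale a (exp ℂ))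

lemma ex_add (a b : ℂ) : ex (a + b) = ex a * ex b := by
  rw [ex, ex, ex, ← map_mul, PowerSeries.exp_mul_exp_eq_exp_add]

lemma ex_zero : ex 0 = 1 := by
  simp [ex]

lemma LD_ex (a : ℂ) : LD (ex a) = HahnSeries.C a * ex a := by
  rw [ex, LD_ops, HahnSeries.C_mul_eq_smul]
  ext n
  rcases lt_or_ge n 0 with h | h
  · simp [ops_coeff_neg _ _ h]
  · lift n to ℕ using h
    rw [HahnSeries.coeff_smul, ops_coeff_nat, ops_coeff_nat, PowerSeries.coeff_derivative]
    simp only [coeff_rescale, coeff_exp, smul_eq_mul]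
    rw [Nat.factorial_succ, pow_succ]
    have : ((n.factorial : ℕ) : ℂ) ≠ 0 := by exact_mod_cast n.factorial_ne_zero
    have : (n : ℂ) + 1 ≠ 0 := by exact_mod_cast n.succ_ne_zero
    simp
    field_simp

/-- Bernoulli type series -/
noncomputable def CB (x : ℂ) : ℂ⟦X⟧ :=
  rescale (-1) (PowerSeries.mk fun n => Polynomial.aeval x ((1 / n.factorial : ℚ) • Polynomial.bernoulli n))

lemma CB_eq (x : ℂ) :
    CB x * (1 - rescale (-1) (exp ℂ)) = X * rescale (-x) (exp ℂ) := by
  have h := congrArg (rescale (-1 : ℂ)) (Polynomial.bernoulli_generating_function x)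
  rw [map_mul, map_mul, map_sub, map_one, rescale_rescale, rescale_X] at h
  rw [CB]
  simp only [mul_neg, mul_one, map_neg, map_one] at h
  linear_combination (-1 : ℂ⟦X⟧) * h

lemma CB_zero (x : ℂ) : coeff 0 (CB x) = 1 := by
  have h := congrArg (coeff 1) (CB_eq x)
  rw [PowerSeries.coeff_mul] at h
  simp [Finset.Nat.antidiagonal_succ, coeff_rescale] at h
  simpa using h

noncomputable def uu : LaurentSeries ℂ := 1 - ex (-1)
noncomputable def UU : LaurentSeries ℂ := uu⁻¹

lemma ops_CB (x : ℂ) : ops (CB x) * uu = mon 1 * ex (-x) := by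
  have := congrArg ops (CB_eq x)
  rw [map_mul, map_mul, map_sub, map_one, HahnSeries.ofPowerSeries_X] at this
  exact this

lemma uu_ne : uu ≠ 0 := by
  intro h
  have h1 := ops_CB 0
  rw [h, neg_zero, ex_zero] at h1
  have h2 := congrArg (fun f => HahnSeries.coeff f 1) h1
  simp [mon] at h2

lemma uU : uu * UU = 1 := mul_inv_cancel₀ uu_ne

lemma ex_neg_one : ex (-1) = 1 - uu := by simp [uu]

lemma LD_one : LD 1 = 0 := by simpa using LD_C 1

lemma LD_UU : LD UU = UU - UU ^ 2 := by
  have h := congrArg LD uU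
  rw [LD_mul, LD_one] at h
  have h2 : LD uu = 1 - uu := by
    rw [uu, map_sub, LD_one, LD_ex, ex_neg_one]; simp
  rw [h2] at h
  linear_combination UU * h - LD UU * uU + UU * uU

lemma UU_ex (d : ℂ) : UU * ex (-d) = mon (-1) * ops (CB d) := by
  have h := ops_CB d
  have h1 : mon (-1) * mon 1 = 1 := by rw [mon_mul_mon]; rfl
  linear_combination (-UU * mon (-1)) * h  + (mon (-1) * ops (CB d)) * uU - UU * ex (-d) * h1

/-- residue -/
noncomputable def rs (m : ℕ) (y : ℂ) : ℂ := (ex y * UU ^ m).coeff (-1)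

lemma rs_zero (y : ℂ) : rs 0 y = 0 := by
  rw [rs, pow_zero, mul_one, ex, ops_coeff_neg]; norm_num

lemma rs_rec (m : ℕ) (y : ℂ) : rs (m + 1) y - rs (m + 1) (y - 1) = rs m y := by
  rw [rs, rs, rs, ← HahnSeries.coeff_sub]
  congr 1
  rw [sub_eq_add_neg y, ex_add, ex_neg_one, pow_succ]
  linear_combination (ex y * UU ^ m) * uU

lemma rs_one_zero : rs 1 0 = 1 := by
  have := UU_ex 0
  rw [neg_zero, mul_comm] at this
  rw [rs, pow_one, this, mon_mul_coeff, show (-1 : ℤ) - (-1) = ((0 : ℕ) : ℤ) by norm_num,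
    ops_coeff_nat, CB_zero]

lemma LD_UU_pow (m : ℕ) : LD (UU ^ (m + 1)) = HahnSeries.C ((m : ℂ) + 1) * (UU ^ m * (UU - UU ^ 2)) := by
  have := chain HahnSeries.C UU LD.toAddMonoidHom LD_mul LD_C (Polynomial.X ^ (m + 1))
  simp only [Polynomial.eval₂_X_pow, LinearMap.toAddMonoidHom_coe, LD_UU] at this
  rw [this, Polynomial.derivative_X_pow]
  rw [Polynomial.eval₂_mul, Polynomial.eval₂_C, Polynomial.eval₂_X_pow, mul_assoc,
    Nat.add_sub_cancel, Nat.cast_add, Nat.cast_one]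

lemma rs_neg_one (m : ℕ) : rs (m + 2) (-1) = 0 := by
  have h := congrArg (fun f => HahnSeries.coeff f (-1)) (LD_UU_pow m)
  simp only [LD_coeff, HahnSeries.C_mul_eq_smul, HahnSeries.coeff_smul, smul_eq_mul] at h
  have h2 : ex (-1) * UU ^ (m + 2) = - (UU ^ m * (UU - UU ^ 2)) := by
    rw [ex_neg_one]
    linear_combination (-UU ^ (m + 1)) * uU
  rw [rs, h2, HahnSeries.coeff_neg]
  have h3 : (m : ℂ) + 1 ≠ 0 := by exact_mod_cast m.succ_ne_zero
  simp at h
  rcases h with h | h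
  · exact absurd h h3
  · rw [neg_eq_zero]; simpa using h

noncomputable def Vp : ℂ⟦X⟧ := PowerSeries.mk fun _ => 1
noncomputable def Vm : ℂ⟦X⟧ := 1 - Vp

lemma Vp_eq : Vp * (1 - X) = 1 := PowerSeries.mk_one_mul_one_sub_eq_one ℂ

noncomputable def LL (f g : ℂ⟦X⟧) (y : ℤ) : ℂ :=
  if 0 ≤ y then coeff y.toNat f else - coeff (-y).toNat g

lemma LL_nat (f g : ℂ⟦X⟧) (n : ℕ) : LL f g n = coeff n f := by simp [LL]
lemma LL_neg (f g : ℂ⟦X⟧) (n : ℕ) : LL f g (-((n : ℤ) + 1)) = - coeff (n + 1) g := by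
  rw [LL, if_neg (by omega)]
  congr 2

lemma Vm_pow_zero (m : ℕ) : coeff 0 (Vm ^ (m + 1)) = 0 := by
  simp [Vm, Vp]

lemma Vm_pow_one (m : ℕ) : coeff 1 (Vm ^ (m + 2)) = 0 := by
  have hVm : Vm = X * (-Vp) := by
    have := Vp_eq
    rw [Vm]; linear_combination -this
  rw [hVm, mul_pow, show m + 2 = (m + 1) + 1 by ring, pow_succ, mul_comm (X ^ (m+1)), mul_assoc,
    show (1 : ℕ) = 0 + 1 by rfl, coeff_succ_X_mul]
  simp

lemma rs_eq_LL (m : ℕ) (y : ℤ) : rs (m + 1) y = LL (Vp ^ (m + 1)) (Vm ^ (m + 1)) y := by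
  induction m generalizing y with
  | zero =>
    have h1 : ∀ y : ℂ, rs 1 y = rs 1 (y - 1) := fun y => by
      have := rs_rec 0 y
      rw [rs_zero] at this
      simpa [sub_eq_zero] using this
    have h2 : LL (Vp ^ (0 + 1)) (Vm ^ (0 + 1)) y = 1 := by
      rcases lt_or_ge y 0 with h | h
      · obtain ⟨n, rfl⟩ : ∃ n : ℕ, y = -((n : ℤ) + 1) := ⟨(-y - 1).toNat, by omega⟩
        rw [LL_neg]; simp [Vm, Vp, coeff_one]
      · lift y to ℕ using h
        rw [LL_nat]; simp [Vp]
    rw [h2, zero_add]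
    clear h2
    induction y using Int.induction_on with
    | zero => simpa using rs_one_zero
    | succ i ih =>
      rw [h1]; simpa using ih
    | pred i ih =>
      rw [← ih, h1 ((-(i : ℤ) : ℤ) : ℂ)]
      push_cast
      rfl
  | succ m ih =>
    have key : ∀ y : ℤ, LL (Vp ^ (m + 2)) (Vm ^ (m + 2)) y - LL (Vp ^ (m + 2)) (Vm ^ (m + 2)) (y - 1)
        = LL (Vp ^ (m + 1)) (Vm ^ (m + 1)) y := by
      intro y
      rcases lt_or_ge y 0 with h | h
      · obtain ⟨n, rfl⟩ : ∃ n : ℕ, y = -((n : ℤ) + 1) := ⟨(-y - 1).toNat, by omega⟩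
        rw [show -((n : ℤ) + 1) - 1 = -(((n + 1 : ℕ) : ℤ) + 1) by push_cast; ring,
          LL_neg, LL_neg, LL_neg]
        have : X * Vm ^ (m + 1) = X * Vm ^ (m + 2) - Vm ^ (m + 2) := by
          have := Vp_eq
          rw [Vm, pow_succ _ (m + 1)]; linear_combination (-(1 - Vp) ^ (m + 1)) * this
        have := congrArg (coeff (n + 2)) this
        rw [map_sub, show n + 2 = (n + 1) + 1 by ring, coeff_succ_X_mul, coeff_succ_X_mul] at this
        rw [this]; ring
      · obtain ⟨n, rfl | rfl⟩ : ∃ n : ℕ, y = 0 ∨ y = (n : ℤ) + 1 := ⟨(y - 1).toNat, by omega⟩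
        · have := LL_neg (Vp ^ (m + 2)) (Vm ^ (m + 2)) 0
          rw [zero_sub]
          simp only [Nat.cast_zero, zero_add] at this
          rw [this, Vm_pow_one]
          have h1 := LL_nat (Vp ^ (m + 2)) (Vm ^ (m + 2)) 0
          have h2 := LL_nat (Vp ^ (m + 1)) (Vm ^ (m + 1)) 0
          simp only [Nat.cast_zero] at h1 h2
          rw [h1, h2]; simp [Vp]
        · rw [show (n : ℤ) + 1 - 1 = n by ring, show (n : ℤ) + 1 = ((n + 1 : ℕ) : ℤ) by simp,
            LL_nat, LL_nat, LL_nat]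
          have : Vp ^ (m + 1) = Vp ^ (m + 2) - X * Vp ^ (m + 2) := by
            have := Vp_eq
            rw [pow_succ _ (m + 1)]; linear_combination (- Vp ^ (m + 1)) * this
          rw [this, map_sub, coeff_succ_X_mul]
    have base : rs (m + 2) ((-1 : ℤ) : ℂ) = LL (Vp ^ (m + 2)) (Vm ^ (m + 2)) (-1) := by
      have := LL_neg (Vp ^ (m + 2)) (Vm ^ (m + 2)) 0
      simp only [Nat.cast_zero, zero_add] at this
      rw [this, Vm_pow_one]
      push_cast
      rw [rs_neg_one]; simp
    have step : ∀ y : ℤ, rs (m + 2) y - LL (Vp ^ (m + 2)) (Vm ^ (m + 2)) y =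
        rs (m + 2) ((y - 1 : ℤ) : ℂ) - LL (Vp ^ (m + 2)) (Vm ^ (m + 2)) (y - 1) := by
      intro y
      have h1 := key y
      have h2 := rs_rec (m + 1) (y : ℂ)
      rw [ih y] at h2
      push_cast
      linear_combination h2 - h1
    have all : ∀ y : ℤ, rs (m + 2) y - LL (Vp ^ (m + 2)) (Vm ^ (m + 2)) y = 0 := by
      intro y
      induction y using Int.induction_on with
      | zero => rw [step, zero_sub, base]; simp
      | succ i ih => rw [step, add_sub_cancel_right]; exact ih
      | pred i ih => rw [← step]; exact ih
    exact sub_eq_zero.mp (all y)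

noncomputable def qq (d : ℂ) : ℕ → Polynomial ℂ
  | 0 => Polynomial.X
  | (R + 1) => Polynomial.C d * qq d R +
      (Polynomial.X ^ 2 - Polynomial.X) * Polynomial.derivative (qq d R)

lemma qq_zero (d : ℂ) (R : ℕ) : (qq d R).coeff 0 = 0 := by
  induction R with
  | zero => simp [qq]
  | succ R ih => simp [qq, ih, Polynomial.mul_coeff_zero]

lemma qq_eval {A : Type*} [CommRing A] (i : ℂ →+* A) (v : A) (δ : A →+ A)
    (hδ : ∀ f g, δ (f * g) = f * δ g + g * δ f) (hi : ∀ c, δ (i c) = 0)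
    (hv : δ v = v ^ 2 - v) (d : ℂ) (R : ℕ) :
    (qq d (R + 1)).eval₂ i v = i d * (qq d R).eval₂ i v + δ ((qq d R).eval₂ i v) := by
  rw [chain i v δ hδ hi, hv, qq]
  simp [Polynomial.eval₂_mul]
  ring

/-- `X * d/dX` -/
noncomputable def theta : ℂ⟦X⟧ →+ ℂ⟦X⟧ where
  toFun f := X * d⁄dX ℂ f
  map_zero' := by simp
  map_add' f g := by simp [mul_add]

lemma theta_apply (f : ℂ⟦X⟧) : theta f = X * d⁄dX ℂ f := rfl

lemma theta_coeff (f : ℂ⟦X⟧) (n : ℕ) : coeff n (theta f) = n * coeff n f := by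
  rw [theta_apply]
  cases n with
  | zero => simp
  | succ n => rw [coeff_succ_X_mul, coeff_derivative]; push_cast; ring

lemma theta_mul (f g : ℂ⟦X⟧) : theta (f * g) = f * theta g + g * theta f := by
  rw [theta_apply, theta_apply, theta_apply, Derivation.leibniz]
  simp only [smul_eq_mul]; ring

lemma theta_C (c : ℂ) : theta (PowerSeries.C c) = 0 := by simp [theta_apply]

lemma theta_Vp : theta Vp = Vp ^ 2 - Vp := by
  have h := congrArg theta Vp_eq
  have h1 : theta 1 = 0 := by simpa using theta_C 1
  have h2 : theta (1 - X) = -X := by rw [map_sub, h1, theta_apply]; simp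
  rw [theta_mul, h1, h2] at h
  linear_combination Vp * h - (theta Vp + Vp) * Vp_eq

lemma qq_plus (d : ℂ) (R n : ℕ) :
    coeff n ((qq d R).eval₂ (PowerSeries.C) Vp) = ((n : ℂ) + d) ^ R := by
  induction R with
  | zero => simp [qq, Vp]
  | succ R ih =>
    rw [qq_eval PowerSeries.C Vp theta theta_mul theta_C theta_Vp, map_add, coeff_C_mul,
      theta_coeff, ih]
    ring

lemma qq_minus (d : ℂ) (R n : ℕ) :
    coeff n ((qq d R).eval₂ (PowerSeries.C) Vm) = if n = 0 then 0 else -(d - n) ^ R := by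
  induction R with
  | zero =>
    simp only [qq, Polynomial.eval₂_X, Vm, Vp, map_sub, coeff_one, coeff_mk]
    split_ifs <;> simp
  | succ R ih =>
    rw [qq_eval PowerSeries.C Vm (-theta) _ _ _, map_add, coeff_C_mul, AddMonoidHom.neg_apply,
      map_neg, theta_coeff, ih]
    · split_ifs with h
      · simp
      · ring
    · intro f g
      simp only [AddMonoidHom.neg_apply, theta_mul]; ring
    · intro c
      simp [theta_C]
    · have h1 : theta 1 = 0 := by simpa using theta_C 1
      rw [AddMonoidHom.neg_apply, Vm, map_sub, h1, theta_Vp]; ring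

lemma qq_laurent_succ (d : ℂ) (R : ℕ) :
    (qq d (R + 1)).eval₂ HahnSeries.C UU * ex (-d) =
      - LD ((qq d R).eval₂ HahnSeries.C UU * ex (-d)) := by
  rw [qq_eval HahnSeries.C UU (-LD.toAddMonoidHom) _ _ _, LD_mul, LD_ex]
  · simp only [AddMonoidHom.neg_apply, LinearMap.toAddMonoidHom_coe, map_neg]; ring
  · intro f g
    simp only [AddMonoidHom.neg_apply, LinearMap.toAddMonoidHom_coe, LD_mul]; ring
  · intro c
    simp
  · simp only [AddMonoidHom.neg_apply, LinearMap.toAddMonoidHom_coe, LD_UU]; ring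

noncomputable def SS (d : ℂ) (z : ℂ → ℂ) (R : ℕ) : ℂ⟦X⟧ :=
  PowerSeries.mk fun k => (-1 : ℂ) ^ k * z (-(R : ℂ) - (k : ℂ)) / (k.factorial : ℂ)

lemma qq_laurent (d : ℂ) (z : ℂ → ℂ)
    (hz : ∀ k : ℕ, z (-(k : ℂ)) = (-1) ^ k * (k.factorial : ℂ) * coeff (k + 1) (CB d)) (R : ℕ) :
    (qq d R).eval₂ HahnSeries.C UU * ex (-d) =
      HahnSeries.single (-((R : ℤ) + 1)) (R.factorial : ℂ) + ops (SS d z R) := by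
  induction R with
  | zero =>
    rw [qq, Polynomial.eval₂_X, UU_ex]
    ext n
    rw [mon_mul_coeff, HahnSeries.coeff_add]
    rcases lt_or_ge n (-1) with h | h
    · rw [ops_coeff_neg _ _ (by omega), ops_coeff_neg _ _ (by omega),
        HahnSeries.coeff_single_of_ne (by push_cast; omega), add_zero]
    · obtain ⟨k, hk⟩ : ∃ k : ℕ, n = -1 ∨ n = k := ⟨n.toNat, by omega⟩
      rcases hk with rfl | rfl
      · rw [ops_coeff_neg _ (-1) (by omega)]
        have := ops_coeff_nat (CB d) 0
        rw [CB_zero] at this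
        simpa using this
      · rw [ops_coeff_nat, HahnSeries.coeff_single_of_ne (by push_cast; omega),
          show (k : ℤ) - -1 = ((k + 1 : ℕ) : ℤ) by push_cast; ring, ops_coeff_nat, SS, coeff_mk]
        have := hz k
        have h2 : ((k.factorial : ℕ) : ℂ) ≠ 0 := by exact_mod_cast k.factorial_ne_zero
        have h3 : ((-1 : ℂ) ^ k) * (-1) ^ k = 1 := by rw [← mul_pow]; simp
        simp only [Nat.cast_zero, neg_zero, zero_sub, this]
        field_simp
        linear_combination (-coeff (k + 1) (CB d)) * h3
  | succ R ih =>
    rw [qq_laurent_succ, ih]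
    ext n
    rw [HahnSeries.coeff_neg, LD_coeff, HahnSeries.coeff_add, HahnSeries.coeff_add]
    rcases lt_or_ge n 0 with h | h
    · rw [ops_coeff_neg _ _ h]
      have hh : ((n : ℂ) + 1) * (ops (SS d z R)).coeff (n + 1) = 0 := by
        by_cases h' : n = -1
        · subst h'; simp
        · rw [ops_coeff_neg _ _ (by omega), mul_zero]
      rw [mul_add, hh]
      by_cases h' : n = -((R : ℤ) + 1 + 1)
      · subst h'
        rw [show -((R : ℤ) + 1 + 1) + 1 = -((R : ℤ) + 1) by ring]
        simp [Nat.factorial_succ]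
        ring
      · rw [HahnSeries.coeff_single_of_ne (by omega), HahnSeries.coeff_single_of_ne (by push_cast; omega)]
        simp
    · lift n to ℕ using h
      rw [HahnSeries.coeff_single_of_ne (by omega), HahnSeries.coeff_single_of_ne (by push_cast; omega),
        show ((n : ℤ) + 1) = ((n + 1 : ℕ) : ℤ) by simp, ops_coeff_nat, ops_coeff_nat, SS, SS, coeff_mk,
        coeff_mk]
      have h2 : ((n.factorial : ℕ) : ℂ) ≠ 0 := by exact_mod_cast n.factorial_ne_zero
      have h3 : (n : ℂ) + 1 ≠ 0 := by exact_mod_cast n.succ_ne_zero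
      rw [Nat.factorial_succ, pow_succ]
      push_cast
      rw [show -(R : ℂ) - (n + 1) = -((R : ℂ) + 1) - n by ring]
      field_simp
      ring

lemma res_eq_LL (q : Polynomial ℂ) (hq : q.coeff 0 = 0) (y : ℤ) :
    (ex y * q.eval₂ HahnSeries.C UU).coeff (-1) =
      LL (q.eval₂ PowerSeries.C Vp) (q.eval₂ PowerSeries.C Vm) y := by
  have e1 : (ex y * q.eval₂ HahnSeries.C UU).coeff (-1) =
      ∑ m ∈ range (q.natDegree + 1), q.coeff m * rs m y := by
    rw [Polynomial.eval₂_eq_sum_range, Finset.mul_sum, HahnSeries.coeff_sum]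
    refine Finset.sum_congr rfl fun m _ => ?_
    rw [mul_left_comm, HahnSeries.C_mul_eq_smul, HahnSeries.coeff_smul, smul_eq_mul, rs]
  have e2 : LL (q.eval₂ PowerSeries.C Vp) (q.eval₂ PowerSeries.C Vm) y =
      ∑ m ∈ range (q.natDegree + 1), q.coeff m * LL (Vp ^ m) (Vm ^ m) y := by
    rw [Polynomial.eval₂_eq_sum_range, Polynomial.eval₂_eq_sum_range]
    unfold LL
    split_ifs <;> simp [coeff_C_mul]
  rw [e1, e2]
  refine Finset.sum_congr rfl fun m _ => ?_
  cases m with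
  | zero => simp [hq]
  | succ m => rw [rs_eq_LL]

/-- coefficient of a product as a `tsum` -/
lemma tsum_prod_eq {P : ℕ} (f : Fin P → ℕ → ℂ) (j : ℕ) (A : Finset (Fin P)) :
    (∑ n ∈ Finset.piAntidiag A j, ∏ p ∈ A, f p (n p)) =
      coeff j (∏ p ∈ A, PowerSeries.mk (f p)) := by
  rw [PowerSeries.coeff_prod]
  refine Finset.sum_nbij' (fun n => Finsupp.equivFunOnFinite.symm n) (fun l => ⇑l) ?_ ?_ ?_ ?_ ?_
  · intro n hn
    rw [Finset.mem_piAntidiag] at hn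
    rw [Finset.mem_finsuppAntidiag]
    refine ⟨hn.1, fun p hp => hn.2 p ?_⟩
    simpa using hp
  · intro l hl
    rw [Finset.mem_finsuppAntidiag] at hl
    rw [Finset.mem_piAntidiag]
    exact ⟨hl.1, fun p hp => hl.2 (by simpa using hp)⟩
  · intro n _; rfl
  · intro l _; ext; rfl
  · intro n _; simp

lemma tsum_univ {P : ℕ} (f : Fin P → ℕ → ℂ) (j : ℕ) :
    (∑' n : Fin P → ℕ, if (∑ p, n p) = j then ∏ p, f p (n p) else 0) =
      coeff j (∏ p, PowerSeries.mk (f p)) := by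
  rw [← tsum_prod_eq, tsum_eq_sum (s := Finset.piAntidiag univ j)]
  · refine Finset.sum_congr rfl fun n hn => ?_
    rw [Finset.mem_piAntidiag] at hn
    rw [if_pos hn.1]
  · intro n hn
    rw [if_neg]
    simpa [Finset.mem_piAntidiag] using hn

lemma tsum_pair {P : ℕ} (g : ℕ → ℂ) (f : Fin P → ℕ → ℂ) (N : ℕ) (A : Finset (Fin P)) :
    (∑' kk : (Fin P → ℕ) × ℕ, if (∀ p ∉ A, kk.1 p = 0) ∧ (∑ p ∈ A, kk.1 p) + kk.2 = N then
      g kk.2 * ∏ p ∈ A, f p (kk.1 p) else 0) =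
      coeff N (PowerSeries.mk g * ∏ p ∈ A, PowerSeries.mk (f p)) := by
  rw [PowerSeries.coeff_mul, tsum_eq_sum (s := (Finset.HasAntidiagonal.antidiagonal N).biUnion
    fun ij => (Finset.piAntidiag A ij.2) ×ˢ {ij.1}), Finset.sum_biUnion]
  · refine Finset.sum_congr rfl fun ij hij => ?_
    rw [Finset.HasAntidiagonal.mem_antidiagonal] at hij
    rw [Finset.sum_product, ← tsum_prod_eq, coeff_mk, Finset.mul_sum]
    refine Finset.sum_congr rfl fun n hn => ?_
    rw [Finset.mem_piAntidiag] at hn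
    rw [Finset.sum_singleton, if_pos]
    refine ⟨fun p hp => by_contra fun h => hp (hn.2 p h), ?_⟩
    simp only [hn.1]; omega
  · intro a ha b hb hab
    rw [Function.onFun, Finset.disjoint_left]
    rintro ⟨k, k'⟩ h1 h2
    simp only [Finset.mem_product, Finset.mem_singleton, Finset.mem_coe,
      Finset.HasAntidiagonal.mem_antidiagonal] at h1 h2 ha hb
    apply hab
    ext
    · rw [← h1.2, ← h2.2]
    · have := h1.2; have := h2.2; omega
  · rintro ⟨k, k'⟩ hk
    rw [if_neg]
    rintro ⟨h1, h2⟩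
    apply hk
    simp only [Finset.mem_biUnion, Finset.HasAntidiagonal.mem_antidiagonal]
    refine ⟨(k', ∑ p ∈ A, k p), by simp only at h2 ⊢; omega, ?_⟩
    simp only [Finset.mem_product, Finset.mem_singleton, and_true, Finset.mem_piAntidiag, true_and]
    intro p hp
    by_contra h
    exact hp (h1 p h)

lemma res_rhs {P : ℕ} (R : Fin P → ℕ) (a : ℂ) (S : Fin P → ℕ → ℂ) :
    (ex a * ∏ p, (HahnSeries.single (-((R p : ℤ) + 1)) ((R p).factorial : ℂ) +
      ops (PowerSeries.mk (S p)))).coeff (-1) =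
    ∑ A ∈ (Finset.univ : Finset (Fin P)).powerset.filter (fun B => B ≠ Finset.univ),
      (∏ p ∈ Aᶜ, ((R p).factorial : ℂ)) *
        coeff ((∑ p ∈ Aᶜ, R p) + Aᶜ.card - 1)
          (PowerSeries.mk (fun k => a ^ k / (k.factorial : ℂ)) * ∏ p ∈ A, PowerSeries.mk (S p)) := by
  have hex : ex a = ops (PowerSeries.mk (fun k => a ^ k / (k.factorial : ℂ))) := by
    rw [ex]; congr 1; ext n; simp [coeff_rescale, coeff_exp, div_eq_mul_inv]
  simp_rw [add_comm (HahnSeries.single _ _)]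
  rw [Finset.prod_add, Finset.mul_sum, HahnSeries.coeff_sum]
  rw [Finset.sum_filter]
  refine Finset.sum_congr rfl fun A _ => ?_
  have hs : ∀ B : Finset (Fin P), ∏ p ∈ B, HahnSeries.single (-((R p : ℤ) + 1)) ((R p).factorial : ℂ)
      = HahnSeries.single (-((∑ p ∈ B, (R p : ℤ)) + (B.card : ℤ))) (∏ p ∈ B, ((R p).factorial : ℂ)) := by
    intro B
    induction B using Finset.induction_on with
    | empty => simp
    | insert b B hb ih =>
      rw [Finset.prod_insert hb, ih, HahnSeries.single_mul_single, Finset.prod_insert hb,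
        Finset.sum_insert hb, Finset.card_insert_of_notMem hb]
      congr 2
      push_cast; ring
  rw [← Finset.compl_eq_univ_sdiff, hs, hex, ← map_prod, ← mul_assoc, ← map_mul,
    HahnSeries.coeff_mul_single, mul_comm]
  split_ifs with h
  · have hc : 1 ≤ Aᶜ.card := by
      rw [Nat.one_le_iff_ne_zero, Finset.card_ne_zero, Finset.nonempty_iff_ne_empty]
      simpa using h
    rw [← ops_coeff_nat]
    congr 2
    push_cast [Nat.cast_sub (show 1 ≤ (∑ p ∈ Aᶜ, R p) + Aᶜ.card by omega)]
    ring
  · push Not at h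
    subst h
    rw [ops_coeff_neg, mul_zero]
    simp

lemma lhs_one {P : ℕ} (R : Fin P → ℕ) (d : Fin P → ℂ) (y : ℤ) :
    (∑' n : Fin P → ℕ,
        if (∑ p, (n p : ℤ)) = y then ∏ p, ((n p : ℂ) + d p) ^ (R p) else 0) =
      if 0 ≤ y then coeff y.toNat (∏ p, (qq (d p) (R p)).eval₂ PowerSeries.C Vp) else 0 := by
  have hq : ∀ p, (qq (d p) (R p)).eval₂ PowerSeries.C Vp =
      PowerSeries.mk (fun n : ℕ => ((n : ℂ) + d p) ^ (R p)) := by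
    intro p; ext n; rw [qq_plus, coeff_mk]
  simp_rw [hq]
  split_ifs with h
  · lift y to ℕ using h
    rw [Int.toNat_natCast, ← tsum_univ]
    refine tsum_congr fun n => ?_
    congr 1
    exact_mod_cast rfl
  · refine (tsum_congr fun n => ?_).trans (tsum_zero (α := ℂ) (β := Fin P → ℕ))
    rw [if_neg]
    intro h'
    apply h
    rw [← h']
    positivity

lemma lhs_two {P : ℕ} (hP : 1 ≤ P) (R : Fin P → ℕ) (d : Fin P → ℂ) (y : ℤ) :
    (-1 : ℂ) ^ (P - 1) * (∑' m : Fin P → ℕ,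
        if (∑ p, (-1 - (m p : ℤ))) = y then ∏ p, ((-1 : ℂ) - (m p : ℕ) + d p) ^ (R p) else 0) =
      if 0 ≤ y then 0 else
        - coeff (-y).toNat (∏ p, (qq (d p) (R p)).eval₂ PowerSeries.C Vm) := by
  have hq : ∀ p, (qq (d p) (R p)).eval₂ PowerSeries.C Vm =
      (-X) * PowerSeries.mk (fun n : ℕ => ((-1 : ℂ) - n + d p) ^ (R p)) := by
    intro p; ext n; rw [qq_minus]
    rcases n with _ | n
    · simp
    · rw [neg_mul, map_neg, coeff_succ_X_mul, coeff_mk, if_neg (by omega)]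
      push_cast; congr 2; ring
  simp_rw [hq, Finset.prod_mul_distrib, Finset.prod_const, Finset.card_univ, Fintype.card_fin]
  have hsum : ∀ m : Fin P → ℕ, (∑ p, (-1 - (m p : ℤ))) = -(P : ℤ) - ((∑ p, m p : ℕ) : ℤ) := by
    intro m; simp [Finset.sum_sub_distrib]
  simp_rw [hsum]
  by_cases h : y ≤ -(P : ℤ)
  · rw [if_neg (by omega)]
    obtain ⟨j, hj⟩ : ∃ j : ℕ, (-y).toNat = j + P := ⟨(-y).toNat - P, by omega⟩
    rw [hj, neg_pow (X : ℂ⟦X⟧) P, mul_assoc, mul_comm (X ^ P), ← mul_assoc, coeff_mul_X_pow]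
    have : ((-1 : ℂ⟦X⟧)) ^ P = PowerSeries.C ((-1 : ℂ) ^ P) := by simp
    rw [this, coeff_C_mul, ← tsum_univ]
    have hs : (-1 : ℂ) ^ (P - 1) = - (-1) ^ P := by
      obtain ⟨k, rfl⟩ : ∃ k, P = k + 1 := ⟨P - 1, by omega⟩
      simp [pow_succ]
    rw [hs, neg_mul]
    congr 2
    refine tsum_congr fun m => ?_
    congr 1
    rw [eq_iff_iff]
    omega
  · rw [show (∑' m : Fin P → ℕ, if -(P : ℤ) - ((∑ p, m p : ℕ) : ℤ) = y then
      ∏ p, ((-1 : ℂ) - (m p : ℕ) + d p) ^ (R p) else 0) = 0 from ?_]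
    · rw [mul_zero]
      split_ifs with h'
      · rfl
      · rw [neg_pow (X : ℂ⟦X⟧) P, mul_assoc, mul_comm (X ^ P), ← mul_assoc, PowerSeries.coeff_mul_X_pow',
          if_neg (by omega), neg_zero]
    · refine (tsum_congr fun n => ?_).trans (tsum_zero (α := ℂ) (β := Fin P → ℕ))
      rw [if_neg]
      omega

lemma ex_sum {P : ℕ} (d : Fin P → ℂ) (s : Finset (Fin P)) :
    ex (∑ p ∈ s, d p) = ∏ p ∈ s, ex (d p) := by
  induction s using Finset.induction_on with
  | empty => simp [ex_zero]
  | insert b B hb ih => rw [Finset.prod_insert hb, Finset.sum_insert hb, ex_add, ih]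

theorem main (P : ℕ) (hP : 1 ≤ P)
    (R : Fin P → ℕ) (d : Fin P → ℂ) (y : ℤ) (Z : ℂ → ℂ → ℂ)
    (hz : ∀ (p : Fin P) (k : ℕ), Z (d p) (-(k : ℂ)) =
      (-1) ^ k * (k.factorial : ℂ) * coeff (k + 1) (CB (d p))) :
    (∑' n : Fin P → ℕ,
        if (∑ p, (n p : ℤ)) = y then ∏ p, ((n p : ℂ) + d p) ^ (R p) else 0)
      + (-1 : ℂ) ^ (P - 1) * (∑' m : Fin P → ℕ,
        if (∑ p, (-1 - (m p : ℤ))) = y then ∏ p, ((-1 : ℂ) - (m p : ℕ) + d p) ^ (R p) else 0)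
    = ∑ A ∈ (Finset.univ : Finset (Fin P)).powerset.filter (fun B => B ≠ Finset.univ),
        (∏ p ∈ Aᶜ, ((R p).factorial : ℂ)) *
        ∑' kk : (Fin P → ℕ) × ℕ,
          if (∀ p ∉ A, kk.1 p = 0) ∧
              (∑ p ∈ A, kk.1 p) + kk.2 = (∑ p ∈ Aᶜ, R p) + Aᶜ.card - 1 then
            ((∑ p, d p) + (y : ℂ)) ^ kk.2 / (kk.2.factorial : ℂ) *
              ∏ p ∈ A, (-1 : ℂ) ^ (kk.1 p) * Z (d p) (-(R p : ℂ) - (kk.1 p : ℂ))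
                / ((kk.1 p).factorial : ℂ)
          else 0 := by
  rw [lhs_one, lhs_two hP]
  have h1 := res_eq_LL (∏ p, qq (d p) (R p)) (by
    rw [Polynomial.coeff_zero_prod]
    exact Finset.prod_eq_zero (Finset.mem_univ ⟨0, hP⟩) (qq_zero _ _)) y
  rw [Polynomial.eval₂_finsetProd, Polynomial.eval₂_finsetProd, Polynomial.eval₂_finsetProd] at h1
  trans LL (∏ p, (qq (d p) (R p)).eval₂ PowerSeries.C Vp)
    (∏ p, (qq (d p) (R p)).eval₂ PowerSeries.C Vm) y
  · rw [LL]; split_ifs <;> simp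
  rw [← h1]
  have h2 : ex y * ∏ p, (qq (d p) (R p)).eval₂ HahnSeries.C UU =
      ex ((∑ p, d p) + y) * ∏ p, (HahnSeries.single (-((R p : ℤ) + 1)) ((R p).factorial : ℂ) +
        ops (SS (d p) (Z (d p)) (R p))) := by
    simp_rw [← qq_laurent _ _ (hz _)]
    rw [Finset.prod_mul_distrib, ← ex_sum, Finset.sum_neg_distrib, ex_add]
    have : ex (∑ p, d p) * ex (-∑ p, d p) = 1 := by rw [← ex_add, add_neg_cancel, ex_zero]
    linear_combination (-ex y * ∏ p, (qq (d p) (R p)).eval₂ HahnSeries.C UU) * this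
  rw [h2]
  simp only [SS]
  rw [res_rhs]
  refine Finset.sum_congr rfl fun A _ => ?_
  rw [← tsum_pair]


open MeasureTheory Set Filter Topology Complex in
theorem freq_real_of_half {f g : ℂ → ℂ} {a b : ℝ} (hab : a < b)
    (hf : DifferentiableOn ℂ f {z | a < z.re}) (hg : DifferentiableOn ℂ g {z | a < z.re})
    (h : ∀ r : ℝ, a < r → f r = g r) : ∀ z : ℂ, a < z.re → f z = g z := by
  have ho : IsOpen {z : ℂ | a < z.re} := isOpen_lt continuous_const Complex.continuous_re
  have hc : IsPreconnected {z : ℂ | a < z.re} := (convex_halfSpace_re_gt a).isPreconnected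
  have hfr : ∃ᶠ z in 𝓝[≠] (b : ℂ), f z = g z := by
    have h1 : Tendsto (fun r : ℝ => (r : ℂ)) (𝓝[≠] b) (𝓝[≠] (b : ℂ)) := by
      refine tendsto_nhdsWithin_of_tendsto_nhds_of_eventually_within _ ?_ ?_
      · exact (Complex.continuous_ofReal.tendsto b).mono_left nhdsWithin_le_nhds
      · filter_upwards [self_mem_nhdsWithin] with r hr
        simpa using hr
    refine h1.frequently (Eventually.frequently ?_)
    filter_upwards [nhdsWithin_le_nhds (Ioi_mem_nhds hab)] with r hr
    exact h r hr
  have := (hf.analyticOnNhd ho).eqOn_of_preconnected_of_frequently_eq (hg.analyticOnNhd ho) hc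
    (z₀ := (b : ℂ)) (by simpa using hab) hfr
  exact fun z hz => this hz

open MeasureTheory Set Filter Topology Complex in
theorem integrable_gamma {σ r : ℝ} (hσ : 0 < σ) (hr : 0 < r) :
    IntegrableOn (fun t : ℝ => t ^ (σ - 1) * Real.exp (-(r * t))) (Ioi 0) := by
  have := integrableOn_rpow_mul_exp_neg_mul_rpow (p := 1) (s := σ - 1) (b := r)
    (by linarith) zero_lt_one hr
  refine this.congr_fun (fun t ht => ?_) measurableSet_Ioi
  simp

open MeasureTheory Set Filter Topology Complex ProbabilityTheory in
theorem gamma_int {σ : ℝ} (hσ : 0 < σ) {w : ℂ} (hw : 0 < w.re) :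
    ∫ t in Ioi (0 : ℝ), (t : ℂ) ^ ((σ : ℂ) - 1) * cexp (-(w * t)) = w ^ (-(σ : ℂ)) * Gamma σ := by
  set ν : Measure ℝ := (volume.restrict (Ioi (0:ℝ))).withDensity
    (fun t => ((t ^ (σ - 1)).toNNReal : ENNReal)) with hν
  have hmeas : Measurable fun t : ℝ => (t ^ (σ - 1)).toNNReal := by fun_prop
  have hνint : ∀ (f : ℝ → ℂ), ∫ t, f t ∂ν = ∫ t in Ioi (0 : ℝ), (t : ℂ) ^ ((σ : ℂ) - 1) * f t := by
    intro f
    rw [hν, integral_withDensity_eq_integral_smul hmeas]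
    refine setIntegral_congr_fun measurableSet_Ioi (fun t (ht : 0 < t) => ?_)
    rw [NNReal.smul_def, Real.coe_toNNReal _ (by positivity), real_smul, ofReal_cpow ht.le]
    simp
  have hset : Set.Iio (0:ℝ) ⊆ integrableExpSet id ν := by
    intro r (hr : r < 0)
    simp only [integrableExpSet, Set.mem_ofPred_eq]
    rw [hν, integrable_withDensity_iff_integrable_smul hmeas]
    refine (integrable_gamma hσ (neg_pos.2 hr)).congr_fun (fun t (ht : 0 < t) => ?_) measurableSet_Ioi
    rw [NNReal.smul_def, Real.coe_toNNReal _ (by positivity)]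
    simp
  have hset' : Set.Iio (0:ℝ) ⊆ interior (integrableExpSet id ν) := isOpen_Iio.subset_interior_iff.2 hset
  have key : ∀ w : ℂ, ∫ t in Ioi (0 : ℝ), (t : ℂ) ^ ((σ : ℂ) - 1) * cexp (-(w * t))
      = complexMGF id ν (-w) := by
    intro w
    rw [complexMGF, hνint]
    simp
  refine freq_real_of_half (f := fun w => ∫ t in Ioi (0 : ℝ), (t : ℂ) ^ ((σ : ℂ) - 1) * cexp (-(w * t)))
    (g := fun w => w ^ (-(σ : ℂ)) * Gamma σ) (zero_lt_one) ?_ ?_ ?_ w hw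
  · simp_rw [key]
    refine differentiableOn_complexMGF.comp differentiableOn_id.neg ?_
    intro z (hz : 0 < z.re)
    apply hset'
    simpa using hz
  · intro z (hz : 0 < z.re)
    refine ((differentiableAt_id.cpow_const (Or.inl hz)).mul_const _).differentiableWithinAt
  · intro r hr
    rw [integral_cpow_mul_exp_neg_mul_Ioi (by simpa using hσ) hr, cpow_neg, one_div, inv_cpow]
    rw [arg_ofReal_of_nonneg hr.le]
    exact Real.pi_pos.ne

/-- The generating function of the Hurwitz zeta function. -/
noncomputable def FF (x : ℂ) (t : ℝ) : ℂ := Complex.exp (-(x * t)) / (1 - Complex.exp (-(t : ℂ)))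

open MeasureTheory Set Filter Topology Complex in
theorem FF_hasSum (x : ℂ) {t : ℝ} (ht : 0 < t) :
    HasSum (fun n : ℕ => cexp (-(((n : ℂ) + x) * t))) (FF x t) := by
  have h1 : ‖cexp (-(t : ℂ))‖ < 1 := by
    rw [Complex.norm_exp]; simpa using ht
  have h2 := (hasSum_geometric_of_norm_lt_one h1).mul_left (cexp (-(x * t)))
  rw [FF, div_eq_mul_inv]
  refine h2.congr_fun ?_ |> fun h => h
  intro n
  rw [← Complex.exp_nat_mul, ← Complex.exp_add]
  congr 1; ring

open MeasureTheory Set Filter Topology Complex in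
theorem norm_term {σ : ℝ} (w : ℂ) {t : ℝ} (ht : 0 < t) :
    ‖(t : ℂ) ^ ((σ : ℂ) - 1) * cexp (-(w * t))‖ = t ^ (σ - 1) * Real.exp (-(w.re * t)) := by
  rw [norm_mul, norm_cpow_eq_rpow_re_of_pos ht, Complex.norm_exp]
  simp

open MeasureTheory Set Filter Topology Complex in
theorem mellin_FF_real {x : ℂ} (hx : 0 < x.re) {σ : ℝ} (hσ : 1 < σ) :
    mellin (FF x) σ = Gamma σ * ∑' n : ℕ, ((n : ℂ) + x) ^ (-(σ : ℂ)) := by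
  have h0 : 0 < σ := by linarith
  have hre : ∀ n : ℕ, 0 < ((n : ℂ) + x).re := fun n => by simp; positivity
  have hI : ∀ n : ℕ, Integrable
      (fun t : ℝ => (t : ℂ) ^ ((σ : ℂ) - 1) * cexp (-(((n : ℂ) + x) * t)))
      (volume.restrict (Ioi 0)) := by
    intro n
    refine (integrable_norm_iff ?_).1 ?_
    · refine ContinuousOn.aestronglyMeasurable ?_ measurableSet_Ioi
      refine ContinuousOn.mul ?_ (by fun_prop)
      intro t (ht : 0 < t)
      refine (ContinuousAt.cpow (by fun_prop) (by fun_prop) (by simp [ht])).continuousWithinAt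
    · exact (integrable_gamma h0 (hre n)).congr_fun (fun t ht => (norm_term _ ht).symm)
        measurableSet_Ioi
  have hS : Summable fun n : ℕ =>
      ∫ t in Ioi (0:ℝ), ‖(t : ℂ) ^ ((σ : ℂ) - 1) * cexp (-(((n : ℂ) + x) * t))‖ := by
    have h3 : ∀ n : ℕ, ∫ t in Ioi (0:ℝ), ‖(t : ℂ) ^ ((σ : ℂ) - 1) * cexp (-(((n : ℂ) + x) * t))‖
        = 1 / |(n : ℝ) + x.re| ^ σ * Real.Gamma σ := by
      intro n
      rw [setIntegral_congr_fun measurableSet_Ioi (fun t ht => norm_term _ ht),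
        Real.integral_rpow_mul_exp_neg_mul_Ioi h0 (hre n), Real.div_rpow zero_le_one (hre n).le]
      have : (0:ℝ) < n + x.re := by positivity
      simp [abs_of_pos this]
    simp_rw [h3]
    exact ((Real.summable_one_div_nat_add_rpow x.re σ).2 hσ).mul_right _
  have := hasSum_integral_of_summable_integral_norm hI hS
  rw [mellin, ← tsum_mul_left]
  have h4 : ∀ n : ℕ, Gamma σ * ((n : ℂ) + x) ^ (-(σ : ℂ)) =
     ∫ t in Ioi (0:ℝ), (t : ℂ) ^ ((σ : ℂ) - 1) * cexp (-(((n : ℂ) + x) * t)) := fun n => by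
    rw [gamma_int h0 (hre n), mul_comm]
  simp_rw [h4]
  rw [this.tsum_eq]
  refine setIntegral_congr_fun measurableSet_Ioi (fun t ht => ?_)
  simp only [smul_eq_mul]
  rw [tsum_mul_left, (FF_hasSum x ht).tsum_eq]

open Filter Topology Asymptotics in
/-- `f` has Taylor expansion `q` at `0` up to order `M`. -/
def Rep (M : ℕ) (f : ℂ → ℂ) (q : ℂ⟦X⟧) : Prop :=
  (fun z => f z - (trunc M q).eval z) =O[𝓝 0] (fun z => z ^ M)

open Filter Topology Asymptotics in
theorem poly_bigO {M : ℕ} {p : Polynomial ℂ} (h : trunc M (p : ℂ⟦X⟧) = 0) :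
    (fun z => p.eval z) =O[𝓝 0] (fun z : ℂ => z ^ M) := by
  have h1 : Polynomial.X ^ M ∣ p := by
    rw [Polynomial.X_pow_dvd_iff]
    intro d hd
    have := congrArg (fun r => Polynomial.coeff r d) h
    simpa [coeff_trunc, hd] using this
  obtain ⟨r, rfl⟩ := h1
  simp only [Polynomial.eval_mul, Polynomial.eval_pow, Polynomial.eval_X]
  have h2 : (fun z => r.eval z) =O[𝓝 (0:ℂ)] (fun _ => (1:ℂ)) :=
    (r.continuous.tendsto 0).isBigO_one ℂ
  simpa using (isBigO_refl (fun z : ℂ => z ^ M) (𝓝 0)).mul h2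

open Filter Topology Asymptotics in
theorem Rep.poly (M : ℕ) (p : Polynomial ℂ) : Rep M (fun z => p.eval z) p := by
  have := poly_bigO (M := M) (p := p - trunc M (p : ℂ⟦X⟧)) (by
    ext d
    simp [coeff_trunc])
  simpa [Rep] using this

open Filter Topology Asymptotics in
theorem Rep.sub {M : ℕ} {f g : ℂ → ℂ} {q r : ℂ⟦X⟧} (hf : Rep M f q) (hg : Rep M g r) :
    Rep M (fun z => f z - g z) (q - r) := by
  have h : trunc M (q - r) = trunc M q - trunc M r := by
    ext d
    by_cases hd : d < M <;> simp [coeff_trunc, hd]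
  have h1 := IsBigO.sub hf hg
  refine h1.congr_left (fun z => ?_)
  rw [h, Polynomial.eval_sub]; ring

open Filter Topology Asymptotics in
theorem Rep.isBigO_one {M : ℕ} {f : ℂ → ℂ} {q : ℂ⟦X⟧} (hf : Rep M f q) :
    f =O[𝓝 0] (fun _ => (1:ℂ)) := by
  have h2 : (fun z => (trunc M q).eval z) =O[𝓝 (0:ℂ)] (fun _ => (1:ℂ)) :=
    ((trunc M q).continuous.tendsto 0).isBigO_one ℂ
  have h3 : (fun z : ℂ => z ^ M) =O[𝓝 (0:ℂ)] (fun _ => (1:ℂ)) :=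
    ((continuous_pow M).tendsto 0).isBigO_one ℂ
  simpa using (IsBigO.trans hf h3).add h2

open Filter Topology Asymptotics in
theorem Rep.mul {M : ℕ} {f g : ℂ → ℂ} {q r : ℂ⟦X⟧} (hf : Rep M f q) (hg : Rep M g r) :
    Rep M (fun z => f z * g z) (q * r) := by
  have h2 : (fun z => (trunc M r).eval z) =O[𝓝 (0:ℂ)] (fun _ => (1:ℂ)) :=
    ((trunc M r).continuous.tendsto 0).isBigO_one ℂ
  have h3 := poly_bigO (M := M) (p := trunc M q * trunc M r - trunc M (q * r)) (by
    have : trunc M (((trunc M q * trunc M r - trunc M (q * r) : Polynomial ℂ)) : ℂ⟦X⟧)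
      = trunc M (((trunc M q : Polynomial ℂ) : ℂ⟦X⟧) * ((trunc M r : Polynomial ℂ) : ℂ⟦X⟧)) - trunc M (q * r) := by
      ext d
      by_cases hd : d < M <;> simp [coeff_trunc, hd]
    rw [this, trunc_trunc_mul_trunc, sub_self])
  have h4 := hf.isBigO_one.mul hg
  have h5 := IsBigO.mul hf h2
  simp only [one_mul, mul_one] at h4 h5
  refine ((h4.add h5).add h3).congr_left (fun z => ?_)
  simp only [Polynomial.eval_sub, Polynomial.eval_mul]; ring

open Filter Topology Asymptotics in
theorem Rep.exp (M : ℕ) (a : ℂ) :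
    Rep M (fun z => Complex.exp (a * z)) (rescale a (PowerSeries.exp ℂ)) := by
  have h1 : Tendsto (fun z : ℂ => a * z) (𝓝 0) (𝓝 0) := by
    simpa using (continuous_const_mul a).tendsto 0
  have h2 := (Complex.exp_sub_sum_range_isBigO_pow M).comp_tendsto h1
  have h3 : ((fun x : ℂ => x ^ M) ∘ fun z => a * z) =O[𝓝 0] (fun z => z ^ M) := by
    simp only [Function.comp_def, mul_pow]
    exact (isBigO_refl _ _).const_mul_left _
  refine (h2.trans h3).congr_left (fun z => ?_)
  simp only [Function.comp_def, Polynomial.eval]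
  rw [eval₂_trunc_eq_sum_range]
  congr 1
  refine Finset.sum_congr rfl (fun i _ => ?_)
  simp [coeff_rescale, coeff_exp, mul_pow]
  ring

open Filter Topology Asymptotics in
theorem FF_asymp {x : ℂ} {c : ℂ⟦X⟧}
    (hc : c * (1 - rescale (-1) (PowerSeries.exp ℂ)) = X * rescale (-x) (PowerSeries.exp ℂ))
    (M : ℕ) :
    (fun z : ℂ => z * Complex.exp (-x * z) - (trunc M c).eval z * (1 - Complex.exp (-1 * z)))
      =O[𝓝 0] (fun z => z ^ M) := by
  have h1 := ((Rep.poly M Polynomial.X).mul (Rep.exp M (-x))).sub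
    ((Rep.poly M (trunc M c)).mul ((Rep.poly M 1).sub (Rep.exp M (-1))))
  have h2 : trunc M (((Polynomial.X : Polynomial ℂ) : ℂ⟦X⟧) * rescale (-x) (PowerSeries.exp ℂ)
      - ((trunc M c : Polynomial ℂ) : ℂ⟦X⟧) *
        (((1 : Polynomial ℂ) : ℂ⟦X⟧) - rescale (-1) (PowerSeries.exp ℂ))) = 0 := by
    have : ∀ a b : ℂ⟦X⟧, trunc M (a - b) = trunc M a - trunc M b := fun a b => by
      ext d
      by_cases hd : d < M <;> simp [coeff_trunc, hd]
    rw [this, trunc_trunc_mul, Polynomial.coe_one, hc, Polynomial.coe_X, sub_self]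
  unfold Rep at h1
  rw [h2] at h1
  simpa using h1

/-- The truncated generating function. -/
noncomputable def fM (x : ℂ) (c : ℂ⟦X⟧) (M : ℕ) (t : ℝ) : ℂ :=
  FF x t - ∑ j ∈ range M, coeff j c *
    Set.indicator (Set.Ioc (0:ℝ) 1) (fun t : ℝ => (t : ℂ) ^ ((j : ℂ) - 1)) t

open MeasureTheory Set Filter Topology Complex in
theorem one_sub_exp_ne {t : ℝ} (ht : 0 < t) : 1 - cexp (-(t : ℂ)) ≠ 0 := by
  intro h
  have h1 : ‖cexp (-(t : ℂ))‖ < 1 := by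
    rw [Complex.norm_exp]; simpa using ht
  rw [← sub_eq_zero.1 h] at h1
  simp at h1

open MeasureTheory Set Filter Topology Complex in
theorem fM_loc (x : ℂ) (c : ℂ⟦X⟧) (M : ℕ) : LocallyIntegrableOn (fM x c M) (Ioi 0) := by
  refine LocallyIntegrableOn.sub ?_ ?_
  · refine ContinuousOn.locallyIntegrableOn ?_ measurableSet_Ioi
    unfold FF
    refine ContinuousOn.div (by fun_prop) (by fun_prop) (fun t ht => one_sub_exp_ne ht)
  · have : ∀ j : ℕ, LocallyIntegrableOn (fun t => coeff j c *
      Set.indicator (Set.Ioc (0:ℝ) 1) (fun t : ℝ => (t : ℂ) ^ ((j : ℂ) - 1)) t) (Ioi 0) := by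
      intro j t ht
      have h1 : LocallyIntegrableOn (fun t : ℝ => (t : ℂ) ^ ((j : ℂ) - 1)) (Ioi 0) := by
        refine ContinuousOn.locallyIntegrableOn ?_ measurableSet_Ioi
        intro t (ht : 0 < t)
        refine (ContinuousAt.cpow (by fun_prop) (by fun_prop) (by simp [ht])).continuousWithinAt
      obtain ⟨U, hU, hI⟩ := h1 t ht
      exact ⟨U, hU, (Integrable.indicator hI measurableSet_Ioc).const_mul _⟩
    induction M with
    | zero => simpa using locallyIntegrableOn_zero
    | succ M ih =>
      simp_rw [Finset.sum_range_succ]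
      exact ih.add (this M)

open MeasureTheory Set Filter Topology Complex Asymptotics in
theorem fM_top {x : ℂ} (c : ℂ⟦X⟧) (M : ℕ) :
    fM x c M =O[atTop] (fun t => Real.exp (-x.re * t)) := by
  refine IsBigO.of_bound (1 - Real.exp (-1))⁻¹ ?_
  filter_upwards [eventually_gt_atTop 1] with t ht
  have h1 : fM x c M t = FF x t := by
    rw [fM, Finset.sum_eq_zero, sub_zero]
    intro j _
    rw [indicator_of_notMem, mul_zero]
    simp [ht]
  have h2 : 0 < 1 - Real.exp (-1) := by simp
  have h3 : 1 - Real.exp (-1) ≤ ‖1 - cexp (-(t : ℂ))‖ := by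
    have h4 := norm_sub_norm_le (1 : ℂ) (cexp (-(t : ℂ)))
    rw [Complex.norm_exp, norm_one] at h4
    have h5 : Real.exp (-(t:ℂ)).re ≤ Real.exp (-1) := by
      apply Real.exp_le_exp.2; simp; exact ht.le
    linarith
  rw [h1, FF, norm_div, Complex.norm_exp, div_eq_inv_mul]
  have : (-(x * (t:ℂ))).re = - x.re * t := by simp
  rw [this, Real.norm_of_nonneg (Real.exp_pos _).le]
  gcongr

open MeasureTheory Set Filter Topology Complex Asymptotics in
theorem fM_bot {x : ℂ} {c : ℂ⟦X⟧}
    (hc : c * (1 - rescale (-1) (PowerSeries.exp ℂ)) = X * rescale (-x) (PowerSeries.exp ℂ))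
    (M : ℕ) :
    fM x c M =O[𝓝[>] 0] (fun t => t ^ (-(2 - M : ℝ))) := by
  have hT : Tendsto (fun t : ℝ => (t : ℂ)) (𝓝[>] 0) (𝓝 0) := by
    have := (Complex.continuous_ofReal.tendsto 0)
    simp only [ofReal_zero] at this
    exact this.mono_left nhdsWithin_le_nhds
  have hA := (FF_asymp hc M).comp_tendsto hT
  -- `t = O(1 - exp(-t))`
  have hB : (fun t : ℝ => (t : ℂ)) =O[𝓝[>] 0] (fun t : ℝ => 1 - cexp (-(t : ℂ))) := by
    refine IsBigO.of_bound 2 ?_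
    filter_upwards [Ioo_mem_nhdsGT (zero_lt_one : (0:ℝ) < 1)] with t ht
    have h1 : (1 - cexp (-(t : ℂ))) = ((1 - Real.exp (-t) : ℝ) : ℂ) := by push_cast; rfl
    rw [h1, norm_real, norm_real, Real.norm_of_nonneg ht.1.le]
    have h2 : 1 - Real.exp (-t) ≥ t / 2 := by
      have h3 : Real.exp (-t) ≤ 1 / (1 + t) := by
        rw [Real.exp_neg, ← one_div]
        have := Real.add_one_le_exp t
        have := ht.1
        gcongr
        linarith
      have h4 : 1 / (1 + t) ≤ 1 - t / 2 := by
        rw [div_le_iff₀ (by linarith [ht.1])]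
        nlinarith [ht.1, ht.2]
      linarith
    have := le_abs_self (1 - Real.exp (-t))
    rw [Real.norm_eq_abs]
    linarith
  have hC : (fun t : ℝ => fM x c M t * (t : ℂ) ^ 2) =O[𝓝[>] 0] (fun t : ℝ => (t : ℂ) ^ M) := by
    have h1 : (fun t : ℝ => fM x c M t * (t : ℂ) ^ 2) =O[𝓝[>] 0]
        (fun t : ℝ => fM x c M t * (t : ℂ) * (1 - cexp (-(t : ℂ)))) := by
      have := (isBigO_refl (fun t : ℝ => fM x c M t * (t : ℂ)) (𝓝[>] 0)).mul hB
      refine this.congr_left (fun t => by ring)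
    refine h1.trans ?_
    refine hA.congr' ?_ (by rfl)
    filter_upwards [Ioo_mem_nhdsGT (zero_lt_one : (0:ℝ) < 1)] with t ht
    have h2 : (t : ℂ) ≠ 0 := by simpa using ht.1.ne'
    have h3 := one_sub_exp_ne ht.1
    have h4 : (trunc M c).eval (t : ℂ) = (∑ j ∈ range M, coeff j c *
        Set.indicator (Set.Ioc (0:ℝ) 1) (fun t : ℝ => (t : ℂ) ^ ((j : ℂ) - 1)) t) * t := by
      rw [Polynomial.eval, eval₂_trunc_eq_sum_range, Finset.sum_mul]
      refine Finset.sum_congr rfl (fun j _ => ?_)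
      rw [indicator_of_mem (by exact ⟨ht.1, ht.2.le⟩), cpow_sub _ _ h2]
      simp
      field_simp
    simp only [Function.comp_def, fM, FF]
    rw [h4]
    have h5 : cexp (-1 * (t : ℂ)) = cexp (-(t:ℂ)) := by ring_nf
    have h6 : cexp (-x * (t : ℂ)) = cexp (-(x * t)) := by ring_nf
    rw [h5, h6]
    field_simp
  rw [← isBigO_norm_norm] at hC
  rw [← isBigO_norm_norm]
  have hD := hC.mul (isBigO_refl (fun t : ℝ => ‖((t : ℂ) ^ 2)⁻¹‖) (𝓝[>] 0))
  refine hD.congr' ?_ ?_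
  · filter_upwards [self_mem_nhdsWithin] with t (ht : 0 < t)
    rw [← norm_mul]
    congr 1
    have h2 : (t : ℂ) ≠ 0 := by simpa using ht.ne'
    field_simp
  · filter_upwards [self_mem_nhdsWithin] with t (ht : 0 < t)
    rw [neg_sub, Real.rpow_sub ht, Real.rpow_natCast]
    simp [div_eq_mul_inv]

open MeasureTheory Set Filter Topology Complex Asymptotics in
theorem fM_diff {x : ℂ} (hx : 0 < x.re) {c : ℂ⟦X⟧}
    (hc : c * (1 - rescale (-1) (PowerSeries.exp ℂ)) = X * rescale (-x) (PowerSeries.exp ℂ))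
    (M : ℕ) {s : ℂ} (hs : 2 - M < s.re) : DifferentiableAt ℂ (mellin (fM x c M)) s :=
  mellin_differentiableAt_of_isBigO_rpow_exp hx (fM_loc x c M) (fM_top c M) (fM_bot hc M) hs

open MeasureTheory Set Filter Topology Complex Asymptotics in
theorem mellin_FF {x : ℂ} (hx : 0 < x.re) {c : ℂ⟦X⟧}
    (hc : c * (1 - rescale (-1) (PowerSeries.exp ℂ)) = X * rescale (-x) (PowerSeries.exp ℂ))
    (M : ℕ) {s : ℂ} (hs : 2 < s.re) :
    mellin (FF x) s = mellin (fM x c M) s + ∑ j ∈ range M, coeff j c / (s + j - 1) := by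
  have h0 : ∀ M : ℕ, MellinConvergent (fM x c M) s := fun M =>
    mellinConvergent_of_isBigO_rpow_exp hx (fM_loc x c M) (fM_top c M) (fM_bot hc M)
      (by have : (0:ℝ) ≤ M := by positivity
          linarith)
  induction M with
  | zero =>
    simp only [range_zero, sum_empty, add_zero]
    congr 1
    ext t
    simp [fM]
  | succ M ih =>
    have h1 := hasMellin_cpow_Ioc ((M : ℂ) - 1) (s := s) (by
      have : (0:ℝ) ≤ M := by positivity
      simp
      linarith)
    have h2 := hasMellin_const_smul h1.1 (coeff M c)
    rw [ih, Finset.sum_range_succ]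
    have h3 := (hasMellin_add (h0 (M+1)) h2.1).2
    have h4 : (fun t => fM x c (M + 1) t + coeff M c •
        Set.indicator (Set.Ioc (0:ℝ) 1) (fun t : ℝ => (t : ℂ) ^ ((M : ℂ) - 1)) t) = fM x c M := by
      ext t
      simp only [fM, Finset.sum_range_succ, smul_eq_mul]
      ring
    rw [h4, h2.2, h1.2] at h3
    rw [h3, smul_eq_mul, add_sub_assoc]
    ring

open Set Filter Topology Complex in
theorem gamma_limit (k : ℕ) : Tendsto (fun s : ℂ => (Gamma s)⁻¹ / (s + k)) (𝓝[≠] (-(k : ℂ)))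
    (𝓝 ((-1) ^ k * (k.factorial : ℂ))) := by
  induction k with
  | zero =>
    have := Complex.tendsto_self_mul_Gamma_nhds_zero.inv₀ one_ne_zero
    simp only [mul_inv, inv_one] at this
    simp only [Nat.cast_zero, neg_zero, add_zero, pow_zero, Nat.factorial_zero, Nat.cast_one,
      one_mul]
    exact this.congr (fun s => by rw [div_eq_mul_inv, mul_comm])
  | succ k ih =>
    have h1 : Tendsto (fun s : ℂ => s + 1) (𝓝[≠] (-((k + 1 : ℕ) : ℂ))) (𝓝[≠] (-(k : ℂ))) := by
      refine tendsto_nhdsWithin_of_tendsto_nhds_of_eventually_within _ ?_ ?_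
      · have : Tendsto (fun s : ℂ => s + 1) (𝓝 (-((k + 1 : ℕ) : ℂ)))
            (𝓝 (-((k + 1 : ℕ) : ℂ) + 1)) := (continuous_add_const 1).tendsto _
        have h : -((k + 1 : ℕ) : ℂ) + 1 = -(k : ℂ) := by push_cast; ring
        rw [h] at this
        exact this.mono_left nhdsWithin_le_nhds
      · filter_upwards [self_mem_nhdsWithin] with s hs h
        apply hs
        have h : s + 1 = -(k : ℂ) := h
        simp only [mem_singleton_iff]
        push_cast
        linear_combination h
    have h2 : Tendsto (fun s : ℂ => s) (𝓝[≠] (-((k + 1 : ℕ) : ℂ))) (𝓝 (-((k + 1 : ℕ) : ℂ))) :=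
      tendsto_id.mono_left nhdsWithin_le_nhds
    have h3 := h2.mul (ih.comp h1)
    have h4 : -((k + 1 : ℕ) : ℂ) * ((-1) ^ k * (k.factorial : ℂ))
        = (-1) ^ (k + 1) * ((k + 1).factorial : ℂ) := by
      rw [Nat.factorial_succ]; push_cast; ring
    rw [h4] at h3
    refine h3.congr (fun s => ?_)
    rw [Complex.one_div_Gamma_eq_self_mul_one_div_Gamma_add_one s]
    simp only [Function.comp_def]
    push_cast
    rw [add_assoc, add_comm (1:ℂ)]
    ring

open Set Filter Topology Complex in
theorem zeta_val {x : ℂ} (hx : 0 < x.re) {z : ℂ → ℂ}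
    (hz1 : ∀ s : ℂ, 1 < s.re → z s = ∑' n : ℕ, ((n : ℂ) + x) ^ (-s))
    (hz2 : DifferentiableOn ℂ z {s | s ≠ 1}) {c : ℂ⟦X⟧}
    (hc : c * (1 - rescale (-1) (PowerSeries.exp ℂ)) = X * rescale (-x) (PowerSeries.exp ℂ))
    (k : ℕ) : z (-(k : ℂ)) = (-1) ^ k * (k.factorial : ℂ) * coeff (k + 1) c := by
  have hzd : ∀ s : ℂ, s ≠ 1 → DifferentiableAt ℂ z s := fun s hs =>
    (hz2 s hs).differentiableAt (isOpen_ne.mem_nhds hs)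
  have hne : ∀ s : ℂ, 2 < s.re → s ≠ 1 := by
    rintro s hs rfl
    norm_num at hs
  have hG : Differentiable ℂ fun s : ℂ => (Gamma s)⁻¹ := Complex.differentiable_one_div_Gamma
  have hf0 : fM x c 0 = FF x := by ext t; simp [fM]
  -- `z = mellin F / Gamma` far to the right
  have hA : ∀ s : ℂ, 2 < s.re → z s = (Gamma s)⁻¹ * mellin (FF x) s := by
    refine freq_real_of_half (b := 3) (by norm_num) ?_ ?_ ?_
    · exact fun s hs => (hzd s (hne s hs)).differentiableWithinAt
    · intro s hs
      have hs : 2 < s.re := hs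
      have := fM_diff hx hc 0 (s := s) (by simpa using hs)
      rw [hf0] at this
      exact ((hG s).mul this).differentiableWithinAt
    · intro r hr
      rw [mellin_FF_real hx (by linarith), hz1 _ (by simp; linarith), inv_mul_cancel_left₀]
      exact Gamma_ne_zero_of_re_pos (by simp; linarith)
  set M := k + 3 with hM
  set V : Set ℂ := {s | -(k : ℝ) - 1 < s.re} ∩ {s | 0 < s.im} with hV
  have hVo : IsOpen V := (isOpen_lt continuous_const Complex.continuous_re).inter
    (isOpen_lt continuous_const Complex.continuous_im)
  have hVc : IsPreconnected V :=
    ((convex_halfSpace_re_gt _).inter (convex_halfSpace_im_gt _)).isPreconnected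
  have hk0 : (0:ℝ) ≤ k := by positivity
  have hmd : ∀ s : ℂ, -(k : ℝ) - 1 < s.re → DifferentiableAt ℂ (mellin (fM x c M)) s :=
    fun s hs => fM_diff hx hc M (by rw [hM]; push_cast; linarith)
  have hden : ∀ s ∈ V, ∀ j : ℕ, s + j - 1 ≠ 0 := by
    intro s hs j h
    have := congrArg Complex.im h
    simp at this
    exact hs.2.ne' this
  have hB : EqOn z (fun s => (Gamma s)⁻¹ *
      (mellin (fM x c M) s + ∑ j ∈ Finset.range M, coeff j c / (s + j - 1))) V := by
    refine AnalyticOnNhd.eqOn_of_preconnected_of_eventuallyEq (z₀ := 3 + I)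
      (DifferentiableOn.analyticOnNhd ?_ hVo) (DifferentiableOn.analyticOnNhd ?_ hVo) hVc ?_ ?_
    · intro s hs
      refine (hzd s ?_).differentiableWithinAt
      rintro rfl
      simpa using hs.2
    · intro s hs
      refine DifferentiableAt.differentiableWithinAt ?_
      refine (hG s).mul ((hmd s hs.1).add ?_)
      refine DifferentiableAt.fun_sum (fun j _ => ?_)
      exact (differentiableAt_const _).div (by fun_prop) (hden s hs j)
    · constructor
      · simp; linarith
      · simp
    · have : {s : ℂ | 2 < s.re} ∈ 𝓝 (3 + I) :=
        (isOpen_lt continuous_const Complex.continuous_re).mem_nhds (by simp; norm_num)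
      filter_upwards [this] with s hs
      rw [hA s hs, mellin_FF hx hc M hs]
  -- the limit
  have hcl : (𝓝[V] (-(k : ℂ))).NeBot := by
    rw [← mem_closure_iff_nhdsWithin_neBot]
    have h1 : Tendsto (fun ε : ℝ => -(k : ℂ) + ε * I) (𝓝[>] 0) (𝓝 (-(k : ℂ))) := by
      have : Tendsto (fun ε : ℝ => -(k : ℂ) + ε * I) (𝓝 0) (𝓝 (-(k : ℂ) + (0 : ℝ) * I)) :=
        Continuous.tendsto (by fun_prop) _
      simp only [ofReal_zero, zero_mul, add_zero] at this
      exact this.mono_left nhdsWithin_le_nhds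
    refine mem_closure_of_tendsto h1 ?_
    filter_upwards [self_mem_nhdsWithin] with ε hε
    constructor
    · simp
    · simpa using hε
  have hsub : 𝓝[V] (-(k : ℂ)) ≤ 𝓝[≠] (-(k : ℂ)) := by
    refine nhdsWithin_mono _ ?_
    rintro s hs rfl
    simpa using hs.2
  have hL : Tendsto z (𝓝[V] (-(k : ℂ))) (𝓝 (z (-(k : ℂ)))) := by
    refine Tendsto.mono_left ?_ nhdsWithin_le_nhds
    refine (hzd _ ?_).continuousAt.tendsto
    intro h
    have := congrArg Complex.re h
    simp at this
    linarith
  have hG0 : (Gamma (-(k : ℂ)))⁻¹ = 0 := by rw [Complex.Gamma_neg_nat_eq_zero, inv_zero]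
  have hGt : Tendsto (fun s : ℂ => (Gamma s)⁻¹) (𝓝[V] (-(k : ℂ))) (𝓝 0) := by
    have := (hG (-(k : ℂ))).continuousAt.tendsto
    rw [hG0] at this
    exact this.mono_left nhdsWithin_le_nhds
  have hterm : ∀ j ∈ Finset.range M, Tendsto (fun s : ℂ => (Gamma s)⁻¹ * (coeff j c / (s + j - 1)))
      (𝓝[V] (-(k : ℂ)))
      (𝓝 (if j = k + 1 then (-1) ^ k * (k.factorial : ℂ) * coeff (k + 1) c else 0)) := by
    intro j _
    split_ifs with hj
    · subst hj
      refine (((gamma_limit k).mono_left hsub).mul_const (coeff (k + 1) c)).congr (fun s => ?_)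
      have : s + ((k + 1 : ℕ) : ℂ) - 1 = s + k := by push_cast; ring
      rw [this]; ring
    · have hj' : -(k : ℂ) + j - 1 ≠ 0 := by
        intro h
        apply hj
        have : (j : ℂ) = ((k + 1 : ℕ) : ℂ) := by push_cast; linear_combination h
        exact_mod_cast this
      have h1 : ContinuousAt (fun s : ℂ => coeff j c / (s + j - 1)) (-(k : ℂ)) :=
        ContinuousAt.div (by fun_prop) (by fun_prop) hj'
      have := hGt.mul (h1.tendsto.mono_left nhdsWithin_le_nhds)
      simpa using this
  have hR := (hGt.mul ((hmd (-(k : ℂ)) (by simp)).continuousAt.tendsto.mono_left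
    (nhdsWithin_le_nhds (s := V)))).add (tendsto_finsetSum _ hterm)
  rw [zero_mul, zero_add, Finset.sum_ite_eq' , if_pos (by simp [hM])] at hR
  refine tendsto_nhds_unique hL (hR.congr' ?_)
  filter_upwards [self_mem_nhdsWithin] with s hs
  rw [hB hs]
  simp only [mul_add, Finset.mul_sum]

end GFI

/-- Onodera's generalized Faulhaber-type identity. `Z d` denotes the analytic continuation in `s`
of the Hurwitz zeta function `Σ_n (n+d)^{-s}` for `Re d > 0`. For any integer `y`,
`Σ_{n ∈ ℕ^P, |n|=y} ∏_p (n_p+d_p)^{R_p} + (-1)^{P-1} Σ_{n ∈ ℤ_{≤-1}^P, |n|=y} ∏_p (n_p+d_p)^{R_p}`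
equals
`Σ_{A ⊊ [1,P]} ∏_{p∈Aᶜ} R_p! Σ_{k∈ℕ^A, k', |k|+k' = |R|_{Aᶜ}+|Aᶜ|-1}
  ((|d|+y)^{k'}/k'!) ∏_{p∈A} (-1)^{k_p} ζ(-R_p-k_p, d_p)/k_p!`. -/
theorem generalized_faulhaber_identity (P : ℕ) (hP : 1 ≤ P)
    (R : Fin P → ℕ) (d : Fin P → ℂ) (hd : ∀ p, 0 < (d p).re) (y : ℤ)
    (Z : ℂ → ℂ → ℂ)
    (hZ1 : ∀ x : ℂ, 0 < x.re → ∀ s : ℂ, 1 < s.re → Z x s = ∑' n : ℕ, ((n : ℂ) + x) ^ (-s))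
    (hZ2 : ∀ x : ℂ, 0 < x.re → DifferentiableOn ℂ (Z x) {s : ℂ | s ≠ 1}) :
    (∑' n : Fin P → ℕ,
        if (∑ p, (n p : ℤ)) = y then ∏ p, ((n p : ℂ) + d p) ^ (R p) else 0)
      + (-1 : ℂ) ^ (P - 1) * (∑' m : Fin P → ℕ,
        if (∑ p, (-1 - (m p : ℤ))) = y then ∏ p, ((-1 : ℂ) - (m p : ℕ) + d p) ^ (R p) else 0)
    = ∑ A ∈ (Finset.univ : Finset (Fin P)).powerset.filter (fun B => B ≠ Finset.univ),
        (∏ p ∈ Aᶜ, ((R p).factorial : ℂ)) *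
        ∑' kk : (Fin P → ℕ) × ℕ,
          if (∀ p ∉ A, kk.1 p = 0) ∧
              (∑ p ∈ A, kk.1 p) + kk.2 = (∑ p ∈ Aᶜ, R p) + Aᶜ.card - 1 then
            ((∑ p, d p) + (y : ℂ)) ^ kk.2 / (kk.2.factorial : ℂ) *
              ∏ p ∈ A, (-1 : ℂ) ^ (kk.1 p) * Z (d p) (-(R p : ℂ) - (kk.1 p : ℂ))
                / ((kk.1 p).factorial : ℂ)
          else 0 := by
  exact GFI.main P hP R d y Z (fun p k =>
    GFI.zeta_val (hd p) (hZ1 _ (hd p)) (hZ2 _ (hd p)) (GFI.CB_eq (d p)) k)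
end
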